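/- Under the hypotheses of Theorem 1.2 (strictly hyperbolic system in normalized coordinates, matching condition, the stated L^1/BV small initial data, α < ∞, J_1 = {i ∈ J : α_i = α} ≠ ∅, and existence of i_0 ∈ J_1 and x_0 ∈ ℝ with (∂^{α+1}λ_{i_0}/∂u_{i_0}^{α+1})(0) ψ_{i_0}(x_0)^α ψ'_{i_0}(x_0) < 0), the lifespan T̃(ε) satisfies the upper bound limsup_{ε→0^+} ε^{α+1} T̃(ε) ≤ M_0, where M_0 = [ max_{i ∈ J_1} sup_{x ∈ ℝ} ( −(1/α!) (∂^{α+1}λ_i/∂u_i^{α+1})(0) ψ_i(x)^α ψ_i'(x) ) ]^{-1}. -/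

import Mathlib

open scoped ENNReal
open MeasureTheory Matrix Set Filter Topology

noncomputable section

/-- The state space `ℝⁿ`, realized as `Fin n → ℝ`. -/
abbrev V (n : ℕ) := Fin n → ℝ

/-- The Euclidean norm on `Fin n → ℝ`. -/
def eunorm {n : ℕ} (v : V n) : ℝ := Real.sqrt (∑ i, v i ^ 2)

/-- The `i`-th standard basis vector `e_i`. -/
def eb {n : ℕ} (i : Fin n) : V n := Pi.single i 1

/-- A first-order quasilinear strictly hyperbolic system
`∂u/∂t + A(u) ∂u/∂x = B(u)`, with suitably smooth coefficients on the
neighborhood `{|u| < δ}` of `u = 0`, real distinct eigenvalues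
`λ_1(u) < ⋯ < λ_n(u)` and complete systems of left/right eigenvectors
normalized by `l_i(u) r_j(u) ≡ δ_ij`, `r_i(u)ᵀ r_i(u) ≡ 1`. -/
structure HypSys (n : ℕ) where
  A : V n → Matrix (Fin n) (Fin n) ℝ
  B : V n → V n
  lam : Fin n → V n → ℝ
  l : Fin n → V n → V n
  r : Fin n → V n → V n
  δ : ℝ
  δ_pos : 0 < δ
  smooth_A : ∀ i j : Fin n, ContDiffOn ℝ (⊤ : ℕ∞) (fun u => A u i j) {u | eunorm u < δ}
  smooth_B : ContDiffOn ℝ (⊤ : ℕ∞) B {u | eunorm u < δ}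
  smooth_lam : ∀ i : Fin n, ContDiffOn ℝ (⊤ : ℕ∞) (lam i) {u | eunorm u < δ}
  smooth_l : ∀ i : Fin n, ContDiffOn ℝ (⊤ : ℕ∞) (l i) {u | eunorm u < δ}
  smooth_r : ∀ i : Fin n, ContDiffOn ℝ (⊤ : ℕ∞) (r i) {u | eunorm u < δ}
  strict_hyp : ∀ u : V n, eunorm u < δ → ∀ i j : Fin n, i < j → lam i u < lam j u
  eig_r : ∀ u : V n, eunorm u < δ → ∀ i, Matrix.mulVec (A u) (r i u) = lam i u • r i u
  eig_l : ∀ u : V n, eunorm u < δ → ∀ i, Matrix.vecMul (l i u) (A u) = lam i u • l i u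
  norm_lr : ∀ u : V n, eunorm u < δ → ∀ i j : Fin n, l i u ⬝ᵥ r j u = if i = j then 1 else 0
  norm_rr : ∀ u : V n, eunorm u < δ → ∀ i : Fin n, r i u ⬝ᵥ r i u = 1

namespace HypSys

variable {n : ℕ} (S : HypSys n)

/-- Normalized coordinates: `r_i(u_i e_i) ≡ e_i` for `|u_i|` small. -/
def Normalized : Prop := ∀ i : Fin n, ∀ s : ℝ, |s| < S.δ → S.r i (s • eb i) = eb i

/-- Matching condition for the inhomogeneous term: `B(u_i e_i) ≡ 0` for `|u_i|` small. -/
def Matching : Prop := ∀ i : Fin n, ∀ s : ℝ, |s| < S.δ → S.B (s • eb i) = 0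

/-- In normalized coordinates, `∂^k λ_i / ∂u_i^k (0)`. -/
def axisDeriv (i : Fin n) (k : ℕ) : ℝ := iteratedDeriv k (fun s : ℝ => S.lam i (s • eb i)) 0

/-- The `i`-th characteristic field is weakly linearly degenerate:
`λ_i(u_i e_i) ≡ λ_i(0)` for `|u_i|` small (in normalized coordinates). -/
def WLD (i : Fin n) : Prop := ∀ s : ℝ, |s| < S.δ → S.lam i (s • eb i) = S.lam i 0

/-- `α_i = a`: the derivatives `∂^k λ_i/∂u_i^k (0)` vanish for `k = 1, …, a`
but not for `k = a + 1`. -/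
def IsAlphaOf (i : Fin n) (a : ℕ) : Prop :=
  (∀ k : ℕ, 1 ≤ k → k ≤ a → S.axisDeriv i k = 0) ∧ S.axisDeriv i (a + 1) ≠ 0

/-- `a = α = min { α_i : i ∈ J } < ∞`, where `J` is the set of non weakly
linearly degenerate indices.  (In particular the system is not weakly
linearly degenerate.) -/
def IsMinAlpha (a : ℕ) : Prop :=
  (∃ i : Fin n, ¬ S.WLD i ∧ S.IsAlphaOf i a) ∧
    ∀ i : Fin n, ¬ S.WLD i → ∀ b : ℕ, S.IsAlphaOf i b → a ≤ b

/-- `b_i(u) = l_i(u) B(u)`. -/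
def bcoef (i : Fin n) (u : V n) : ℝ := S.l i u ⬝ᵥ S.B u

/-- `β_{ijk}(u) = (λ_k(u) − λ_i(u)) l_i(u) ∇r_j(u) r_k(u)`. -/
def beta (i j k : Fin n) (u : V n) : ℝ :=
  (S.lam k u - S.lam i u) * (S.l i u ⬝ᵥ fderiv ℝ (S.r j) u (S.r k u))

/-- `ν_{ijk}(u) = − l_i(u) ∇r_j(u) r_k(u)`. -/
def nu (i j k : Fin n) (u : V n) : ℝ := -(S.l i u ⬝ᵥ fderiv ℝ (S.r j) u (S.r k u))

/-- `γ_{ijk}(u) = (λ_k(u) − λ_j(u)) l_i(u) ∇r_j(u) r_k(u) − ∇λ_j(u) r_k(u) δ_ij`. -/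
def gamma (i j k : Fin n) (u : V n) : ℝ :=
  (S.lam k u - S.lam j u) * (S.l i u ⬝ᵥ fderiv ℝ (S.r j) u (S.r k u)) -
    (if i = j then fderiv ℝ (S.lam j) u (S.r k u) else 0)

/-- `σ_{ijk}(u) = l_i(u) (∇r_k(u) r_j(u) − ∇r_j(u) r_k(u))`. -/
def sigma (i j k : Fin n) (u : V n) : ℝ :=
  S.l i u ⬝ᵥ (fderiv ℝ (S.r k) u (S.r j u) - fderiv ℝ (S.r j) u (S.r k u))

/-- `β̃_{ijk}(u) = β_{ijk}(u) + ∇λ_i(u) r_k(u) δ_ij`. -/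
def betaT (i j k : Fin n) (u : V n) : ℝ :=
  S.beta i j k u + (if i = j then fderiv ℝ (S.lam i) u (S.r k u) else 0)

/-- `γ̃_{ijk}(u) = γ_{ijk}(u) + ½ [∇λ_j(u) r_k(u) δ_ij + ∇λ_k(u) r_j(u) δ_ik]`. -/
def gammaT (i j k : Fin n) (u : V n) : ℝ :=
  S.gamma i j k u + (1 / 2) *
    ((if i = j then fderiv ℝ (S.lam j) u (S.r k u) else 0) +
     (if i = k then fderiv ℝ (S.lam k) u (S.r j u) else 0))

/-- `b̃_{ik}(u) = Σ_l (∂b_i/∂u_l)(u) r_{kl}(u)`. -/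
def btilde (i k : Fin n) (u : V n) : ℝ :=
  ∑ m : Fin n, fderiv ℝ (S.bcoef i) u (Pi.single m 1) * S.r k u m

/-- `u` is a `C¹` solution of the Cauchy problem on `[0,T] × ℝ`, with initial
data `u0`, staying in the neighborhood `{|u| < δ}` of `u = 0`. -/
structure IsSolutionOn (u : ℝ → ℝ → V n) (u0 : ℝ → V n) (T : ℝ) : Prop where
  smooth : ContDiffOn ℝ 1 (fun p : ℝ × ℝ => u p.1 p.2) (Icc 0 T ×ˢ univ)
  small : ∀ t ∈ Icc (0 : ℝ) T, ∀ x : ℝ, eunorm (u t x) < S.δ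
  pde : ∀ t ∈ Icc (0 : ℝ) T, ∀ x : ℝ,
    derivWithin (fun s => u s x) (Icc 0 T) t +
      Matrix.mulVec (S.A (u t x)) (deriv (fun y => u t y) x) = S.B (u t x)
  init : ∀ x : ℝ, u 0 x = u0 x

/-- The lifespan `T̃` of the Cauchy problem with initial data `u0`
(as an extended nonnegative real). -/
def lifespan (u0 : ℝ → V n) : ℝ≥0∞ :=
  ⨆ (T : ℝ) (_ : ∃ u : ℝ → ℝ → V n, S.IsSolutionOn u u0 T), ENNReal.ofReal T

/-- `v_i = l_i(u) u`. -/
def vC (u : ℝ → ℝ → V n) (i : Fin n) (t x : ℝ) : ℝ := S.l i (u t x) ⬝ᵥ u t x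

/-- `w_i = l_i(u) u_x`. -/
def wC (u : ℝ → ℝ → V n) (i : Fin n) (t x : ℝ) : ℝ :=
  S.l i (u t x) ⬝ᵥ deriv (fun y => u t y) x

/-- `v = (v_1, …, v_n)`. -/
def vV (u : ℝ → ℝ → V n) (t x : ℝ) : V n := fun i => S.vC u i t x

/-- `w = (w_1, …, w_n)`. -/
def wV (u : ℝ → ℝ → V n) (t x : ℝ) : V n := fun i => S.wC u i t x

/-- `U_∞(T) = sup_{0≤t≤T} sup_x |u(t,x)|`. -/
def Uinf (_S : HypSys n) (u : ℝ → ℝ → V n) (T : ℝ) : ℝ :=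
  ⨆ p : Icc (0 : ℝ) T × ℝ, eunorm (u p.1.1 p.2)

/-- `V_∞(T) = sup_{0≤t≤T} sup_x |v(t,x)|`. -/
def Vinf (u : ℝ → ℝ → V n) (T : ℝ) : ℝ :=
  ⨆ p : Icc (0 : ℝ) T × ℝ, eunorm (S.vV u p.1.1 p.2)

/-- `W_∞(T) = sup_{0≤t≤T} sup_x |w(t,x)|`. -/
def Winf (u : ℝ → ℝ → V n) (T : ℝ) : ℝ :=
  ⨆ p : Icc (0 : ℝ) T × ℝ, eunorm (S.wV u p.1.1 p.2)

/-- `V_1(T) = sup_{0≤t≤T} ∫_ℝ |v(t,x)| dx`. -/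
def V1 (u : ℝ → ℝ → V n) (T : ℝ) : ℝ :=
  ⨆ t : Icc (0 : ℝ) T, ∫ x : ℝ, eunorm (S.vV u t.1 x)

/-- `W_1(T) = sup_{0≤t≤T} ∫_ℝ |w(t,x)| dx`. -/
def W1 (u : ℝ → ℝ → V n) (T : ℝ) : ℝ :=
  ⨆ t : Icc (0 : ℝ) T, ∫ x : ℝ, eunorm (S.wV u t.1 x)

/-- `ξ` is a `j`-th characteristic curve on `[0,T]`:  `ξ'(t) = λ_j(u(t, ξ(t)))`. -/
def IsChar (u : ℝ → ℝ → V n) (j : Fin n) (T : ℝ) (ξ : ℝ → ℝ) : Prop :=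
  ∀ t ∈ Icc (0 : ℝ) T, HasDerivWithinAt ξ (S.lam j (u t (ξ t))) (Icc 0 T) t

/-- `Ṽ_1(T) = max_{i≠j} sup_{C̃_j} ∫_{C̃_j} |v_i| dt`. -/
def V1t (u : ℝ → ℝ → V n) (T : ℝ) : ℝ :=
  sSup {A : ℝ | ∃ i j : Fin n, i ≠ j ∧ ∃ ξ : ℝ → ℝ, S.IsChar u j T ξ ∧
    A = ∫ t in Icc (0 : ℝ) T, |S.vC u i t (ξ t)|}

/-- `W̃_1(T) = max_{i≠j} sup_{C̃_j} ∫_{C̃_j} |w_i| dt`. -/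
def W1t (u : ℝ → ℝ → V n) (T : ℝ) : ℝ :=
  sSup {A : ℝ | ∃ i j : Fin n, i ≠ j ∧ ∃ ξ : ℝ → ℝ, S.IsChar u j T ξ ∧
    A = ∫ t in Icc (0 : ℝ) T, |S.wC u i t (ξ t)|}

/-- `Q_W(T) = Σ_{j≠k} ∫∫ |w_j||w_k|`. -/
def QW (u : ℝ → ℝ → V n) (T : ℝ) : ℝ :=
  ∑ j : Fin n, ∑ k : Fin n, if j = k then 0 else
    ∫ t in Icc (0 : ℝ) T, ∫ x : ℝ, |S.wC u j t x| * |S.wC u k t x|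

/-- `Q_{VW}(T) = Σ_{j≠k} ∫∫ |v_j||w_k|`. -/
def QVW (u : ℝ → ℝ → V n) (T : ℝ) : ℝ :=
  ∑ j : Fin n, ∑ k : Fin n, if j = k then 0 else
    ∫ t in Icc (0 : ℝ) T, ∫ x : ℝ, |S.vC u j t x| * |S.wC u k t x|

/-- `Q_V(T) = Σ_{j≠k} ∫∫ |v_j||v_k|`. -/
def QV (u : ℝ → ℝ → V n) (T : ℝ) : ℝ :=
  ∑ j : Fin n, ∑ k : Fin n, if j = k then 0 else
    ∫ t in Icc (0 : ℝ) T, ∫ x : ℝ, |S.vC u j t x| * |S.vC u k t x|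

/-- The coefficient `a_0(t;i,y) = γ_{iii}(u)` of the Riccati equation (5.5),
evaluated at `(t,x)`. -/
def ricA0 (u : ℝ → ℝ → V n) (i : Fin n) (t x : ℝ) : ℝ := S.gamma i i i (u t x)

/-- The coefficient `a_1(t;i,y)` of the Riccati equation (5.5), evaluated at `(t,x)`. -/
def ricA1 (u : ℝ → ℝ → V n) (i : Fin n) (t x : ℝ) : ℝ :=
  (∑ j : Fin n, if j = i then 0 else
      (S.gamma i i j (u t x) + S.gamma i j i (u t x)) * S.wC u j t x)
  + (∑ j : Fin n, S.sigma i j i (u t x) * S.bcoef j (u t x))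
  + (S.btilde i i (u t x) - S.btilde i i ((u t x i) • eb i))

/-- The coefficient `a_2(t;i,y)` of the Riccati equation (5.5), evaluated at `(t,x)`. -/
def ricA2 (u : ℝ → ℝ → V n) (i : Fin n) (t x : ℝ) : ℝ :=
  (∑ j : Fin n, ∑ k : Fin n, if j = k ∨ j = i ∨ k = i then 0 else
      S.gamma i j k (u t x) * S.wC u j t x * S.wC u k t x)
  + (∑ j : Fin n, ∑ k : Fin n, if k = i then 0 else
      S.sigma i j k (u t x) * S.bcoef j (u t x) * S.wC u k t x)
  + (∑ k : Fin n, if k = i then 0 else S.btilde i k (u t x) * S.wC u k t x)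

/-- `u` is a `C¹` solution of the system on the open set `Ω`, with values in
the neighborhood `{|u| < δ}`. -/
structure IsSol1On (u : ℝ → ℝ → V n) (Ω : Set (ℝ × ℝ)) : Prop where
  isOpen : IsOpen Ω
  smooth : ContDiffOn ℝ 1 (fun p : ℝ × ℝ => u p.1 p.2) Ω
  small : ∀ p ∈ Ω, eunorm (u p.1 p.2) < S.δ
  pde : ∀ p ∈ Ω, deriv (fun s => u s p.2) p.1 +
    Matrix.mulVec (S.A (u p.1 p.2)) (deriv (fun y => u p.1 y) p.2) = S.B (u p.1 p.2)

/-- `u` is a `C²` solution of the system on the open set `Ω`, with values in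
the neighborhood `{|u| < δ}`. -/
structure IsSol2On (u : ℝ → ℝ → V n) (Ω : Set (ℝ × ℝ)) : Prop where
  isOpen : IsOpen Ω
  smooth : ContDiffOn ℝ 2 (fun p : ℝ × ℝ => u p.1 p.2) Ω
  small : ∀ p ∈ Ω, eunorm (u p.1 p.2) < S.δ
  pde : ∀ p ∈ Ω, deriv (fun s => u s p.2) p.1 +
    Matrix.mulVec (S.A (u p.1 p.2)) (deriv (fun y => u p.1 y) p.2) = S.B (u p.1 p.2)

end HypSys

/-- The family of initial data `u(0,x) = f(ε,x)`: `f` is `C¹` in `(ε,x)`,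
`f(0,x) ≡ 0`, `∂²f/∂ε∂x(·,x)` is uniformly `C^r` (Hölder) on `[0,ε₁]`,
`ψ(x) = ∂f/∂ε(0,x)` is `C¹`, and `M = sup_x |ψ'(x)| < ∞`. -/
structure InitData (n : ℕ) where
  f : ℝ → ℝ → V n
  ε₁ : ℝ
  ε₁_pos : 0 < ε₁
  rexp : ℝ
  rexp_pos : 0 < rexp
  rexp_le_one : rexp ≤ 1
  smooth : ContDiff ℝ 1 (fun p : ℝ × ℝ => f p.1 p.2)
  zero : ∀ x : ℝ, f 0 x = 0
  psi_smooth : ContDiff ℝ 1 (fun x : ℝ => deriv (fun e => f e x) 0)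
  M_bdd : BddAbove (Set.range fun x : ℝ =>
    eunorm (deriv (fun x' : ℝ => deriv (fun e => f e x') 0) x))
  holder : ∃ CH : ℝ, ∀ x ε ε' : ℝ, ε ∈ Set.Icc 0 ε₁ → ε' ∈ Set.Icc 0 ε₁ →
    eunorm (deriv (fun e => deriv (fun y => f e y) x) ε
      - deriv (fun e => deriv (fun y => f e y) x) ε') ≤ CH * |ε - ε'| ^ rexp

namespace InitData

variable {n : ℕ} (D : InitData n)

/-- `ψ(x) = ∂f/∂ε(0,x)`. -/
def psi : ℝ → V n := fun x => deriv (fun e => D.f e x) 0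

/-- `M = sup_x |ψ'(x)|`. -/
def M : ℝ := ⨆ x : ℝ, eunorm (deriv D.psi x)

/-- The smallness conditions (1.17) on the initial data:
`∫|∂f/∂x(ε,·)| ≤ K₁ ε` and `∫|f(ε,·)| ≤ K₂ ε / (M+1)`. -/
def Small (K1 K2 ε : ℝ) : Prop :=
  Integrable (fun x : ℝ => eunorm (deriv (fun y => D.f ε y) x)) ∧
  Integrable (fun x : ℝ => eunorm (D.f ε x)) ∧
  (∫ x : ℝ, eunorm (deriv (fun y => D.f ε y) x)) ≤ K1 * ε ∧
  (∫ x : ℝ, eunorm (D.f ε x)) ≤ K2 / (D.M + 1) * ε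

end InitData

/-- The right-hand side of the sharp lifespan formula (1.26):
`max_{i∈J₁} sup_{x∈ℝ} ( −(1/α!) ∂^{α+1}λ_i/∂u_i^{α+1}(0) ψ_i(x)^α ψ_i'(x) )`. -/
def blowRate {n : ℕ} (S : HypSys n) (D : InitData n) (a : ℕ) : ℝ :=
  ⨆ i : {i : Fin n // ¬ S.WLD i ∧ S.IsAlphaOf i a}, ⨆ x : ℝ,
    (-(1 / (Nat.factorial a : ℝ)) * S.axisDeriv i.1 (a + 1) * (D.psi x) i.1 ^ a *
      deriv (fun x' => (D.psi x') i.1) x)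

/-!
Characteristics of one family cannot cross as long as the solution is `C¹`. Let the data have size
`ε`. In the conservation-law form of the equations for `u_i` and `w_i = l_i(u) · u_x`, the matching
condition and the normalized coordinates leave only two kinds of source terms: products of
components of two distinct families, whose space-time integral is `O(ε²)` because such waves cross
transversally, and the resonant products `|u_i|^(α+1) |w_i|`, whose space-time integral up to time
`T` is at most `O(T ε^(α+1)) ε`. A continuity argument in the size of these integrals bounds the
solution by `O(ε)` up to any time `T` with `T ε^(α+1) ≤ T₀`. On this time scale the `i`-th
characteristic issued from `y` is at `X_i(T, y) = y + T (λ_i(0) + d_i u_i(0, y)^(α+1)) + O(ε)`,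
where `d_i = (∂^(α+1) λ_i / ∂u_i^(α+1))(0) / (α+1)!`. For `T = T₀ ε^(-α-1)` and `ε → 0` the
monotonicity of `X_i(T, ·)` makes `y + T₀ d_i ψ_i(y)^(α+1)` monotone in `y`, which fails as soon as
`1 + T₀ (α+1) d_i ψ_i^α ψ_i' < 0` at some point; for every `T₀ > M₀` there are such `i` and `x`.
-/

namespace HyperbolicLifespan

/-! ### Flows of bounded scalar fields -/

section Flow

/-- A bounded time-dependent field on the line with a bounded space derivative `ax`, the setting in
which characteristic curves are globally defined. -/
structure IsBoundedField (a ax : ℝ → ℝ → ℝ) (L K : ℝ) : Prop where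
  cont : Continuous (Function.uncurry a)
  cont_slope : Continuous (Function.uncurry ax)
  hasDerivAt : ∀ t x, HasDerivAt (a t) (ax t x) x
  abs_le : ∀ t x, |a t x| ≤ L
  abs_slope_le : ∀ t x, |ax t x| ≤ K

/-- `X` is the flow on `[0, T]` of the field `a`, and `J = ∂X/∂y` its Jacobian. Outside `[0, T]` the
flow is only required to be continuous, with the same expansion bound, which is what freezing it at
the end points provides. -/
structure IsFlow (T L K : ℝ) (a ax X J : ℝ → ℝ → ℝ) : Prop where
  zero : ∀ y, X 0 y = y
  hasDerivWithinAt : ∀ y, ∀ t ∈ Icc (0 : ℝ) T,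
    HasDerivWithinAt (fun s => X s y) (a t (X t y)) (Icc 0 T) t
  cont : Continuous (Function.uncurry X)
  cont_jacobian : Continuous (Function.uncurry J)
  jacobian_pos : ∀ t y, 0 < J t y
  jacobian_zero : ∀ y, J 0 y = 1
  hasDerivAt : ∀ t y, HasDerivAt (X t) (J t y) y
  jacobian_hasDerivWithinAt : ∀ y, ∀ t ∈ Icc (0 : ℝ) T,
    HasDerivWithinAt (fun s => J s y) (ax t (X t y) * J t y) (Icc 0 T) t
  expansive : ∀ t y y', |y' - y| ≤ Real.exp (K * T) * |X t y' - X t y|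
  speed_le : ∀ y s t, 0 ≤ s → s ≤ t → t ≤ T → |X t y - X s y| ≤ L * (t - s)

/-- The mean value over the segment from `x` to `x'` of the space derivative `gx` at time `t`. -/
def meanSlope {E : Type*} [NormedAddCommGroup E] [NormedSpace ℝ E] (gx : ℝ → ℝ → E)
    (t x x' : ℝ) : E :=
  ∫ θ in (0 : ℝ)..1, gx t (x + θ * (x' - x))

section MeanSlope

variable {E : Type*} [NormedAddCommGroup E] [NormedSpace ℝ E] {g gx : ℝ → ℝ → E}

lemma sub_eq_smul_meanSlope [CompleteSpace E] (hd : ∀ t x, HasDerivAt (g t) (gx t x) x)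
    (hc : Continuous (Function.uncurry gx)) (t x x' : ℝ) :
    g t x' - g t x = (x' - x) • meanSlope gx t x x' := by
  have hct : Continuous (gx t) := hc.comp (by fun_prop : Continuous fun x : ℝ => (t, x))
  have hsegment : ∀ θ ∈ uIcc (0 : ℝ) 1, HasDerivAt (fun θ : ℝ => g t (x + θ * (x' - x)))
      ((x' - x) • gx t (x + θ * (x' - x))) θ := by
    intro θ _
    have : HasDerivAt (fun θ : ℝ => x + θ * (x' - x)) (x' - x) θ := by
      simpa using ((hasDerivAt_id θ).mul_const (x' - x)).const_add x
    exact (hd t _).scomp θ this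
  have hftc := intervalIntegral.integral_eq_sub_of_hasDerivAt hsegment
    (Continuous.intervalIntegrable (by fun_prop) _ _)
  rw [intervalIntegral.integral_smul] at hftc
  simpa [meanSlope] using hftc.symm

lemma norm_meanSlope_le {K : ℝ} {t : ℝ} (h : ∀ x, ‖gx t x‖ ≤ K) (x x' : ℝ) :
    ‖meanSlope gx t x x'‖ ≤ K := by
  simpa [meanSlope] using intervalIntegral.norm_integral_le_of_norm_le_const (a := (0 : ℝ)) (b := 1)
    (f := fun θ => gx t (x + θ * (x' - x))) (fun θ _ => h _)

lemma continuous_meanSlope (hc : Continuous (Function.uncurry gx)) :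
    Continuous (fun p : ℝ × ℝ × ℝ => meanSlope gx p.1 p.2.1 p.2.2) := by
  apply intervalIntegral.continuous_parametric_intervalIntegral_of_continuous'
  exact hc.comp (by fun_prop : Continuous fun p : (ℝ × ℝ × ℝ) × ℝ =>
    (p.1.1, p.1.2.1 + p.2 * (p.1.2.2 - p.1.2.1)))

lemma meanSlope_self [CompleteSpace E] (t x : ℝ) : meanSlope gx t x x = gx t x := by
  simp [meanSlope]

end MeanSlope

/-- The time `t` clamped to `[0, T]`; composing with it extends functions of time from `[0, T]` to
the whole line. -/
def clampTime (T t : ℝ) : ℝ := max 0 (min t T)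

lemma clampTime_mem {T : ℝ} (hT : 0 ≤ T) (t : ℝ) : clampTime T t ∈ Icc (0 : ℝ) T :=
  ⟨le_max_left _ _, max_le hT (min_le_right _ _)⟩

lemma clampTime_of_mem {T t : ℝ} (ht : t ∈ Icc (0 : ℝ) T) : clampTime T t = t := by
  simp [clampTime, ht.1, ht.2]

lemma continuous_clampTime (T : ℝ) : Continuous (clampTime T) := by
  unfold clampTime; fun_prop

variable {a ax X J : ℝ → ℝ → ℝ} {T L K : ℝ}

/-- The trajectories of the field `a` on `[0, T]`, frozen outside of this interval. -/
structure IsTrajectoryFamily (T : ℝ) (a X : ℝ → ℝ → ℝ) : Prop where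
  zero : ∀ y, X 0 y = y
  clamp : ∀ t y, X (clampTime T t) y = X t y
  cont_time : ∀ y, Continuous (fun t => X t y)
  hasDerivWithinAt : ∀ y, ∀ t ∈ Icc (0 : ℝ) T,
    HasDerivWithinAt (fun s => X s y) (a t (X t y)) (Icc 0 T) t

lemma IsBoundedField.isPicardLindelof (h : IsBoundedField a ax L K) (hT : 0 ≤ T) (y : ℝ) :
    IsPicardLindelof a (tmin := 0) (tmax := T) ⟨0, le_rfl, hT⟩ y
      ⟨L * T, mul_nonneg ((abs_nonneg _).trans (h.abs_le 0 0)) hT⟩ 0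
      ⟨L, (abs_nonneg _).trans (h.abs_le 0 0)⟩ ⟨K, (abs_nonneg _).trans (h.abs_slope_le 0 0)⟩ where
  lipschitzOnWith t _ := by
    refine (lipschitzWith_of_nnnorm_deriv_le
      (fun x => (h.hasDerivAt t x).differentiableAt) fun x => ?_).lipschitzOnWith
    rw [(h.hasDerivAt t x).deriv]
    exact h.abs_slope_le t x
  continuousOn x _ := (h.cont.comp (by fun_prop : Continuous fun t : ℝ => (t, x))).continuousOn
  norm_le t _ x _ := h.abs_le t x
  mul_max_le := by
    simp only [NNReal.coe_zero, sub_zero, sub_self]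
    rw [max_eq_left hT]
    exact le_rfl

lemma IsBoundedField.exists_isTrajectoryFamily (h : IsBoundedField a ax L K) (hT : 0 ≤ T) :
    ∃ X, IsTrajectoryFamily T a X := by
  choose X hX0 hX using fun y =>
    (h.isPicardLindelof hT y).exists_eq_forall_mem_Icc_hasDerivWithinAt₀
  have hclamp : ∀ t ∈ Icc (0 : ℝ) T, ∀ y, X y (clampTime T t) = X y t := fun t ht y => by
    rw [clampTime_of_mem ht]
  refine ⟨fun t y => X y (clampTime T t), fun y => ?_, fun t y => ?_, fun y => ?_, fun y t ht => ?_⟩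
  · exact (hclamp 0 ⟨le_rfl, hT⟩ y).trans (hX0 y)
  · exact hclamp _ (clampTime_mem hT t) y
  · exact ContinuousOn.comp_continuous (fun t ht => (hX y t ht).continuousWithinAt)
      (continuous_clampTime T) (clampTime_mem hT)
  · simp only [hclamp t ht y]
    exact (hX y t ht).congr (fun s hs => hclamp s hs y) (hclamp t ht y)

namespace IsTrajectoryFamily

lemma continuous_meanSlope (hX : IsTrajectoryFamily T a X) (hc : Continuous (Function.uncurry ax))
    (y y' : ℝ) : Continuous fun s => meanSlope ax s (X s y) (X s y') :=
  (HyperbolicLifespan.continuous_meanSlope hc).comp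
    (continuous_id.prodMk ((hX.cont_time y).prodMk (hX.cont_time y')))

lemma hasDerivAt_integral_meanSlope (hX : IsTrajectoryFamily T a X)
    (hc : Continuous (Function.uncurry ax)) (y y' t : ℝ) :
    HasDerivAt (fun t => ∫ s in (0 : ℝ)..t, meanSlope ax s (X s y) (X s y'))
      (meanSlope ax t (X t y) (X t y')) t :=
  (hX.continuous_meanSlope hc y y').integral_hasStrictDerivAt 0 t |>.hasDerivAt

/- The difference of two trajectories solves the linear equation `D' = q D`, where `q` is the mean
slope of the field between them. -/
lemma sub_eq_mul_exp (hX : IsTrajectoryFamily T a X) (h : IsBoundedField a ax L K) (hT : 0 ≤ T)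
    (t y y' : ℝ) :
    X t y' - X t y =
      (y' - y) * Real.exp (∫ s in (0 : ℝ)..clampTime T t, meanSlope ax s (X s y) (X s y')) := by
  have hconst : ∀ s ∈ Icc (0 : ℝ) T, HasDerivWithinAt
      (fun s => (X s y' - X s y) * Real.exp (-∫ r in (0 : ℝ)..s, meanSlope ax r (X r y) (X r y')))
      0 (Icc 0 T) s := by
    intro s hs
    refine (((hX.hasDerivWithinAt y' s hs).sub (hX.hasDerivWithinAt y s hs)).mul
      ((hX.hasDerivAt_integral_meanSlope h.cont_slope y y' s).neg.exp.hasDerivWithinAt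
        (s := Icc 0 T))).congr_deriv ?_
    rw [sub_eq_smul_meanSlope h.hasDerivAt h.cont_slope]
    simp only [Pi.sub_apply, Pi.neg_apply, smul_eq_mul]
    ring
  have hle := (convex_Icc (0 : ℝ) T).norm_image_sub_le_of_norm_hasDerivWithin_le (C := 0)
    hconst (by simp) ⟨le_rfl, hT⟩ (clampTime_mem hT t)
  simp only [zero_mul] at hle
  have heq := sub_eq_zero.1 (norm_le_zero_iff.1 hle)
  simp only [hX.zero, hX.clamp, intervalIntegral.integral_same, neg_zero, Real.exp_zero, mul_one,
    Real.exp_neg] at heq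
  rw [← heq, mul_assoc, inv_mul_cancel₀ (Real.exp_pos _).ne', mul_one]

lemma abs_integral_meanSlope_le (h : IsBoundedField a ax L K) (hT : 0 ≤ T) (t y y' : ℝ) :
    |∫ s in (0 : ℝ)..clampTime T t, meanSlope ax s (X s y) (X s y')| ≤ K * T := by
  have hK : 0 ≤ K := (abs_nonneg _).trans (h.abs_slope_le 0 0)
  have hle := intervalIntegral.norm_integral_le_of_norm_le_const (a := (0 : ℝ)) (b := clampTime T t)
    (f := fun s => meanSlope ax s (X s y) (X s y'))
    (fun s _ => norm_meanSlope_le (h.abs_slope_le s) _ _)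
  rw [Real.norm_eq_abs, sub_zero, abs_of_nonneg (clampTime_mem hT t).1] at hle
  exact hle.trans (mul_le_mul_of_nonneg_left (clampTime_mem hT t).2 hK)

lemma abs_sub_le (hX : IsTrajectoryFamily T a X) (h : IsBoundedField a ax L K) (hT : 0 ≤ T)
    (t y y' : ℝ) : |X t y' - X t y| ≤ Real.exp (K * T) * |y' - y| := by
  rw [hX.sub_eq_mul_exp h hT, abs_mul, mul_comm, abs_of_pos (Real.exp_pos _)]
  gcongr
  exact (le_abs_self _).trans (abs_integral_meanSlope_le h hT t y y')

lemma le_abs_sub (hX : IsTrajectoryFamily T a X) (h : IsBoundedField a ax L K) (hT : 0 ≤ T)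
    (t y y' : ℝ) : |y' - y| ≤ Real.exp (K * T) * |X t y' - X t y| := by
  rw [hX.sub_eq_mul_exp h hT, abs_mul, abs_of_pos (Real.exp_pos _), mul_left_comm, ← Real.exp_add]
  refine le_mul_of_one_le_right (abs_nonneg _) (Real.one_le_exp ?_)
  linarith [neg_le_of_abs_le (abs_integral_meanSlope_le (X := X) h hT t y y')]

lemma continuous_uncurry (hX : IsTrajectoryFamily T a X) (h : IsBoundedField a ax L K)
    (hT : 0 ≤ T) : Continuous (Function.uncurry X) := by
  have hlip : ∀ t, LipschitzWith ⟨Real.exp (K * T), (Real.exp_pos _).le⟩ (X t) := fun t =>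
    LipschitzWith.of_dist_le_mul fun y' y => hX.abs_sub_le h hT t y y'
  exact continuous_prod_of_continuous_lipschitzWith' _ _ hlip hX.cont_time

lemma hasDerivAt (hX : IsTrajectoryFamily T a X) (h : IsBoundedField a ax L K) (hT : 0 ≤ T)
    (t y : ℝ) :
    HasDerivAt (X t) (Real.exp (∫ s in (0 : ℝ)..clampTime T t, ax s (X s y))) y := by
  rw [hasDerivAt_iff_tendsto_slope]
  have hlim : Tendsto
      (fun y' => Real.exp (∫ s in (0 : ℝ)..clampTime T t, meanSlope ax s (X s y) (X s y'))) (𝓝 y)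
      (𝓝 (Real.exp (∫ s in (0 : ℝ)..clampTime T t, ax s (X s y)))) := by
    have hcont : Continuous fun y' =>
        ∫ s in (0 : ℝ)..clampTime T t, meanSlope ax s (X s y) (X s y') := by
      apply intervalIntegral.continuous_parametric_intervalIntegral_of_continuous'
      exact (HyperbolicLifespan.continuous_meanSlope h.cont_slope).comp
        (continuous_snd.prodMk (((hX.cont_time y).comp continuous_snd).prodMk
          ((hX.continuous_uncurry h hT).comp (continuous_snd.prodMk continuous_fst))))
    simpa only [meanSlope_self, Function.comp_def] using
      (Real.continuous_exp.comp hcont).tendsto y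
  refine (hlim.mono_left nhdsWithin_le_nhds).congr' ?_
  filter_upwards [self_mem_nhdsWithin] with y' hy'
  rw [slope_def_field, hX.sub_eq_mul_exp h hT, mul_div_cancel_left₀ _ (sub_ne_zero.2 hy')]

lemma speed_le (hX : IsTrajectoryFamily T a X) (h : IsBoundedField a ax L K) (y s t : ℝ)
    (hs : 0 ≤ s) (hst : s ≤ t) (ht : t ≤ T) : |X t y - X s y| ≤ L * (t - s) := by
  have := (convex_Icc (0 : ℝ) T).norm_image_sub_le_of_norm_hasDerivWithin_le (C := L)
    (hX.hasDerivWithinAt y) (fun x _ => h.abs_le _ _) ⟨hs, hst.trans ht⟩ ⟨hs.trans hst, ht⟩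
  rwa [Real.norm_eq_abs, Real.norm_eq_abs, abs_of_nonneg (sub_nonneg.2 hst)] at this

lemma isFlow (hX : IsTrajectoryFamily T a X) (h : IsBoundedField a ax L K) (hT : 0 ≤ T) :
    IsFlow T L K a ax X (fun t y => Real.exp (∫ s in (0 : ℝ)..clampTime T t, ax s (X s y))) where
  zero := hX.zero
  hasDerivWithinAt := hX.hasDerivWithinAt
  cont := hX.continuous_uncurry h hT
  cont_jacobian := by
    apply Real.continuous_exp.comp
    apply intervalIntegral.continuous_parametric_intervalIntegral_of_continuous
      (f := fun (p : ℝ × ℝ) s => ax s (X s p.2)) (s := fun p : ℝ × ℝ => clampTime T p.1)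
    · exact h.cont_slope.comp (continuous_snd.prodMk ((hX.continuous_uncurry h hT).comp
        (by fun_prop : Continuous fun p : (ℝ × ℝ) × ℝ => (p.2, p.1.2))))
    · exact (continuous_clampTime T).comp continuous_fst
  jacobian_pos _ _ := Real.exp_pos _
  jacobian_zero y := by simp [clampTime_of_mem (left_mem_Icc.2 hT)]
  hasDerivAt := hX.hasDerivAt h hT
  jacobian_hasDerivWithinAt y t ht := by
    have hexp := (hX.hasDerivAt_integral_meanSlope h.cont_slope y y t).exp.hasDerivWithinAt
      (s := Icc 0 T)
    simp only [meanSlope_self] at hexp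
    rw [mul_comm, clampTime_of_mem ht]
    exact hexp.congr (fun s hs => by rw [clampTime_of_mem hs]) (by rw [clampTime_of_mem ht])
  expansive := hX.le_abs_sub h hT
  speed_le := hX.speed_le h

end IsTrajectoryFamily

theorem IsBoundedField.exists_isFlow (h : IsBoundedField a ax L K) (hT : 0 ≤ T) :
    ∃ X J, IsFlow T L K a ax X J :=
  let ⟨_, hX⟩ := h.exists_isTrajectoryFamily hT
  ⟨_, _, hX.isFlow h hT⟩

lemma IsFlow.cont_space (h : IsFlow T L K a ax X J) (t : ℝ) : Continuous (X t) :=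
  h.cont.comp (by fun_prop : Continuous fun x : ℝ => (t, x))

lemma IsFlow.continuous_curve (h : IsFlow T L K a ax X J) (y : ℝ) :
    Continuous fun s => (s, X s y) :=
  continuous_id.prodMk (h.cont.comp (by fun_prop : Continuous fun s : ℝ => (s, y)))

lemma IsFlow.strictMono (h : IsFlow T L K a ax X J) (t : ℝ) : StrictMono (X t) :=
  strictMono_of_hasDerivAt_pos (h.hasDerivAt t) (h.jacobian_pos t)

lemma IsFlow.surjective (h : IsFlow T L K a ax X J) {t : ℝ} (ht : t ∈ Icc (0 : ℝ) T) :
    Function.Surjective (X t) := by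
  have hdist : ∀ y, |X t y - y| ≤ L * t := fun y => by
    simpa [h.zero] using h.speed_le y 0 t le_rfl ht.1 ht.2
  intro x
  have hlow := abs_le.1 (hdist (x - L * t))
  have hupp := abs_le.1 (hdist (x + L * t))
  have hle : x - L * t ≤ x + L * t := by linarith [(abs_nonneg _).trans (hdist 0)]
  obtain ⟨y, _, hy⟩ := intermediate_value_Icc hle (h.cont_space t).continuousOn
    (show x ∈ Icc _ _ from ⟨by linarith, by linarith⟩)
  exact ⟨y, hy⟩

end Flow

/-! ### Transported densities and their transversal interaction -/

section Interaction

/-- The truncated domain of determinacy `{0 ≤ t ≤ T, |x| ≤ R - L t}`: a characteristic of speed at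
most `L` that ends in it has stayed in it. -/
def trapezoid (T R L : ℝ) : Set (ℝ × ℝ) := {p | 0 ≤ p.1 ∧ p.1 ≤ T ∧ |p.2| ≤ R - L * p.1}

lemma isClosed_trapezoid (T R L : ℝ) : IsClosed (trapezoid T R L) := by
  simp only [trapezoid, ofPred_and]
  exact (isClosed_le (by fun_prop) (by fun_prop)).inter
    ((isClosed_le (by fun_prop) (by fun_prop)).inter (isClosed_le (by fun_prop) (by fun_prop)))

/-- The indicator function of the trapezoid, with values in `ℝ≥0∞` as a weight in integrals. -/
def cutoff (T R L t x : ℝ) : ℝ≥0∞ := (trapezoid T R L).indicator 1 (t, x)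

lemma measurable_cutoff (T R L : ℝ) : Measurable (fun p : ℝ × ℝ => cutoff T R L p.1 p.2) :=
  measurable_one.indicator (isClosed_trapezoid T R L).measurableSet

lemma measurable_cutoff_slice (T R L t : ℝ) : Measurable (cutoff T R L t) :=
  (measurable_cutoff T R L).comp measurable_prodMk_left

lemma cutoff_of_mem {T R L t x : ℝ} (h : (t, x) ∈ trapezoid T R L) : cutoff T R L t x = 1 := by
  simp [cutoff, h]

lemma cutoff_of_notMem {T R L t x : ℝ} (h : (t, x) ∉ trapezoid T R L) : cutoff T R L t x = 0 := by
  simp [cutoff, h]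

/-- The density `z` is transported by the flow `X` (with Jacobian `J`) with production at most `g`:
along characteristics in the trapezoid, the mass element `|z| J` grows at most by the integral of
`g J`. -/
structure IsTransported (T R L : ℝ) (X J z g : ℝ → ℝ → ℝ) : Prop where
  cont : Continuous (Function.uncurry z)
  cont_production : Continuous (Function.uncurry g)
  transport : ∀ t ∈ Icc (0 : ℝ) T, ∀ y, (t, X t y) ∈ trapezoid T R L →
    ENNReal.ofReal (|z t (X t y)| * J t y) ≤ ENNReal.ofReal |z 0 y| +
      ∫⁻ s in Icc 0 t, ENNReal.ofReal (g s (X s y) * J s y)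

/-- The mass that may sit on the characteristic issued from `y`: the initial mass and the production
along its part in the trapezoid. -/
def lagrangianMass (T R L : ℝ) (X J z g : ℝ → ℝ → ℝ) (y : ℝ) : ℝ≥0∞ :=
  cutoff T R L 0 y * ENNReal.ofReal |z 0 y| +
    ∫⁻ s in Icc 0 T,
      ENNReal.ofReal (J s y) * (cutoff T R L s (X s y) * ENNReal.ofReal (g s (X s y)))

/-- The initial mass of `z` plus the production `g` in the whole trapezoid. -/
def totalMass (T R L : ℝ) (z g : ℝ → ℝ → ℝ) : ℝ≥0∞ :=
  (∫⁻ y, cutoff T R L 0 y * ENNReal.ofReal |z 0 y|) +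
    ∫⁻ s in Icc 0 T, ∫⁻ x, cutoff T R L s x * ENNReal.ofReal (g s x)

/-- The speeds `a` and `a₂` differ by at least `c`, with a constant sign, in the trapezoid. -/
def SpeedGap (T R L c : ℝ) (a a₂ : ℝ → ℝ → ℝ) : Prop :=
  (∀ t x, (t, x) ∈ trapezoid T R L → c ≤ a₂ t x - a t x) ∨
    (∀ t x, (t, x) ∈ trapezoid T R L → c ≤ a t x - a₂ t x)

variable {a ax X J z g : ℝ → ℝ → ℝ} {T L K R : ℝ}

lemma IsFlow.mem_trapezoid_of_le (h : IsFlow T L K a ax X J) {s t y : ℝ} (hs : 0 ≤ s) (hst : s ≤ t)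
    (ht : (t, X t y) ∈ trapezoid T R L) : (s, X s y) ∈ trapezoid T R L := by
  obtain ⟨-, htT, hxt⟩ := ht
  refine ⟨hs, hst.trans htT, ?_⟩
  have hspeed := h.speed_le y s t hs hst htT
  have habs := abs_sub_abs_le_abs_sub (X s y) (X t y)
  rw [abs_sub_comm] at habs
  simp only at hxt ⊢
  linarith

lemma IsFlow.lintegral_eq_lintegral_jacobian_mul (h : IsFlow T L K a ax X J) {t : ℝ}
    (ht : t ∈ Icc (0 : ℝ) T) (f : ℝ → ℝ≥0∞) :
    ∫⁻ x, f x = ∫⁻ y, ENNReal.ofReal (J t y) * f (X t y) := by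
  have hcv := lintegral_image_eq_lintegral_abs_deriv_mul (s := univ) (f := X t) (f' := J t)
    MeasurableSet.univ (fun y _ => (h.hasDerivAt t y).hasDerivWithinAt)
    (h.strictMono t).injective.injOn f
  rw [image_univ, (h.surjective ht).range_eq, Measure.restrict_univ] at hcv
  simpa only [abs_of_pos (h.jacobian_pos t _)] using hcv

lemma IsFlow.measurable_graph (h : IsFlow T L K a ax X J) :
    Measurable (fun p : ℝ × ℝ => (p.1, X p.1 p.2)) :=
  measurable_fst.prodMk h.cont.measurable

lemma IsFlow.measurable_production (h : IsFlow T L K a ax X J)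
    (hg : Continuous (Function.uncurry g)) :
    Measurable (fun p : ℝ × ℝ => ENNReal.ofReal (J p.1 p.2) *
      (cutoff T R L p.1 (X p.1 p.2) * ENNReal.ofReal (g p.1 (X p.1 p.2)))) :=
  h.cont_jacobian.measurable.ennreal_ofReal.mul
    (((measurable_cutoff T R L).comp h.measurable_graph).mul
      (hg.measurable.comp h.measurable_graph).ennreal_ofReal)

lemma IsTransported.measurable_initial (hz : IsTransported T R L X J z g) :
    Measurable fun y => cutoff T R L 0 y * ENNReal.ofReal |z 0 y| :=
  (measurable_cutoff_slice T R L 0).mul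
    (hz.cont.comp
      (by fun_prop : Continuous fun y : ℝ => ((0 : ℝ), y))).measurable.norm.ennreal_ofReal

lemma measurable_lagrangianMass (h : IsFlow T L K a ax X J) (hz : IsTransported T R L X J z g) :
    Measurable (lagrangianMass T R L X J z g) :=
  hz.measurable_initial.add
    (Measurable.lintegral_prod_left' (h.measurable_production hz.cont_production))

lemma lintegral_lagrangianMass (h : IsFlow T L K a ax X J) (hz : IsTransported T R L X J z g) :
    ∫⁻ y, lagrangianMass T R L X J z g y = totalMass T R L z g := by
  unfold lagrangianMass totalMass
  rw [lintegral_add_left hz.measurable_initial]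
  congr 1
  rw [lintegral_lintegral_swap]
  swap
  · exact ((h.measurable_production hz.cont_production).comp measurable_swap).aemeasurable
  refine setLIntegral_congr_fun measurableSet_Icc fun s hs => ?_
  exact (h.lintegral_eq_lintegral_jacobian_mul hs
    (fun x => cutoff T R L s x * ENNReal.ofReal (g s x))).symm

lemma IsTransported.le_lagrangianMass (h : IsFlow T L K a ax X J)
    (hz : IsTransported T R L X J z g) {t y : ℝ} (ht : t ∈ Icc (0 : ℝ) T)
    (hmem : (t, X t y) ∈ trapezoid T R L) :
    ENNReal.ofReal (|z t (X t y)| * J t y) ≤ lagrangianMass T R L X J z g y := by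
  have hmem0 := h.mem_trapezoid_of_le le_rfl ht.1 hmem
  rw [h.zero] at hmem0
  refine (hz.transport t ht y hmem).trans ?_
  rw [lagrangianMass, cutoff_of_mem hmem0, one_mul]
  refine add_le_add le_rfl ?_
  calc ∫⁻ s in Icc 0 t, ENNReal.ofReal (g s (X s y) * J s y)
      = ∫⁻ s in Icc 0 t, ENNReal.ofReal (J s y) *
          (cutoff T R L s (X s y) * ENNReal.ofReal (g s (X s y))) := by
        refine setLIntegral_congr_fun measurableSet_Icc fun s hs => ?_
        rw [cutoff_of_mem (h.mem_trapezoid_of_le hs.1 hs.2 hmem), one_mul, mul_comm,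
          ENNReal.ofReal_mul (h.jacobian_pos _ _).le]
    _ ≤ _ := lintegral_mono_set (Icc_subset_Icc le_rfl ht.2)

lemma IsTransported.lintegral_slice_le (h : IsFlow T L K a ax X J)
    (hz : IsTransported T R L X J z g) {t : ℝ} (ht : t ∈ Icc (0 : ℝ) T) :
    ∫⁻ x, cutoff T R L t x * ENNReal.ofReal |z t x| ≤ totalMass T R L z g := by
  rw [h.lintegral_eq_lintegral_jacobian_mul ht, ← lintegral_lagrangianMass h hz]
  refine lintegral_mono fun y => ?_
  by_cases hmem : (t, X t y) ∈ trapezoid T R L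
  · simp only
    rw [cutoff_of_mem hmem, one_mul, ← ENNReal.ofReal_mul (h.jacobian_pos _ _).le, mul_comm]
    exact hz.le_lagrangianMass h ht hmem
  · simp [cutoff_of_notMem hmem]

section Foot

/- `y s` is the foot at time `0` of the characteristic of `a` meeting the curve `ξ` at time `s`. -/
variable {a₂ : ℝ → ℝ → ℝ} {c τ : ℝ} {ξ y : ℝ → ℝ}

lemma IsFlow.hasDerivWithinAt_sub_foot (h : IsFlow T L K a ax X J) (hτ : τ ≤ T)
    (hy : ∀ s ∈ Icc (0 : ℝ) τ, X s (y s) = ξ s)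
    (hξ : ∀ t ∈ Icc (0 : ℝ) τ, HasDerivWithinAt ξ (a₂ t (ξ t)) (Icc 0 τ) t) {s : ℝ}
    (hs : s ∈ Icc (0 : ℝ) τ) :
    HasDerivWithinAt (fun r => ξ r - X r (y s)) (a₂ s (ξ s) - a s (ξ s)) (Icc 0 τ) s := by
  have hX := (h.hasDerivWithinAt (y s) s ⟨hs.1, hs.2.trans hτ⟩).mono (Icc_subset_Icc le_rfl hτ)
  rw [hy s hs] at hX
  exact (hξ s hs).sub hX

lemma IsFlow.continuousOn_foot (h : IsFlow T L K a ax X J) (hτ : τ ≤ T)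
    (hy : ∀ s ∈ Icc (0 : ℝ) τ, X s (y s) = ξ s)
    (hξ : ∀ t ∈ Icc (0 : ℝ) τ, HasDerivWithinAt ξ (a₂ t (ξ t)) (Icc 0 τ) t) :
    ContinuousOn y (Icc 0 τ) := by
  intro s hs
  have hgap : Tendsto (fun r => ξ r - X r (y s)) (𝓝[Icc 0 τ] s) (𝓝 0) := by
    simpa [hy s hs] using (h.hasDerivWithinAt_sub_foot hτ hy hξ hs).continuousWithinAt.tendsto
  have hfoot : Tendsto (fun r => y r - y s) (𝓝[Icc 0 τ] s) (𝓝 0) := by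
    apply squeeze_zero_norm' (a := fun r => Real.exp (K * T) * |ξ r - X r (y s)|)
    · filter_upwards [self_mem_nhdsWithin] with r hr
      simpa only [hy r hr, Real.norm_eq_abs] using h.expansive r (y s) (y r)
    · simpa using hgap.abs.const_mul (Real.exp (K * T))
  simpa [ContinuousWithinAt] using hfoot.add_const (y s)

lemma IsFlow.hasDerivWithinAt_foot (h : IsFlow T L K a ax X J) (hτ : τ ≤ T)
    (hy : ∀ s ∈ Icc (0 : ℝ) τ, X s (y s) = ξ s)
    (hξ : ∀ t ∈ Icc (0 : ℝ) τ, HasDerivWithinAt ξ (a₂ t (ξ t)) (Icc 0 τ) t) {s : ℝ}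
    (hs : s ∈ Icc (0 : ℝ) τ) :
    HasDerivWithinAt y ((a₂ s (ξ s) - a s (ξ s)) / J s (y s)) (Icc 0 τ) s := by
  rw [hasDerivWithinAt_iff_tendsto_slope]
  have hJ : Tendsto (fun r => meanSlope J r (y s) (y r)) (𝓝[Icc 0 τ] s) (𝓝 (J s (y s))) := by
    have hcont := (continuous_meanSlope h.cont_jacobian).tendsto (s, y s, y s)
    simp only [meanSlope_self] at hcont
    exact hcont.comp ((tendsto_id.mono_left nhdsWithin_le_nhds).prodMk_nhds
      (tendsto_const_nhds.prodMk_nhds (h.continuousOn_foot hτ hy hξ s hs)))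
  have hJ' := hJ.mono_left (nhdsWithin_mono _ (sdiff_subset (t := {s})))
  refine ((hasDerivWithinAt_iff_tendsto_slope.1
    (h.hasDerivWithinAt_sub_foot hτ hy hξ hs)).div hJ' (h.jacobian_pos _ _).ne').congr' ?_
  filter_upwards [self_mem_nhdsWithin, hJ'.eventually_ne (h.jacobian_pos s (y s)).ne']
    with r hr hne
  have hrs : r - s ≠ 0 := sub_ne_zero.2 hr.2
  have hsub := sub_eq_smul_meanSlope h.hasDerivAt h.cont_jacobian r (y s) (y r)
  rw [hy r hr.1] at hsub
  rw [Pi.div_apply, slope_def_field, slope_def_field, hy s hs, sub_self, sub_zero, hsub,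
    smul_eq_mul]
  field_simp

lemma IsFlow.injOn_foot (h : IsFlow T L K a ax X J) (hτ : τ ≤ T) (hc : 0 < c)
    (hgap : SpeedGap T R L c a a₂) (hy : ∀ s ∈ Icc (0 : ℝ) τ, X s (y s) = ξ s)
    (hξ : ∀ t ∈ Icc (0 : ℝ) τ, HasDerivWithinAt ξ (a₂ t (ξ t)) (Icc 0 τ) t)
    (hmem : ∀ t ∈ Icc (0 : ℝ) τ, (t, ξ t) ∈ trapezoid T R L) : InjOn y (Icc 0 τ) := by
  have hderiv : ∀ s ∈ interior (Icc (0 : ℝ) τ), HasDerivWithinAt y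
      ((a₂ s (ξ s) - a s (ξ s)) / J s (y s)) (interior (Icc 0 τ)) s := fun s hs =>
    (h.hasDerivWithinAt_foot hτ hy hξ (interior_subset hs)).mono interior_subset
  have hcont := h.continuousOn_foot hτ hy hξ
  rcases hgap with hpos | hneg
  · refine (strictMonoOn_of_hasDerivWithinAt_pos (convex_Icc 0 τ) hcont hderiv
      fun s hs => div_pos ?_ (h.jacobian_pos _ _)).injOn
    exact hc.trans_le (hpos s _ (hmem s (interior_subset hs)))
  · refine (strictAntiOn_of_hasDerivWithinAt_neg (convex_Icc 0 τ) hcont hderiv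
      fun s hs => div_neg_of_neg_of_pos ?_ (h.jacobian_pos _ _)).injOn
    linarith [hneg s _ (hmem s (interior_subset hs))]

end Foot

lemma SpeedGap.le_abs_sub {a₂ : ℝ → ℝ → ℝ} {c t x : ℝ} (h : SpeedGap T R L c a a₂)
    (hmem : (t, x) ∈ trapezoid T R L) : c ≤ |a₂ t x - a t x| := by
  rcases h with h | h
  · exact (h t x hmem).trans (le_abs_self _)
  · exact abs_sub_comm (a₂ t x) (a t x) ▸ (h t x hmem).trans (le_abs_self _)

/- The change of variables from the time `s` to the foot `y s` turns the integral of `z` along the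
transversal curve into an integral over characteristics. -/
lemma IsTransported.lintegral_along_transversal_le (h : IsFlow T L K a ax X J)
    (hz : IsTransported T R L X J z g) {a₂ : ℝ → ℝ → ℝ} {c : ℝ} (hc : 0 < c)
    (hgap : SpeedGap T R L c a a₂) {τ : ℝ} (hτ : τ ≤ T) {ξ : ℝ → ℝ}
    (hξ : ∀ t ∈ Icc (0 : ℝ) τ, HasDerivWithinAt ξ (a₂ t (ξ t)) (Icc 0 τ) t)
    (hmem : ∀ t ∈ Icc (0 : ℝ) τ, (t, ξ t) ∈ trapezoid T R L) :
    ∫⁻ s in Icc 0 τ, ENNReal.ofReal |z s (ξ s)| ≤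
      ENNReal.ofReal (1 / c) * totalMass T R L z g := by
  have hsub : Icc (0 : ℝ) τ ⊆ Icc 0 T := Icc_subset_Icc le_rfl hτ
  choose! y hy using fun s (hs : s ∈ Icc (0 : ℝ) τ) => h.surjective (hsub hs) (ξ s)
  have hpoint : ∀ s ∈ Icc (0 : ℝ) τ, ENNReal.ofReal |z s (ξ s)| ≤ ENNReal.ofReal (1 / c) *
      (ENNReal.ofReal |(a₂ s (ξ s) - a s (ξ s)) / J s (y s)| *
        lagrangianMass T R L X J z g (y s)) := by
    intro s hs
    have hJ := h.jacobian_pos s (y s)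
    have hmass := hz.le_lagrangianMass h (y := y s) (hsub hs) (by rw [hy s hs]; exact hmem s hs)
    rw [hy s hs] at hmass
    refine le_trans ?_ (mul_le_mul_right (mul_le_mul_right hmass _) _)
    rw [← ENNReal.ofReal_mul (abs_nonneg _), ← ENNReal.ofReal_mul (by positivity)]
    apply ENNReal.ofReal_le_ofReal
    have hratio : 1 ≤ |a₂ s (ξ s) - a s (ξ s)| / c :=
      (one_le_div hc).2 (hgap.le_abs_sub (hmem s hs))
    calc |z s (ξ s)| ≤ |a₂ s (ξ s) - a s (ξ s)| / c * |z s (ξ s)| :=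
          le_mul_of_one_le_left (abs_nonneg _) hratio
      _ = _ := by rw [abs_div, abs_of_pos hJ]; field_simp
  calc ∫⁻ s in Icc 0 τ, ENNReal.ofReal |z s (ξ s)| ≤ _ :=
        setLIntegral_mono' measurableSet_Icc hpoint
    _ = ENNReal.ofReal (1 / c) * ∫⁻ x in y '' Icc 0 τ, lagrangianMass T R L X J z g x := by
        rw [lintegral_const_mul' _ _ ENNReal.ofReal_ne_top,
          lintegral_image_eq_lintegral_abs_deriv_mul measurableSet_Icc
            (fun s hs => h.hasDerivWithinAt_foot hτ hy hξ hs) (h.injOn_foot hτ hc hgap hy hξ hmem)]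
    _ ≤ ENNReal.ofReal (1 / c) * totalMass T R L z g := by
        rw [← lintegral_lagrangianMass h hz]
        exact mul_le_mul_right (setLIntegral_le_lintegral _ _) _

section TwoFlows

variable {a₂ ax₂ X₂ J₂ z₂ g₂ : ℝ → ℝ → ℝ} {K₂ c : ℝ}

lemma IsTransported.lintegral_along_flow_le (h : IsFlow T L K a ax X J)
    (hz : IsTransported T R L X J z g) (h₂ : IsFlow T L K₂ a₂ ax₂ X₂ J₂) (hc : 0 < c)
    (hgap : SpeedGap T R L c a a₂) (y : ℝ) :
    ∫⁻ t in Icc 0 T, cutoff T R L t (X₂ t y) * ENNReal.ofReal |z t (X₂ t y)| ≤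
      ENNReal.ofReal (1 / c) * totalMass T R L z g := by
  set S : Set ℝ := {t | (t, X₂ t y) ∈ trapezoid T R L}
  have hclosed : IsClosed S := (isClosed_trapezoid T R L).preimage
    (continuous_id.prodMk (h₂.cont.comp (continuous_id.prodMk continuous_const)))
  have hsub : S ⊆ Icc 0 T := fun t ht => ⟨ht.1, ht.2.1⟩
  have hzero : ∀ t ∉ S, cutoff T R L t (X₂ t y) = 0 := fun t ht => cutoff_of_notMem ht
  rcases S.eq_empty_or_nonempty with hS | hS
  · simp [hS ▸ hzero]
  have hcompact : IsCompact S := isCompact_Icc.of_isClosed_subset hclosed hsub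
  have hlast : sSup S ∈ S := hcompact.sSup_mem hS
  have hT := (hsub hlast).2
  refine le_trans ?_ (hz.lintegral_along_transversal_le h hc hgap hT (ξ := fun t => X₂ t y)
    (fun t ht => (h₂.hasDerivWithinAt y t ⟨ht.1, ht.2.trans hT⟩).mono (Icc_subset_Icc le_rfl hT))
    (fun t ht => h₂.mem_trapezoid_of_le ht.1 ht.2 hlast))
  rw [← lintegral_indicator measurableSet_Icc, ← lintegral_indicator measurableSet_Icc]
  refine lintegral_mono fun t => ?_
  by_cases ht : t ∈ S
  · rw [indicator_of_mem (hsub ht), cutoff_of_mem ht, one_mul,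
      indicator_of_mem (show t ∈ Icc 0 (sSup S) from
        ⟨(hsub ht).1, le_csSup hcompact.bddAbove ht⟩)]
  · simp [indicator, hzero t ht]

lemma IsTransported.lintegral_mul_slice_le (h₂ : IsFlow T L K₂ a₂ ax₂ X₂ J₂)
    (hz₂ : IsTransported T R L X₂ J₂ z₂ g₂) {t : ℝ} (ht : t ∈ Icc (0 : ℝ) T) :
    ∫⁻ x, cutoff T R L t x * ENNReal.ofReal (|z t x| * |z₂ t x|) ≤
      ∫⁻ y, lagrangianMass T R L X₂ J₂ z₂ g₂ y *
        (cutoff T R L t (X₂ t y) * ENNReal.ofReal |z t (X₂ t y)|) := by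
  rw [h₂.lintegral_eq_lintegral_jacobian_mul ht]
  refine lintegral_mono fun y => ?_
  by_cases hmem : (t, X₂ t y) ∈ trapezoid T R L
  · simp only
    rw [cutoff_of_mem hmem, one_mul, one_mul]
    refine le_trans (le_of_eq ?_) (mul_le_mul_left (hz₂.le_lagrangianMass h₂ ht hmem) _)
    rw [← ENNReal.ofReal_mul (h₂.jacobian_pos _ _).le,
      ← ENNReal.ofReal_mul (mul_nonneg (abs_nonneg _) (h₂.jacobian_pos _ _).le)]
    congr 1; ring
  · simp [cutoff_of_notMem hmem]

theorem IsTransported.lintegral_mul_le (h : IsFlow T L K a ax X J)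
    (hz : IsTransported T R L X J z g) (h₂ : IsFlow T L K₂ a₂ ax₂ X₂ J₂)
    (hz₂ : IsTransported T R L X₂ J₂ z₂ g₂) (hc : 0 < c) (hgap : SpeedGap T R L c a a₂) :
    ∫⁻ t in Icc 0 T, ∫⁻ x, cutoff T R L t x * ENNReal.ofReal (|z t x| * |z₂ t x|) ≤
      ENNReal.ofReal (1 / c) * totalMass T R L z g * totalMass T R L z₂ g₂ := by
  have hmeas : Measurable (fun p : ℝ × ℝ => cutoff T R L p.1 (X₂ p.1 p.2) *
      ENNReal.ofReal |z p.1 (X₂ p.1 p.2)|) :=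
    ((measurable_cutoff T R L).comp h₂.measurable_graph).mul
      (hz.cont.measurable.comp h₂.measurable_graph).norm.ennreal_ofReal
  have hmeas_mass := measurable_lagrangianMass h₂ hz₂
  calc ∫⁻ t in Icc 0 T, ∫⁻ x, cutoff T R L t x * ENNReal.ofReal (|z t x| * |z₂ t x|)
      ≤ ∫⁻ t in Icc 0 T, ∫⁻ y, lagrangianMass T R L X₂ J₂ z₂ g₂ y *
          (cutoff T R L t (X₂ t y) * ENNReal.ofReal |z t (X₂ t y)|) :=
        setLIntegral_mono' measurableSet_Icc fun t ht => hz₂.lintegral_mul_slice_le h₂ ht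
    _ = ∫⁻ y, ∫⁻ t in Icc 0 T, lagrangianMass T R L X₂ J₂ z₂ g₂ y *
          (cutoff T R L t (X₂ t y) * ENNReal.ofReal |z t (X₂ t y)|) :=
        lintegral_lintegral_swap ((hmeas_mass.comp measurable_snd).mul hmeas).aemeasurable
    _ ≤ ∫⁻ y, lagrangianMass T R L X₂ J₂ z₂ g₂ y *
          (ENNReal.ofReal (1 / c) * totalMass T R L z g) := by
        refine lintegral_mono fun y => ?_
        have hmeas_y :
            Measurable fun t => cutoff T R L t (X₂ t y) * ENNReal.ofReal |z t (X₂ t y)| :=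
          hmeas.comp measurable_prodMk_right
        rw [lintegral_const_mul _ hmeas_y]
        gcongr
        exact hz.lintegral_along_flow_le h h₂ hc hgap y
    _ = _ := by
        rw [lintegral_mul_const _ hmeas_mass, lintegral_lagrangianMass h₂ hz₂, mul_comm]

end TwoFlows

end Interaction

/-! ### Vectors close to a coordinate axis -/

section OffAxis

variable {n : ℕ}

/-- The `ℓ¹`-distance from `u` to the `m`-th coordinate axis. -/
def offAxis (u : V n) (m : Fin n) : ℝ := ∑ j ∈ {m}ᶜ, |u j|

/-- The transversal products `∑_{j ≠ k} (|w_j| + |u_j|) |w_k|`, in which each summand pairs waves of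
two different families. -/
def transversalProduct (u w : V n) : ℝ := ∑ k, (offAxis w k + offAxis u k) * |w k|

/-- The transversal self-products `∑_{j ≠ k} |u_j| |u_k|`. -/
def transversalSquare (u : V n) : ℝ := ∑ k, offAxis u k * |u k|

/-- The resonant products `∑_i |u_i|^{a+1} |w_i|`: the waves of one family acting on themselves
through the order `a` degeneracy of the eigenvalue. -/
def resonantProduct (a : ℕ) (u w : V n) : ℝ := ∑ i, |u i| ^ (a + 1) * |w i|

lemma offAxis_nonneg (u : V n) (m : Fin n) : 0 ≤ offAxis u m :=
  Finset.sum_nonneg fun _ _ => abs_nonneg _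

lemma transversalProduct_nonneg (u w : V n) : 0 ≤ transversalProduct u w :=
  Finset.sum_nonneg fun k _ =>
    mul_nonneg (add_nonneg (offAxis_nonneg w k) (offAxis_nonneg u k)) (abs_nonneg _)

lemma transversalSquare_nonneg (u : V n) : 0 ≤ transversalSquare u :=
  Finset.sum_nonneg fun k _ => mul_nonneg (offAxis_nonneg u k) (abs_nonneg _)

lemma resonantProduct_nonneg (a : ℕ) (u w : V n) : 0 ≤ resonantProduct a u w :=
  Finset.sum_nonneg fun _ _ => by positivity

lemma abs_le_offAxis (u : V n) {j m : Fin n} (h : j ≠ m) : |u j| ≤ offAxis u m :=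
  Finset.single_le_sum (f := fun j => |u j|) (fun _ _ => abs_nonneg _) (by simpa using h)

lemma continuous_offAxis (m : Fin n) : Continuous fun u : V n => offAxis u m := by
  unfold offAxis; fun_prop

lemma continuous_transversalProduct :
    Continuous fun p : V n × V n => transversalProduct p.1 p.2 := by
  unfold transversalProduct offAxis; fun_prop

lemma continuous_transversalSquare : Continuous fun u : V n => transversalSquare u := by
  unfold transversalSquare offAxis; fun_prop

lemma continuous_resonantProduct (a : ℕ) :
    Continuous fun p : V n × V n => resonantProduct a p.1 p.2 := by
  unfold resonantProduct; fun_prop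

lemma norm_sub_smul_eb_le (u : V n) (m : Fin n) : ‖u - u m • eb m‖ ≤ offAxis u m := by
  rw [pi_norm_le_iff_of_nonneg (offAxis_nonneg _ _)]
  intro j
  rcases eq_or_ne j m with rfl | h
  · simp [eb, offAxis_nonneg]
  · simpa [eb, h] using abs_le_offAxis u h

lemma norm_smul_eb (m : Fin n) (s : ℝ) : ‖s • (eb m : V n)‖ = |s| := by
  simp [eb, norm_smul, Pi.norm_single]

lemma offAxis_mul_le_transversalProduct (u w : V n) (k : Fin n) :
    offAxis u k * |w k| ≤ transversalProduct u w := by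
  have hterm : (offAxis w k + offAxis u k) * |w k| ≤ transversalProduct u w :=
    Finset.single_le_sum (f := fun k => (offAxis w k + offAxis u k) * |w k|)
      (fun k _ => mul_nonneg (add_nonneg (offAxis_nonneg w k) (offAxis_nonneg u k)) (abs_nonneg _))
      (Finset.mem_univ k)
  nlinarith [mul_nonneg (offAxis_nonneg w k) (abs_nonneg (w k))]

lemma abs_mul_abs_le_transversalProduct (u w : V n) {j k : Fin n} (h : j ≠ k) :
    |w j| * |w k| ≤ transversalProduct u w := by
  have hterm : (offAxis w k + offAxis u k) * |w k| ≤ transversalProduct u w :=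
    Finset.single_le_sum (f := fun k => (offAxis w k + offAxis u k) * |w k|)
      (fun k _ => mul_nonneg (add_nonneg (offAxis_nonneg w k) (offAxis_nonneg u k)) (abs_nonneg _))
      (Finset.mem_univ k)
  refine le_trans (mul_le_mul_of_nonneg_right ?_ (abs_nonneg _)) hterm
  linarith [abs_le_offAxis w h, offAxis_nonneg u k]

lemma exists_norm_mul_offAxis_le [Nonempty (Fin n)] (u : V n) :
    ∃ m, ‖u‖ * offAxis u m ≤ transversalSquare u := by
  obtain ⟨m, hm⟩ := Finite.exists_max fun j => ‖u j‖
  have hnorm : ‖u‖ = |u m| := le_antisymm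
    ((pi_norm_le_iff_of_nonneg (norm_nonneg _)).2 hm) (norm_le_pi_norm u m)
  refine ⟨m, ?_⟩
  rw [hnorm, mul_comm]
  exact Finset.single_le_sum (f := fun k => offAxis u k * |u k|)
    (fun k _ => mul_nonneg (offAxis_nonneg u k) (abs_nonneg _)) (Finset.mem_univ m)

end OffAxis

section EuclideanNorm

variable {n : ℕ}

lemma eunorm_nonneg (v : V n) : 0 ≤ eunorm v := Real.sqrt_nonneg _

lemma norm_le_eunorm (v : V n) : ‖v‖ ≤ eunorm v := by
  rw [pi_norm_le_iff_of_nonneg (eunorm_nonneg v)]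
  intro i
  refine Real.le_sqrt_of_sq_le ?_
  rw [Real.norm_eq_abs, sq_abs]
  exact Finset.single_le_sum (f := fun i => v i ^ 2) (fun i _ => sq_nonneg _) (Finset.mem_univ i)

lemma eunorm_le_card_mul_norm (v : V n) : eunorm v ≤ n * ‖v‖ := by
  rw [eunorm, Real.sqrt_le_left (by positivity)]
  calc ∑ i, v i ^ 2 ≤ ∑ _i : Fin n, ‖v‖ ^ 2 := Finset.sum_le_sum fun i _ => by
        rw [← sq_abs]; gcongr; exact norm_le_pi_norm v i
    _ = n * ‖v‖ ^ 2 := by simp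
    _ ≤ n ^ 2 * ‖v‖ ^ 2 := by
        gcongr
        exact_mod_cast Nat.le_self_pow two_ne_zero n
    _ = (n * ‖v‖) ^ 2 := by ring

lemma continuous_eunorm : Continuous (eunorm : V n → ℝ) := by
  unfold eunorm; fun_prop

end EuclideanNorm

/-! ### Uniform and Taylor bounds -/

section Bounds

lemma exists_uniform_mul_bound {ι α : Type*} [Finite ι] {P : α → Prop} {f b : ι → α → ℝ}
    (hb : ∀ i x, 0 ≤ b i x) (h : ∀ i, ∃ C, ∀ x, P x → f i x ≤ C * b i x) :
    ∃ C, 0 ≤ C ∧ ∀ i x, P x → f i x ≤ C * b i x := by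
  choose c hc using h
  obtain ⟨M, hM⟩ := (Set.finite_range c).bddAbove
  exact ⟨max M 0, le_max_right _ _, fun i x hx => (hc i x hx).trans
    (mul_le_mul_of_nonneg_right ((hM ⟨i, rfl⟩).trans (le_max_left _ _)) (hb i x))⟩

variable {E F : Type*} [NormedAddCommGroup E] [NormedAddCommGroup F]

lemma exists_norm_le_of_continuous [ProperSpace E] {f : E → F} (hf : Continuous f) (ρ : ℝ) :
    ∃ C, 0 ≤ C ∧ ∀ u, ‖u‖ ≤ ρ → ‖f u‖ ≤ C := by
  obtain ⟨C, hC⟩ := (isCompact_closedBall (0 : E) ρ).exists_bound_of_continuousOn hf.continuousOn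
  exact ⟨max C 0, le_max_right _ _, fun u hu => (hC u (by simpa using hu)).trans (le_max_left _ _)⟩

variable [NormedSpace ℝ E] [NormedSpace ℝ F]

lemma exists_lipschitz_closedBall [ProperSpace E] {f : E → F} {k : WithTop ℕ∞}
    (hf : ContDiff ℝ k f) (hk : k ≠ 0) (ρ : ℝ) :
    ∃ C, 0 ≤ C ∧ ∀ u v, ‖u‖ ≤ ρ → ‖v‖ ≤ ρ → ‖f u - f v‖ ≤ C * ‖u - v‖ := by
  obtain ⟨C, hC⟩ := hf.contDiffOn.exists_lipschitzOnWith hk (convex_closedBall (0 : E) ρ)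
    (isCompact_closedBall 0 ρ)
  exact ⟨C, C.coe_nonneg, fun u v hu hv => hC.norm_sub_le (by simpa using hu) (by simpa using hv)⟩

lemma exists_taylor_bound {φ : ℝ → ℝ} (hφ : ContDiff ℝ (⊤ : ℕ∞) φ) {b : ℕ}
    (hb : ∀ k < b, iteratedDeriv k φ 0 = 0) (κ : ℝ) :
    ∃ C, 0 ≤ C ∧ ∀ s, |s| ≤ κ →
      |φ s - iteratedDeriv b φ 0 / (b.factorial : ℝ) * s ^ b| ≤ C * |s| ^ (b + 1) := by
  obtain ⟨C, hC0, hC⟩ := exists_norm_le_of_continuous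
    (hφ.continuous_iteratedDeriv (b + 1) (mod_cast le_top)) κ
  refine ⟨C / ((b + 1).factorial : ℝ), by positivity, fun s hs => ?_⟩
  rcases eq_or_ne s 0 with rfl | hs0
  · rcases b with _ | b
    · simp
    · simpa using hb 0 (Nat.succ_pos b)
  obtain ⟨t, ht, hrem⟩ := taylor_mean_remainder_lagrange_iteratedDeriv (n := b) hs0.symm
    (hφ.contDiffOn.of_le (mod_cast le_top))
  have htaylor : taylorWithinEval φ b (uIcc 0 s) 0 s =
      iteratedDeriv b φ 0 / (b.factorial : ℝ) * s ^ b := by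
    have hderiv (k : ℕ) : iteratedDerivWithin k φ (uIcc 0 s) 0 = iteratedDeriv k φ 0 :=
      iteratedDerivWithin_eq_iteratedDeriv (uniqueDiffOn_uIcc hs0.symm)
        (hφ.contDiffAt.of_le (mod_cast le_top)) left_mem_uIcc
    simp only [taylor_within_apply, hderiv, sub_zero, smul_eq_mul]
    rw [Finset.sum_range_succ, Finset.sum_eq_zero fun k hk => by
      rw [hb k (Finset.mem_range.1 hk), mul_zero]]
    ring
  have ht' : |t| ≤ κ := by
    have ht0 : t ∈ uIcc 0 s := Ioo_subset_Icc_self ht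
    exact le_trans (by simpa using abs_sub_left_of_mem_uIcc ht0) hs
  rw [← htaylor, hrem, sub_zero, abs_div, abs_mul, abs_pow,
    abs_of_pos (by positivity : (0 : ℝ) < ((b + 1).factorial : ℝ)), div_mul_eq_mul_div]
  gcongr
  exact hC t ht'

lemma exists_abs_le_pow_of_iteratedDeriv_eq_zero {φ : ℝ → ℝ} (hφ : ContDiff ℝ (⊤ : ℕ∞) φ) {b : ℕ}
    (hb : ∀ k < b, iteratedDeriv k φ 0 = 0) (κ : ℝ) :
    ∃ C, 0 ≤ C ∧ ∀ s, |s| ≤ κ → |φ s| ≤ C * |s| ^ b := by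
  obtain ⟨C, hC0, hC⟩ := exists_taylor_bound hφ hb κ
  set d := iteratedDeriv b φ 0 / (b.factorial : ℝ)
  refine ⟨|d| + C * |κ|, by positivity, fun s hs => ?_⟩
  calc |φ s| ≤ |d * s ^ b| + |φ s - d * s ^ b| := by
        simpa using abs_add_le (d * s ^ b) (φ s - d * s ^ b)
    _ ≤ |d| * |s| ^ b + C * |s| ^ (b + 1) := by
        rw [abs_mul, abs_pow]
        exact add_le_add_right (hC s hs) _
    _ = (|d| + C * |s|) * |s| ^ b := by ring
    _ ≤ (|d| + C * |κ|) * |s| ^ b := mul_le_mul_of_nonneg_right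
        (add_le_add_right (mul_le_mul_of_nonneg_left (hs.trans (le_abs_self κ)) hC0) _)
        (by positivity)

end Bounds

section AxisBounds

variable {n : ℕ} {E : Type*} [NormedAddCommGroup E] [NormedSpace ℝ E] {f : V n → E} {κ : ℝ}

lemma hasDerivAt_comp_smul_eb (hf : Differentiable ℝ f) (m : Fin n) (s : ℝ) :
    HasDerivAt (fun s : ℝ => f (s • eb m)) (fderiv ℝ f (s • eb m) (eb m)) s := by
  have haxis : HasDerivAt (fun s : ℝ => s • (eb m : V n)) (eb m) s := by
    simpa using (hasDerivAt_id s).smul_const (eb m : V n)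
  exact (hf (s • eb m)).hasFDerivAt.comp_hasDerivAt s haxis

lemma fderiv_smul_eb_eq_zero (hf : Differentiable ℝ f) {m : Fin n}
    (h0 : ∀ s, |s| ≤ κ → f (s • eb m) = 0) {s : ℝ} (hs : |s| < κ) :
    fderiv ℝ f (s • eb m) (eb m) = 0 := by
  have hzero : (fun s : ℝ => f (s • eb m)) =ᶠ[𝓝 s] fun _ => 0 := by
    filter_upwards [(isOpen_lt continuous_abs continuous_const).mem_nhds hs] with s hs
    exact h0 s (le_of_lt hs)
  exact (hzero.hasDerivAt_iff.1 (hasDerivAt_comp_smul_eb hf m s)).unique (hasDerivAt_const _ _)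

lemma exists_norm_le_offAxis {k : WithTop ℕ∞} (hf : ContDiff ℝ k f) (hk : k ≠ 0) {m : Fin n}
    (h0 : ∀ s, |s| ≤ κ → f (s • eb m) = 0) :
    ∃ C, 0 ≤ C ∧ ∀ u, ‖u‖ ≤ κ → ‖f u‖ ≤ C * offAxis u m := by
  obtain ⟨C, hC0, hC⟩ := exists_lipschitz_closedBall hf hk κ
  refine ⟨C, hC0, fun u hu => ?_⟩
  have hum : |u m| ≤ κ := (norm_le_pi_norm u m).trans hu
  have hlip := hC u (u m • eb m) hu (by rwa [norm_smul_eb])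
  rw [h0 _ hum, sub_zero] at hlip
  exact hlip.trans (mul_le_mul_of_nonneg_left (norm_sub_smul_eb_le u m) hC0)

/- All first derivatives of `f` vanish at the origin, so `f` is Lipschitz with constant `O(‖u‖)` on
the ball of radius `‖u‖`; compare `u` with its projection to an axis. -/
lemma exists_norm_le_norm_mul_offAxis (hf : ContDiff ℝ (⊤ : ℕ∞) f) (hκ : 0 < κ)
    (h0 : ∀ (m : Fin n) s, |s| ≤ κ → f (s • eb m) = 0) :
    ∃ C, 0 ≤ C ∧ ∀ u, ‖u‖ ≤ κ → ∀ m, ‖f u‖ ≤ C * ‖u‖ * offAxis u m := by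
  have hd : Differentiable ℝ f := hf.differentiable (by simp)
  obtain ⟨C, hC0, hC⟩ := exists_lipschitz_closedBall (contDiff_infty_iff_fderiv.1 hf).2 (by simp) κ
  have hfderiv : fderiv ℝ f 0 = 0 := by
    refine ContinuousLinearMap.coe_injective ((Pi.basisFun ℝ (Fin n)).ext fun m => ?_)
    simpa [eb] using fderiv_smul_eb_eq_zero hd (h0 m) (s := 0) (by simpa using hκ)
  refine ⟨C, hC0, fun u hu m => ?_⟩
  have hum : |u m| ≤ ‖u‖ := norm_le_pi_norm u m
  have hmvt := Convex.norm_image_sub_le_of_norm_fderiv_le (𝕜 := ℝ) (C := C * ‖u‖)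
    (s := Metric.closedBall (0 : V n) ‖u‖) (x := u m • eb m) (y := u) (fun x _ => hd x)
    (fun x hx => by
      have hx' : ‖x‖ ≤ ‖u‖ := by simpa using hx
      have hgrad := hC x 0 (hx'.trans hu) (by simpa using hκ.le)
      rw [hfderiv, sub_zero, sub_zero] at hgrad
      exact hgrad.trans (mul_le_mul_of_nonneg_left hx' hC0))
    (convex_closedBall _ _) (by simpa [norm_smul_eb] using hum) (by simp)
  rw [h0 m _ (hum.trans hu), sub_zero] at hmvt
  exact hmvt.trans (mul_le_mul_of_nonneg_left (norm_sub_smul_eb_le u m) (by positivity))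

end AxisBounds

/-! ### Structural estimates for the coefficients -/

section Coefficients

variable {n : ℕ}

/-- The components `w_k = l_k(u) · p` of a vector `p` along the left eigenvectors at `u`. -/
def leftComponents (l : Fin n → V n → V n) (u p : V n) : V n := fun k => l k u ⬝ᵥ p

/-- The system, read along the `i`-th characteristic: `p` stands for `u_x` and `q` for the
derivative of `u` in the direction `∂_t + λ_i ∂_x`. -/
def CharRelation (lam : Fin n → V n → ℝ) (l : Fin n → V n → V n) (B : V n → V n) (i : Fin n)
    (u p q : V n) : Prop :=
  ∀ k, l k u ⬝ᵥ q = l k u ⬝ᵥ B u + (lam i u - lam k u) * (l k u ⬝ᵥ p)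

/-- A system in normalized coordinates with coefficients cut off to smooth functions on `ℝⁿ`. The
algebraic normalizations hold in the ball of radius `κ`; `a` is a lower bound for the orders of
degeneracy `α_i`. -/
structure NormalForm (n a : ℕ) where
  lam : Fin n → V n → ℝ
  l : Fin n → V n → V n
  r : Fin n → V n → V n
  B : V n → V n
  κ : ℝ
  L : ℝ
  κ_pos : 0 < κ
  contDiff_lam : ∀ i, ContDiff ℝ (⊤ : ℕ∞) (lam i)
  contDiff_l : ∀ i, ContDiff ℝ (⊤ : ℕ∞) (l i)
  contDiff_r : ∀ i, ContDiff ℝ (⊤ : ℕ∞) (r i)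
  contDiff_B : ContDiff ℝ (⊤ : ℕ∞) B
  dual : ∀ u, ‖u‖ ≤ κ → ∀ i j, l i u ⬝ᵥ r j u = if i = j then 1 else 0
  r_axis : ∀ i s, |s| ≤ κ → r i (s • eb i) = eb i
  B_axis : ∀ m s, |s| ≤ 2 * κ → B (s • eb m) = 0
  lam_axis : ∀ i k, 1 ≤ k → k ≤ a → iteratedDeriv k (fun s : ℝ => lam i (s • eb i)) 0 = 0
  strictHyp : ∀ i j, i < j → ∀ u, ‖u‖ ≤ κ → lam i u < lam j u
  abs_lam_le : ∀ i u, |lam i u| ≤ L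

/-- Coefficients of a system together with the quantitative estimates on which the analysis of
small solutions rests. With `w = leftComponents l u u_x`, the fields `state_source_le` and
`wave_source_le` bound the source terms in the conservation-law form of the equations for `u_i` and
`w_i`, and `variation_le` bounds the derivative of `u_i` along the `i`-th characteristic. -/
structure QuantitativeSystem (n a : ℕ) where
  lam : Fin n → V n → ℝ
  l : Fin n → V n → V n
  B : V n → V n
  κ : ℝ
  C : ℝ
  c : ℝ
  L : ℝ
  d : Fin n → ℝ
  κ_pos : 0 < κ
  one_le_C : 1 ≤ C
  c_pos : 0 < c
  contDiff_lam : ∀ i, ContDiff ℝ 1 (lam i)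
  contDiff_l : ∀ i, ContDiff ℝ 1 (l i)
  contDiff_B : ContDiff ℝ 1 B
  abs_lam_le : ∀ i u, |lam i u| ≤ L
  gap : ∀ i j, i < j → ∀ u, ‖u‖ ≤ κ → c ≤ lam j u - lam i u
  abs_leftComponents_le : ∀ u, ‖u‖ ≤ κ → ∀ k p, |l k u ⬝ᵥ p| ≤ C * ‖p‖
  state_source_le : ∀ i u p q, ‖u‖ ≤ κ → CharRelation lam l B i u p q →
    |q i + fderiv ℝ (lam i) u p * u i| ≤ C * (transversalProduct u (leftComponents l u p) +
      transversalSquare u + resonantProduct a u (leftComponents l u p))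
  wave_source_le : ∀ i u p q, ‖u‖ ≤ κ → CharRelation lam l B i u p q →
    |fderiv ℝ (l i) u q ⬝ᵥ p - fderiv ℝ (l i) u p ⬝ᵥ q + fderiv ℝ (fun v => l i v ⬝ᵥ B v) u p| ≤
      C * transversalProduct u (leftComponents l u p)
  variation_le : ∀ i u p q, ‖u‖ ≤ κ → CharRelation lam l B i u p q →
    |q i| ≤ C * ‖u‖ * (offAxis u i + offAxis (leftComponents l u p) i)
  lam_taylor : ∀ i u, ‖u‖ ≤ κ →
    |lam i u - lam i 0 - d i * u i ^ (a + 1)| ≤ C * (|u i| ^ (a + 2) + offAxis u i)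

lemma abs_sum_le_card_mul {f : Fin n → ℝ} {M : ℝ} (h : ∀ k, |f k| ≤ M) : |∑ k, f k| ≤ n * M := by
  refine (Finset.abs_sum_le_sum_abs _ _).trans ((Finset.sum_le_sum fun k _ => h k).trans ?_)
  simp

lemma contDiff_dotProduct {E : Type*} [NormedAddCommGroup E] [NormedSpace ℝ E] {k : WithTop ℕ∞}
    {f g : E → V n} (hf : ContDiff ℝ k f) (hg : ContDiff ℝ k g) :
    ContDiff ℝ k fun u => f u ⬝ᵥ g u := by
  simp only [dotProduct]
  exact ContDiff.sum fun i _ => (contDiff_pi.1 hf i).mul (contDiff_pi.1 hg i)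

lemma sum_dotProduct_smul_of_dual {l r : Fin n → V n}
    (h : ∀ i j, l i ⬝ᵥ r j = if i = j then 1 else 0) (v : V n) : ∑ k, (l k ⬝ᵥ v) • r k = v := by
  have hlr : Matrix.of l * (Matrix.of r)ᵀ = 1 := by
    ext i j
    rw [Matrix.mul_apply, Matrix.one_apply, ← h i j]
    rfl
  calc ∑ k, (l k ⬝ᵥ v) • r k = (Matrix.of r)ᵀ *ᵥ (Matrix.of l *ᵥ v) := by
        ext j
        simp only [Finset.sum_apply, Pi.smul_apply, smul_eq_mul, Matrix.mulVec, dotProduct,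
          Matrix.transpose_apply, Matrix.of_apply]
        exact Finset.sum_congr rfl fun k _ => mul_comm _ _
    _ = v := by rw [Matrix.mulVec_mulVec, mul_eq_one_comm.1 hlr, Matrix.one_mulVec]

end Coefficients

namespace NormalForm

variable {n a : ℕ} (N : NormalForm n a)

/-- The coefficient of `w_k` in the equation of `u_i` in conservation-law form. -/
def stateCoeff (i k : Fin n) (u : V n) : ℝ :=
  (N.lam i u - N.lam k u) * N.r k u i + fderiv ℝ (N.lam i) u (N.r k u) * u i

/-- The coefficient of `w_m` in the equation of `w_i` in conservation-law form. -/
def waveCoeff (i m : Fin n) (u : V n) : ℝ :=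
  fderiv ℝ (N.l i) u (N.B u) ⬝ᵥ N.r m u - fderiv ℝ (N.l i) u (N.r m u) ⬝ᵥ N.B u +
    fderiv ℝ (fun v => N.l i v ⬝ᵥ N.B v) u (N.r m u)

/-- The coefficient of `w_k w_m` in the equation of `w_i` in conservation-law form. -/
def interactionCoeff (i k m : Fin n) (u : V n) : ℝ :=
  (N.lam i u - N.lam k u) *
    (fderiv ℝ (N.l i) u (N.r k u) ⬝ᵥ N.r m u - fderiv ℝ (N.l i) u (N.r m u) ⬝ᵥ N.r k u)

lemma sum_leftComponents_smul {u : V n} (hu : ‖u‖ ≤ N.κ) (p : V n) :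
    ∑ k, leftComponents N.l u p k • N.r k u = p :=
  sum_dotProduct_smul_of_dual (N.dual u hu) p

lemma eq_add_sum_smul {i : Fin n} {u p q : V n} (hu : ‖u‖ ≤ N.κ)
    (h : CharRelation N.lam N.l N.B i u p q) :
    q = N.B u + ∑ k, ((N.lam i u - N.lam k u) * leftComponents N.l u p k) • N.r k u := by
  conv_lhs => rw [← sum_dotProduct_smul_of_dual (N.dual u hu) q]
  simp only [h _, add_smul, Finset.sum_add_distrib, sum_dotProduct_smul_of_dual (N.dual u hu)]
  rfl

lemma contDiff_fderiv_lam (i : Fin n) : ContDiff ℝ (⊤ : ℕ∞) (fderiv ℝ (N.lam i)) :=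
  (contDiff_infty_iff_fderiv.1 (N.contDiff_lam i)).2

lemma contDiff_fderiv_l (i : Fin n) : ContDiff ℝ (⊤ : ℕ∞) (fderiv ℝ (N.l i)) :=
  (contDiff_infty_iff_fderiv.1 (N.contDiff_l i)).2

lemma contDiff_stateCoeff (i k : Fin n) : ContDiff ℝ (⊤ : ℕ∞) (N.stateCoeff i k) :=
  (((N.contDiff_lam i).sub (N.contDiff_lam k)).mul (contDiff_pi.1 (N.contDiff_r k) i)).add
    (((N.contDiff_fderiv_lam i).clm_apply (N.contDiff_r k)).mul (contDiff_apply _ _ i))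

lemma contDiff_waveCoeff (i m : Fin n) : ContDiff ℝ (⊤ : ℕ∞) (N.waveCoeff i m) :=
  ((contDiff_dotProduct ((N.contDiff_fderiv_l i).clm_apply N.contDiff_B) (N.contDiff_r m)).sub
    (contDiff_dotProduct ((N.contDiff_fderiv_l i).clm_apply (N.contDiff_r m)) N.contDiff_B)).add
    ((contDiff_infty_iff_fderiv.1 (contDiff_dotProduct (N.contDiff_l i) N.contDiff_B)).2.clm_apply
      (N.contDiff_r m))

lemma contDiff_interactionCoeff (i k m : Fin n) :
    ContDiff ℝ (⊤ : ℕ∞) (N.interactionCoeff i k m) := by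
  have hterm (k : Fin n) := (N.contDiff_fderiv_l i).clm_apply (N.contDiff_r k)
  exact ((N.contDiff_lam i).sub (N.contDiff_lam k)).mul
    ((contDiff_dotProduct (hterm k) (N.contDiff_r m)).sub
      (contDiff_dotProduct (hterm m) (N.contDiff_r k)))

/-! ### Source terms -/

lemma exists_stateCoeff_self_le (k : Fin n) : ∃ C, ∀ u, ‖u‖ ≤ N.κ →
    |N.stateCoeff k k u| ≤ C * (offAxis u k + |u k| ^ (a + 1)) := by
  have haxis (s : ℝ) := hasDerivAt_comp_smul_eb
    ((N.contDiff_lam k).differentiable (by simp)) k s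
  have hsmooth : ContDiff ℝ (⊤ : ℕ∞) fun s : ℝ => N.lam k (s • eb k) :=
    (N.contDiff_lam k).comp (contDiff_id.smul contDiff_const)
  obtain ⟨C₁, _, hpow⟩ := exists_abs_le_pow_of_iteratedDeriv_eq_zero
    (contDiff_infty_iff_deriv.1 hsmooth).2 (b := a) (fun j hj => by
      rw [← iteratedDeriv_succ']
      exact N.lam_axis k (j + 1) (by omega) (by omega)) N.κ
  have hproj : ContDiff ℝ (⊤ : ℕ∞) fun u : V n => u k • (eb k : V n) :=
    (contDiff_apply _ _ k).smul contDiff_const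
  obtain ⟨C₂, _, hoff⟩ := exists_norm_le_offAxis (κ := N.κ) (m := k)
    (f := fun u => N.stateCoeff k k u - fderiv ℝ (N.lam k) (u k • eb k) (eb k) * u k)
    ((N.contDiff_stateCoeff k k).sub ((((N.contDiff_fderiv_lam k).comp hproj).clm_apply
      contDiff_const).mul (contDiff_apply _ _ k))) (by simp)
    (fun s hs => by rw [stateCoeff, N.r_axis k s hs]; simp [eb])
  refine ⟨max C₁ C₂, fun u hu => ?_⟩
  have hu_pow := hpow (u k) ((norm_le_pi_norm u k).trans hu)
  rw [(haxis (u k)).deriv] at hu_pow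
  calc |N.stateCoeff k k u|
      ≤ ‖N.stateCoeff k k u - fderiv ℝ (N.lam k) (u k • eb k) (eb k) * u k‖ +
          |fderiv ℝ (N.lam k) (u k • eb k) (eb k)| * |u k| := by
        rw [← abs_mul, Real.norm_eq_abs]
        simpa using abs_add_le (N.stateCoeff k k u - fderiv ℝ (N.lam k) (u k • eb k) (eb k) * u k)
          (fderiv ℝ (N.lam k) (u k • eb k) (eb k) * u k)
    _ ≤ C₂ * offAxis u k + C₁ * |u k| ^ a * |u k| :=
        add_le_add (hoff u hu) (mul_le_mul_of_nonneg_right hu_pow (abs_nonneg _))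
    _ = C₂ * offAxis u k + C₁ * |u k| ^ (a + 1) := by ring
    _ ≤ max C₁ C₂ * offAxis u k + max C₁ C₂ * |u k| ^ (a + 1) :=
        add_le_add (mul_le_mul_of_nonneg_right (le_max_right _ _) (offAxis_nonneg u k))
          (mul_le_mul_of_nonneg_right (le_max_left _ _) (by positivity))
    _ = _ := by ring

lemma exists_stateCoeff_le_of_ne {i k : Fin n} (h : i ≠ k) : ∃ C, ∀ u, ‖u‖ ≤ N.κ →
    |N.stateCoeff i k u| ≤ C * offAxis u k := by
  obtain ⟨C, -, hC⟩ := exists_norm_le_offAxis (m := k) (κ := N.κ) (N.contDiff_stateCoeff i k)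
    (by simp) (fun s hs => by rw [stateCoeff, N.r_axis k s hs]; simp [eb, h])
  exact ⟨C, hC⟩

lemma exists_stateCoeff_mul_le : ∃ C, 0 ≤ C ∧ ∀ i k u w, ‖u‖ ≤ N.κ →
    |w k * N.stateCoeff i k u| ≤ C * (transversalProduct u w + resonantProduct a u w) := by
  obtain ⟨C, hC0, hC⟩ := exists_uniform_mul_bound (P := fun u : V n => ‖u‖ ≤ N.κ)
    (f := fun ik : Fin n × Fin n => fun u => |N.stateCoeff ik.1 ik.2 u|)
    (b := fun ik u => offAxis u ik.2 + if ik.1 = ik.2 then |u ik.1| ^ (a + 1) else 0)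
    (fun ik u => add_nonneg (offAxis_nonneg u _) (by split_ifs <;> positivity)) (by
      rintro ⟨i, k⟩
      rcases eq_or_ne i k with rfl | h
      · simpa using N.exists_stateCoeff_self_le i
      · simpa [h] using N.exists_stateCoeff_le_of_ne h)
  refine ⟨C, hC0, fun i k u w hu => ?_⟩
  have hres : (if i = k then |u i| ^ (a + 1) else 0) * |w k| ≤ resonantProduct a u w := by
    split_ifs with h
    · subst h
      exact Finset.single_le_sum (f := fun i => |u i| ^ (a + 1) * |w i|)
        (fun i _ => by positivity) (Finset.mem_univ i)
    · simpa using resonantProduct_nonneg a u w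
  calc |w k * N.stateCoeff i k u|
      ≤ |w k| * (C * (offAxis u k + if i = k then |u i| ^ (a + 1) else 0)) := by
        rw [abs_mul]
        exact mul_le_mul_of_nonneg_left (hC (i, k) u hu) (abs_nonneg _)
    _ = C * (offAxis u k * |w k| + (if i = k then |u i| ^ (a + 1) else 0) * |w k|) := by ring
    _ ≤ _ := by
        gcongr
        exact offAxis_mul_le_transversalProduct u w k

lemma exists_norm_B_le_transversalSquare : ∃ C, 0 ≤ C ∧ ∀ u, ‖u‖ ≤ N.κ →
    ‖N.B u‖ ≤ C * transversalSquare u := by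
  obtain ⟨C, hC0, hC⟩ := exists_norm_le_norm_mul_offAxis N.contDiff_B N.κ_pos
    fun m s hs => N.B_axis m s (by linarith [N.κ_pos])
  refine ⟨C, hC0, fun u hu => ?_⟩
  rcases isEmpty_or_nonempty (Fin n) with _ | _
  · rw [Subsingleton.elim (N.B u) 0, norm_zero]
    exact mul_nonneg hC0 (transversalSquare_nonneg u)
  obtain ⟨m, hm⟩ := exists_norm_mul_offAxis_le u
  calc ‖N.B u‖ ≤ C * (‖u‖ * offAxis u m) := by rw [← mul_assoc]; exact hC u hu m
    _ ≤ _ := mul_le_mul_of_nonneg_left hm hC0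

lemma state_source_eq {i : Fin n} {u p q : V n} (hu : ‖u‖ ≤ N.κ)
    (h : CharRelation N.lam N.l N.B i u p q) :
    q i + fderiv ℝ (N.lam i) u p * u i =
      N.B u i + ∑ k, leftComponents N.l u p k * N.stateCoeff i k u := by
  rw [congrFun (N.eq_add_sum_smul hu h) i]
  conv_lhs => enter [2, 1]; rw [← N.sum_leftComponents_smul hu p]
  simp only [map_sum, map_smul, Pi.add_apply, Finset.sum_apply, Pi.smul_apply, smul_eq_mul,
    Finset.sum_mul, add_assoc, ← Finset.sum_add_distrib, stateCoeff]
  congr 1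
  exact Finset.sum_congr rfl fun k _ => by ring

lemma exists_state_source_le : ∃ C, 0 ≤ C ∧ ∀ i u p q, ‖u‖ ≤ N.κ →
    CharRelation N.lam N.l N.B i u p q →
    |q i + fderiv ℝ (N.lam i) u p * u i| ≤ C * (transversalProduct u (leftComponents N.l u p) +
      transversalSquare u + resonantProduct a u (leftComponents N.l u p)) := by
  obtain ⟨C₁, hC₁, hB⟩ := N.exists_norm_B_le_transversalSquare
  obtain ⟨C₂, hC₂, hcoeff⟩ := N.exists_stateCoeff_mul_le
  refine ⟨C₁ + n * C₂, by positivity, fun i u p q hu h => ?_⟩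
  rw [N.state_source_eq hu h]
  set w := leftComponents N.l u p
  have hT := transversalProduct_nonneg u w
  have hS := transversalSquare_nonneg u
  have hR := resonantProduct_nonneg a u w
  have hnC : 0 ≤ n * C₂ := by positivity
  calc _ ≤ |N.B u i| + |∑ k, w k * N.stateCoeff i k u| := abs_add_le _ _
    _ ≤ C₁ * transversalSquare u +
          n * (C₂ * (transversalProduct u w + resonantProduct a u w)) :=
        add_le_add ((norm_le_pi_norm (N.B u) i).trans (hB u hu))
          (abs_sum_le_card_mul fun k => hcoeff i k u w hu)
    _ ≤ _ := by nlinarith [mul_nonneg hC₁ hT, mul_nonneg hC₁ hR, mul_nonneg hnC hS]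

lemma exists_waveCoeff_mul_le : ∃ C, 0 ≤ C ∧ ∀ i m u w, ‖u‖ ≤ N.κ →
    |w m * N.waveCoeff i m u| ≤ C * transversalProduct u w := by
  obtain ⟨C, hC0, hC⟩ := exists_uniform_mul_bound (P := fun u : V n => ‖u‖ ≤ N.κ)
    (f := fun im : Fin n × Fin n => fun u => |N.waveCoeff im.1 im.2 u|)
    (b := fun im u => offAxis u im.2) (fun im u => offAxis_nonneg u _) (by
      rintro ⟨i, m⟩
      obtain ⟨C, -, hC⟩ := exists_norm_le_offAxis (m := m) (κ := N.κ) (N.contDiff_waveCoeff i m)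
        (by simp) (fun s hs => by
          have hB : fderiv ℝ (fun v => N.l i v ⬝ᵥ N.B v) (s • eb m) (eb m) = 0 :=
            fderiv_smul_eb_eq_zero (κ := 2 * N.κ)
              ((contDiff_dotProduct (N.contDiff_l i) N.contDiff_B).differentiable (by simp))
              (fun s hs => by rw [N.B_axis m s hs, dotProduct_zero]) (by linarith [N.κ_pos])
          simp [waveCoeff, N.r_axis m s hs, N.B_axis m s (by linarith [N.κ_pos]), hB])
      exact ⟨C, hC⟩)
  refine ⟨C, hC0, fun i m u w hu => ?_⟩
  calc |w m * N.waveCoeff i m u| ≤ |w m| * (C * offAxis u m) := by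
        rw [abs_mul]
        exact mul_le_mul_of_nonneg_left (hC (i, m) u hu) (abs_nonneg _)
    _ = C * (offAxis u m * |w m|) := by ring
    _ ≤ _ := mul_le_mul_of_nonneg_left (offAxis_mul_le_transversalProduct u w m) hC0

lemma exists_interactionCoeff_mul_le : ∃ C, 0 ≤ C ∧ ∀ i k m u w, ‖u‖ ≤ N.κ →
    |w k * w m * N.interactionCoeff i k m u| ≤ C * transversalProduct u w := by
  obtain ⟨C, hC0, hC⟩ := exists_uniform_mul_bound (P := fun u : V n => ‖u‖ ≤ N.κ)
    (f := fun ikm : Fin n × Fin n × Fin n => fun u =>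
      |N.interactionCoeff ikm.1 ikm.2.1 ikm.2.2 u|)
    (b := fun _ _ => 1) (fun _ _ => zero_le_one) (fun ikm => by
      obtain ⟨C, -, hC⟩ := exists_norm_le_of_continuous
        (N.contDiff_interactionCoeff ikm.1 ikm.2.1 ikm.2.2).continuous N.κ
      exact ⟨C, fun u hu => by simpa using hC u hu⟩)
  refine ⟨C, hC0, fun i k m u w hu => ?_⟩
  rcases eq_or_ne k m with rfl | hkm
  · simpa [interactionCoeff] using mul_nonneg hC0 (transversalProduct_nonneg u w)
  · rw [abs_mul, abs_mul, mul_comm]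
    exact mul_le_mul (by simpa using hC (i, k, m) u hu)
      (abs_mul_abs_le_transversalProduct u w hkm) (by positivity) hC0

lemma wave_source_eq {i : Fin n} {u p q : V n} (hu : ‖u‖ ≤ N.κ)
    (h : CharRelation N.lam N.l N.B i u p q) :
    fderiv ℝ (N.l i) u q ⬝ᵥ p - fderiv ℝ (N.l i) u p ⬝ᵥ q +
        fderiv ℝ (fun v => N.l i v ⬝ᵥ N.B v) u p =
      ∑ m, leftComponents N.l u p m * N.waveCoeff i m u +
        ∑ k, ∑ m, leftComponents N.l u p k * leftComponents N.l u p m *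
          N.interactionCoeff i k m u := by
  set w := leftComponents N.l u p with hw
  have hq := N.eq_add_sum_smul hu h
  have hp := (N.sum_leftComponents_smul hu p).symm
  rw [← hw] at hq hp
  have hswap : ∑ m, ∑ k, w m * ((N.lam i u - N.lam k u) * w k *
        (fderiv ℝ (N.l i) u (N.r k u) ⬝ᵥ N.r m u)) =
      ∑ k, ∑ m, w k * w m * ((N.lam i u - N.lam k u) *
        (fderiv ℝ (N.l i) u (N.r k u) ⬝ᵥ N.r m u)) := by
    rw [Finset.sum_comm]
    exact Finset.sum_congr rfl fun k _ => Finset.sum_congr rfl fun m _ => by ring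
  have hassoc : ∑ k, ∑ m, (N.lam i u - N.lam k u) * w k *
        (w m * (fderiv ℝ (N.l i) u (N.r m u) ⬝ᵥ N.r k u)) =
      ∑ k, ∑ m, w k * w m * ((N.lam i u - N.lam k u) *
        (fderiv ℝ (N.l i) u (N.r m u) ⬝ᵥ N.r k u)) :=
    Finset.sum_congr rfl fun k _ => Finset.sum_congr rfl fun m _ => by ring
  unfold waveCoeff interactionCoeff
  set b := fun v => N.l i v ⬝ᵥ N.B v
  rw [hq, hp]
  simp only [map_add, map_sum, map_smul, add_dotProduct, dotProduct_add, sum_dotProduct,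
    dotProduct_sum, smul_dotProduct, dotProduct_smul, smul_eq_mul, Finset.mul_sum, mul_add,
    mul_sub, Finset.sum_add_distrib, Finset.sum_sub_distrib]
  rw [hswap, hassoc]
  ring

lemma exists_wave_source_le : ∃ C, 0 ≤ C ∧ ∀ i u p q, ‖u‖ ≤ N.κ →
    CharRelation N.lam N.l N.B i u p q →
    |fderiv ℝ (N.l i) u q ⬝ᵥ p - fderiv ℝ (N.l i) u p ⬝ᵥ q +
      fderiv ℝ (fun v => N.l i v ⬝ᵥ N.B v) u p| ≤
      C * transversalProduct u (leftComponents N.l u p) := by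
  obtain ⟨C₁, hC₁, hwave⟩ := N.exists_waveCoeff_mul_le
  obtain ⟨C₂, hC₂, hinter⟩ := N.exists_interactionCoeff_mul_le
  refine ⟨n * C₁ + n * (n * C₂), by positivity, fun i u p q hu h => ?_⟩
  rw [N.wave_source_eq hu h]
  set w := leftComponents N.l u p
  calc _ ≤ |∑ m, w m * N.waveCoeff i m u| +
          |∑ k, ∑ m, w k * w m * N.interactionCoeff i k m u| := abs_add_le _ _
    _ ≤ n * (C₁ * transversalProduct u w) + n * (n * (C₂ * transversalProduct u w)) :=
        add_le_add (abs_sum_le_card_mul fun m => hwave i m u w hu)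
          (abs_sum_le_card_mul fun k => abs_sum_le_card_mul fun m => hinter i k m u w hu)
    _ = _ := by ring

lemma variation_eq {i : Fin n} {u p q : V n} (hu : ‖u‖ ≤ N.κ)
    (h : CharRelation N.lam N.l N.B i u p q) :
    q i = N.B u i + ∑ k ∈ {i}ᶜ,
      (N.lam i u - N.lam k u) * N.r k u i * leftComponents N.l u p k := by
  rw [congrFun (N.eq_add_sum_smul hu h) i]
  simp only [Pi.add_apply, Finset.sum_apply, Pi.smul_apply, smul_eq_mul]
  rw [← Finset.sum_subset (Finset.subset_univ {i}ᶜ) fun k _ hk => by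
    rw [show k = i by simpa using hk]; ring]
  exact congrArg _ (Finset.sum_congr rfl fun k _ => by ring)

lemma exists_variation_le : ∃ C, 0 ≤ C ∧ ∀ i u p q, ‖u‖ ≤ N.κ →
    CharRelation N.lam N.l N.B i u p q →
    |q i| ≤ C * ‖u‖ * (offAxis u i + offAxis (leftComponents N.l u p) i) := by
  obtain ⟨C₁, hC₁, hB⟩ := exists_norm_le_norm_mul_offAxis N.contDiff_B N.κ_pos
    fun m s hs => N.B_axis m s (by linarith [N.κ_pos])
  obtain ⟨C₂, hC₂, hcoeff⟩ := exists_uniform_mul_bound (P := fun u : V n => ‖u‖ ≤ N.κ)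
    (f := fun ik : Fin n × Fin n => fun u => |(N.lam ik.1 u - N.lam ik.2 u) * N.r ik.2 u ik.1|)
    (b := fun _ u => ‖u‖) (fun _ _ => norm_nonneg _) (by
      rintro ⟨i, k⟩
      obtain ⟨C, -, hC⟩ := exists_lipschitz_closedBall
        (((N.contDiff_lam i).sub (N.contDiff_lam k)).mul (contDiff_pi.1 (N.contDiff_r k) i))
        (by simp) N.κ
      have hr : N.r k 0 = eb k := by simpa using N.r_axis k 0 (by simpa using N.κ_pos.le)
      have hzero : (N.lam i 0 - N.lam k 0) * N.r k 0 i = 0 := by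
        rcases eq_or_ne i k with rfl | h
        · simp
        · simp [hr, eb, h]
      exact ⟨C, fun u hu => by simpa [hzero] using hC u 0 hu (by simpa using N.κ_pos.le)⟩)
  refine ⟨C₁ + C₂, by positivity, fun i u p q hu h => ?_⟩
  rw [N.variation_eq hu h]
  set w := leftComponents N.l u p
  have hu_off := offAxis_nonneg u i
  have hw_off := offAxis_nonneg w i
  calc _ ≤ |N.B u i| + ∑ k ∈ {i}ᶜ, |(N.lam i u - N.lam k u) * N.r k u i * w k| :=
        (abs_add_le _ _).trans (add_le_add_right (Finset.abs_sum_le_sum_abs _ _) _)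
    _ ≤ C₁ * ‖u‖ * offAxis u i + ∑ k ∈ {i}ᶜ, C₂ * ‖u‖ * |w k| :=
        add_le_add ((norm_le_pi_norm (N.B u) i).trans (hB u hu i))
          (Finset.sum_le_sum fun k _ => by
            rw [abs_mul]
            exact mul_le_mul_of_nonneg_right (hcoeff (i, k) u hu) (abs_nonneg _))
    _ = C₁ * ‖u‖ * offAxis u i + C₂ * ‖u‖ * offAxis w i := by rw [← Finset.mul_sum]; rfl
    _ ≤ C₁ * ‖u‖ * (offAxis u i + offAxis w i) + C₂ * ‖u‖ * (offAxis u i + offAxis w i) := by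
        gcongr <;> linarith
    _ = _ := by ring


/-! ### The quantitative system -/

lemma exists_lam_taylor : ∃ C, 0 ≤ C ∧ ∀ i u, ‖u‖ ≤ N.κ →
    |N.lam i u - N.lam i 0 -
        iteratedDeriv (a + 1) (fun s : ℝ => N.lam i (s • eb i)) 0 / ((a + 1).factorial : ℝ) *
          u i ^ (a + 1)| ≤ C * (|u i| ^ (a + 2) + offAxis u i) := by
  refine exists_uniform_mul_bound (fun i u => add_nonneg (by positivity) (offAxis_nonneg u i))
    fun i => ?_
  have hproj : ContDiff ℝ (⊤ : ℕ∞) fun u : V n => u i • (eb i : V n) :=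
    (contDiff_apply _ _ i).smul contDiff_const
  have hsmooth : ContDiff ℝ (⊤ : ℕ∞) fun s : ℝ => N.lam i (s • eb i) :=
    (N.contDiff_lam i).comp (contDiff_id.smul contDiff_const)
  have hsub (k : ℕ) : iteratedDeriv (k + 1) (fun s : ℝ => N.lam i (s • eb i) - N.lam i 0) 0 =
      iteratedDeriv (k + 1) (fun s : ℝ => N.lam i (s • eb i)) 0 := by
    simp only [iteratedDeriv_succ', deriv_sub_const_fun]
  obtain ⟨C₁, hC₁, htaylor⟩ := exists_taylor_bound (hsmooth.sub (contDiff_const (c := N.lam i 0)))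
    (b := a + 1) (fun k hk => by
      cases k with
      | zero => simp
      | succ k => rw [hsub]; exact N.lam_axis i (k + 1) (by omega) (by omega)) N.κ
  obtain ⟨C₂, hC₂, hoff⟩ := exists_norm_le_offAxis (κ := N.κ) (m := i)
    ((N.contDiff_lam i).sub ((N.contDiff_lam i).comp hproj)) (by simp) (fun s _ => by simp [eb])
  rw [hsub] at htaylor
  refine ⟨C₁ + C₂, fun u hu => ?_⟩
  set d := iteratedDeriv (a + 1) (fun s : ℝ => N.lam i (s • eb i)) 0 / ((a + 1).factorial : ℝ)
  have hoff_nonneg := offAxis_nonneg u i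
  calc |N.lam i u - N.lam i 0 - d * u i ^ (a + 1)|
      = |(N.lam i u - N.lam i (u i • eb i)) +
          (N.lam i (u i • eb i) - N.lam i 0 - d * u i ^ (a + 1))| := by congr 1; ring
    _ ≤ C₂ * offAxis u i + C₁ * |u i| ^ (a + 2) := (abs_add_le _ _).trans
        (add_le_add (hoff u hu) (htaylor (u i) ((norm_le_pi_norm u i).trans hu)))
    _ ≤ (C₁ + C₂) * (|u i| ^ (a + 2) + offAxis u i) := by
        have hpow : 0 ≤ |u i| ^ (a + 2) := by positivity
        nlinarith [mul_nonneg hC₁ hoff_nonneg, mul_nonneg hC₂ hpow]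

lemma exists_gap : ∃ c > 0, ∀ i j, i < j → ∀ u, ‖u‖ ≤ N.κ → c ≤ N.lam j u - N.lam i u := by
  have hpair (ij : Fin n × Fin n) : ∃ c > 0, ij.1 < ij.2 → ∀ u, ‖u‖ ≤ N.κ →
      c ≤ N.lam ij.2 u - N.lam ij.1 u := by
    by_cases hij : ij.1 < ij.2
    · obtain ⟨v, hv, hmin⟩ := (isCompact_closedBall (0 : V n) N.κ).exists_isMinOn
        ⟨0, by simpa using N.κ_pos.le⟩
        ((N.contDiff_lam ij.2).continuous.sub (N.contDiff_lam ij.1).continuous).continuousOn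
      exact ⟨N.lam ij.2 v - N.lam ij.1 v, sub_pos.2 (N.strictHyp _ _ hij v (by simpa using hv)),
        fun _ u hu => hmin (by simpa using hu)⟩
    · exact ⟨1, one_pos, fun h => absurd h hij⟩
  choose c hc_pos hc using hpair
  rcases isEmpty_or_nonempty (Fin n) with _ | _
  · exact ⟨1, one_pos, isEmptyElim⟩
  obtain ⟨m, hm⟩ := Finite.exists_min c
  exact ⟨c m, hc_pos m, fun i j hij u hu => (hm (i, j)).trans (hc (i, j) hij u hu)⟩

lemma exists_abs_leftComponents_le : ∃ C, 0 ≤ C ∧ ∀ u, ‖u‖ ≤ N.κ → ∀ k p,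
    |N.l k u ⬝ᵥ p| ≤ C * ‖p‖ := by
  obtain ⟨C, hC0, hC⟩ := exists_uniform_mul_bound (P := fun u : V n => ‖u‖ ≤ N.κ)
    (f := fun k u => ‖N.l k u‖) (b := fun _ _ => 1) (fun _ _ => zero_le_one) (fun k => by
      obtain ⟨C, -, hC⟩ := exists_norm_le_of_continuous (N.contDiff_l k).continuous N.κ
      exact ⟨C, by simpa using hC⟩)
  refine ⟨n * C, by positivity, fun u hu k p => ?_⟩
  rw [mul_assoc]
  refine abs_sum_le_card_mul fun j => ?_
  rw [abs_mul]
  have hl : ‖N.l k u‖ ≤ C := by simpa using hC k u hu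
  exact mul_le_mul ((norm_le_pi_norm (N.l k u) j).trans hl) (norm_le_pi_norm p j)
    (abs_nonneg _) hC0

theorem exists_quantitativeSystem : ∃ G : QuantitativeSystem n a, G.lam = N.lam ∧ G.l = N.l ∧
    G.B = N.B ∧ G.κ = N.κ ∧ G.d = fun i =>
      iteratedDeriv (a + 1) (fun s : ℝ => N.lam i (s • eb i)) 0 / ((a + 1).factorial : ℝ) := by
  obtain ⟨C₁, hC₁, hstate⟩ := N.exists_state_source_le
  obtain ⟨C₂, hC₂, hwave⟩ := N.exists_wave_source_le
  obtain ⟨C₃, hC₃, hvar⟩ := N.exists_variation_le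
  obtain ⟨C₄, hC₄, htaylor⟩ := N.exists_lam_taylor
  obtain ⟨C₅, hC₅, hleft⟩ := N.exists_abs_leftComponents_le
  obtain ⟨c, hc, hgap⟩ := N.exists_gap
  refine ⟨{ lam := N.lam, l := N.l, B := N.B, κ := N.κ, C := 1 + C₁ + C₂ + C₃ + C₄ + C₅, c := c
            L := N.L
            d := _
            κ_pos := N.κ_pos, one_le_C := by linarith, c_pos := hc
            contDiff_lam := fun i => (N.contDiff_lam i).of_le (mod_cast le_top)
            contDiff_l := fun i => (N.contDiff_l i).of_le (mod_cast le_top)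
            contDiff_B := N.contDiff_B.of_le (mod_cast le_top)
            abs_lam_le := N.abs_lam_le, gap := hgap
            abs_leftComponents_le := fun u hu k p => (hleft u hu k p).trans ?_
            state_source_le := fun i u p q hu h => (hstate i u p q hu h).trans ?_
            wave_source_le := fun i u p q hu h => (hwave i u p q hu h).trans ?_
            variation_le := fun i u p q hu h => (hvar i u p q hu h).trans ?_
            lam_taylor := fun i u hu => (htaylor i u hu).trans ?_ }, rfl, rfl, rfl, rfl, rfl⟩
  · gcongr
    linarith
  · refine mul_le_mul_of_nonneg_right (by linarith) (add_nonneg (add_nonneg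
      (transversalProduct_nonneg _ _) (transversalSquare_nonneg _)) (resonantProduct_nonneg _ _ _))
  · exact mul_le_mul_of_nonneg_right (by linarith) (transversalProduct_nonneg _ _)
  · exact mul_le_mul_of_nonneg_right (mul_le_mul_of_nonneg_right (by linarith) (norm_nonneg _))
      (add_nonneg (offAxis_nonneg _ _) (offAxis_nonneg _ _))
  · exact mul_le_mul_of_nonneg_right (by linarith)
      (add_nonneg (by positivity) (offAxis_nonneg _ _))

end NormalForm

/-! ### Cutting off the coefficients -/

section Cutoff

variable {n a : ℕ}

lemma axisDeriv_eq_zero {S : HypSys n} (hmin : S.IsMinAlpha a) (i : Fin n) {k : ℕ} (hk : 1 ≤ k)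
    (hka : k ≤ a) : S.axisDeriv i k = 0 := by
  classical
  by_cases hwld : S.WLD i
  · have hconst : (fun s : ℝ => S.lam i (s • eb i)) =ᶠ[𝓝 0] fun _ => S.lam i 0 := by
      filter_upwards [Metric.ball_mem_nhds (0 : ℝ) S.δ_pos] with s hs
      exact hwld s (by simpa using hs)
    rw [HypSys.axisDeriv, hconst.iteratedDeriv_eq, iteratedDeriv_const, if_neg (by omega)]
  · by_contra hne
    have hex : ∃ k, S.axisDeriv i (k + 1) ≠ 0 := ⟨k - 1, by rwa [Nat.sub_add_cancel hk]⟩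
    have horder : S.IsAlphaOf i (Nat.find hex) := by
      refine ⟨fun j hj hjle => ?_, Nat.find_spec hex⟩
      have hlt := Nat.find_min hex (show j - 1 < Nat.find hex by omega)
      rwa [Nat.sub_add_cancel hj, not_not] at hlt
    have hle : Nat.find hex ≤ k - 1 := Nat.find_min' hex (by rwa [Nat.sub_add_cancel hk])
    have := hmin.2 i hwld _ horder
    omega

lemma contDiff_bump_smul {E : Type*} [NormedAddCommGroup E] [NormedSpace ℝ E] {δ : ℝ}
    (φ : ContDiffBump (0 : V n)) (hφ : ∀ u : V n, ‖u‖ ≤ φ.rOut → eunorm u < δ) {f : V n → E}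
    (hf : ContDiffOn ℝ (⊤ : ℕ∞) f {u | eunorm u < δ}) :
    ContDiff ℝ (⊤ : ℕ∞) fun u => φ u • f u := by
  refine contDiff_iff_contDiffAt.2 fun u => ?_
  by_cases hu : eunorm u < δ
  · exact φ.contDiffAt.smul
      (hf.contDiffAt ((isOpen_lt continuous_eunorm continuous_const).mem_nhds hu))
  · have hout : ∀ᶠ v in 𝓝 u, φ.rOut < ‖v‖ :=
      continuous_norm.continuousAt.eventually (lt_mem_nhds (not_le.1 (mt (hφ u) hu)))
    refine (contDiffAt_const (c := (0 : E))).congr_of_eventuallyEq (hout.mono fun v hv => ?_)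
    simp only [φ.zero_of_le_dist (by simpa using hv.le), zero_smul]

lemma exists_cutoffRadius (S : HypSys n) :
    ∃ κ, 0 < κ ∧ 3 * κ < S.δ ∧ ∀ u : V n, ‖u‖ ≤ 3 * κ → eunorm u < S.δ := by
  have hδ := S.δ_pos
  have hκδ : (n + 1 : ℝ) * (4 * (S.δ / (4 * (n + 1)))) = S.δ := by field_simp
  have hκ : 0 < S.δ / (4 * (n + 1)) := by positivity
  exact ⟨_, hκ, by nlinarith [n.cast_nonneg (α := ℝ)],
    fun u hu => by nlinarith [eunorm_le_card_mul_norm u, n.cast_nonneg (α := ℝ)]⟩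

/-- The coefficients of `S` multiplied by a bump function that equals `1` near `u = 0`. -/
theorem exists_normalForm {S : HypSys n} (hnorm : S.Normalized) (hmatch : S.Matching)
    (hmin : S.IsMinAlpha a) : ∃ N : NormalForm n a, ∀ u, ‖u‖ ≤ 2 * N.κ →
      (∀ i, N.lam i u = S.lam i u ∧ N.l i u = S.l i u) ∧ N.B u = S.B u := by
  obtain ⟨κ, hκ, hκδ, hball⟩ := exists_cutoffRadius S
  let φ : ContDiffBump (0 : V n) := ⟨2 * κ, 3 * κ, by positivity, by linarith⟩
  have hone (u : V n) (hu : ‖u‖ ≤ 2 * κ) : φ u = 1 := φ.one_of_mem_closedBall (by simpa using hu)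
  have hone_axis (i : Fin n) (s : ℝ) (hs : |s| ≤ 2 * κ) : φ (s • eb i) = 1 :=
    hone _ (by rwa [norm_smul_eb])
  have haxis (i : Fin n) : (fun s : ℝ => φ (s • eb i) • S.lam i (s • eb i)) =ᶠ[𝓝 0]
      fun s => S.lam i (s • eb i) := by
    filter_upwards [Metric.ball_mem_nhds (0 : ℝ) (show 0 < 2 * κ by positivity)] with s hs
    rw [hone_axis i s (by simpa using (mem_ball_zero_iff.1 hs).le), one_smul]
  have hsmooth (i : Fin n) := contDiff_bump_smul φ hball (S.smooth_lam i)
  have hbounded (i : Fin n) : ∃ L, ∀ u, ‖φ u • S.lam i u‖ ≤ L :=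
    (hsmooth i).continuous.bounded_above_of_compact_support φ.hasCompactSupport.smul_right
  choose L hL using hbounded
  obtain ⟨M, hM⟩ := (Set.finite_range L).bddAbove
  refine ⟨{
      lam := fun i u => φ u • S.lam i u, l := fun i u => φ u • S.l i u
      r := fun i u => φ u • S.r i u, B := fun u => φ u • S.B u, κ := κ, L := M
      κ_pos := hκ
      contDiff_lam := hsmooth
      contDiff_l := fun i => contDiff_bump_smul φ hball (S.smooth_l i)
      contDiff_r := fun i => contDiff_bump_smul φ hball (S.smooth_r i)
      contDiff_B := contDiff_bump_smul φ hball S.smooth_B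
      dual := fun u hu i j => ?_
      r_axis := fun i s hs => ?_
      B_axis := fun m s hs => by rw [hmatch m s (by linarith), smul_zero]
      lam_axis := fun i k hk hka => ?_
      strictHyp := fun i j hij u hu => ?_
      abs_lam_le := fun i u => (hL i u).trans (hM ⟨i, rfl⟩) },
    fun u hu => by simp only [hone u hu, one_smul, and_self, implies_true]⟩
  · rw [hone u (by linarith), one_smul, one_smul]
    exact S.norm_lr u (hball u (by linarith)) i j
  · rw [hone_axis i s (by linarith), one_smul, hnorm i s (by linarith)]
  · rw [(haxis i).iteratedDeriv_eq]
    exact axisDeriv_eq_zero hmin i hk hka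
  · simp only [hone u (by linarith), one_smul]
    exact S.strict_hyp u (hball u (by linarith)) i j hij

theorem exists_quantitativeSystem {S : HypSys n} (hnorm : S.Normalized) (hmatch : S.Matching)
    (hmin : S.IsMinAlpha a) : ∃ G : QuantitativeSystem n a,
      (∀ u, ‖u‖ ≤ 2 * G.κ → (∀ i, G.lam i u = S.lam i u ∧ G.l i u = S.l i u) ∧ G.B u = S.B u) ∧
      ∀ i, G.d i = S.axisDeriv i (a + 1) / ((a + 1).factorial : ℝ) := by
  obtain ⟨N, hN⟩ := exists_normalForm hnorm hmatch hmin
  obtain ⟨G, hlam, hl, hB, hκ, hd⟩ := N.exists_quantitativeSystem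
  refine ⟨G, fun u hu => ?_, fun i => ?_⟩
  · rw [hlam, hl, hB]
    exact hN u (hκ ▸ hu)
  · have haxis : (fun s : ℝ => N.lam i (s • eb i)) =ᶠ[𝓝 0] fun s => S.lam i (s • eb i) := by
      filter_upwards [Metric.ball_mem_nhds (0 : ℝ) (show 0 < 2 * N.κ by linarith [N.κ_pos])]
        with s hs
      exact ((hN _ (by rw [norm_smul_eb]; simpa using (mem_ball_zero_iff.1 hs).le)).1 i).1
    rw [hd, HypSys.axisDeriv, ← haxis.iteratedDeriv_eq]

end Cutoff

/-! ### Solutions and their characteristic speeds -/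

section ExtendedSolution

variable {n a : ℕ}

/-- The Fréchet derivative on the strip `[0, T] × ℝ` of a function of `(t, x)`, frozen in time
outside `[0, T]`. -/
def stripDeriv (T : ℝ) (v : ℝ → ℝ → V n) (t x : ℝ) : ℝ × ℝ →L[ℝ] V n :=
  fderivWithin ℝ (fun p : ℝ × ℝ => v p.1 p.2) (Icc 0 T ×ˢ univ) (clampTime T t, x)

section StripDeriv

variable {v : ℝ → ℝ → V n} {T : ℝ}

lemma continuous_comp_clampTime {E : Type*} [TopologicalSpace E] {g : ℝ × ℝ → E} (hT : 0 ≤ T)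
    (hg : ContinuousOn g (Icc 0 T ×ˢ univ)) :
    Continuous fun p : ℝ × ℝ => g (clampTime T p.1, p.2) :=
  hg.comp_continuous (((continuous_clampTime T).comp continuous_fst).prodMk continuous_snd)
    fun p => ⟨clampTime_mem hT p.1, mem_univ p.2⟩

lemma hasFDerivWithinAt_stripDeriv
    (hv : ContDiffOn ℝ 1 (fun p : ℝ × ℝ => v p.1 p.2) (Icc 0 T ×ˢ univ)) {t : ℝ}
    (ht : t ∈ Icc (0 : ℝ) T) (x : ℝ) : HasFDerivWithinAt (fun p : ℝ × ℝ => v p.1 p.2)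
      (stripDeriv T v t x) (Icc 0 T ×ˢ univ) (t, x) := by
  rw [stripDeriv, clampTime_of_mem ht]
  exact (hv.differentiableOn one_ne_zero _ ⟨ht, mem_univ x⟩).hasFDerivWithinAt

lemma continuous_stripDeriv (hT : 0 < T)
    (hv : ContDiffOn ℝ 1 (fun p : ℝ × ℝ => v p.1 p.2) (Icc 0 T ×ˢ univ)) :
    Continuous fun p : ℝ × ℝ => stripDeriv T v p.1 p.2 :=
  continuous_comp_clampTime hT.le
    (hv.continuousOn_fderivWithin ((uniqueDiffOn_Icc hT).prod uniqueDiffOn_univ) le_rfl)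

lemma hasDerivAt_of_stripDeriv
    (hv : ContDiffOn ℝ 1 (fun p : ℝ × ℝ => v p.1 p.2) (Icc 0 T ×ˢ univ)) {t : ℝ}
    (ht : t ∈ Icc (0 : ℝ) T) (x : ℝ) : HasDerivAt (v t) (stripDeriv T v t x (0, 1)) x := by
  have hline : HasDerivWithinAt (fun y : ℝ => (t, y)) ((0 : ℝ), (1 : ℝ)) univ x :=
    ((hasDerivAt_const x t).prodMk (hasDerivAt_id x)).hasDerivWithinAt
  exact hasDerivWithinAt_univ.1 ((hasFDerivWithinAt_stripDeriv hv ht x).comp_hasDerivWithinAt x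
    hline fun y _ => ⟨ht, mem_univ y⟩)

lemma hasDerivWithinAt_curve_of_stripDeriv
    (hv : ContDiffOn ℝ 1 (fun p : ℝ × ℝ => v p.1 p.2) (Icc 0 T ×ˢ univ)) {s : Set ℝ}
    (hs : s ⊆ Icc 0 T) {ξ : ℝ → ℝ} {w t : ℝ} (ht : t ∈ s) (hξ : HasDerivWithinAt ξ w s t) :
    HasDerivWithinAt (fun r => v r (ξ r))
      (stripDeriv T v t (ξ t) (1, 0) + w • stripDeriv T v t (ξ t) (0, 1)) s t := by
  have hcurve : HasDerivWithinAt (fun r : ℝ => (r, ξ r)) ((1 : ℝ), w) s t :=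
    (hasDerivWithinAt_id t s).prodMk hξ
  have hcomp := HasFDerivWithinAt.comp_hasDerivWithinAt (f := fun r : ℝ => (r, ξ r)) t
    (hasFDerivWithinAt_stripDeriv hv (hs ht) (ξ t)) hcurve fun y hy => ⟨hs hy, mem_univ _⟩
  have hsplit : ((1 : ℝ), w) = (1, 0) + w • (0, 1) := by simp
  rwa [hsplit, map_add, map_smul] at hcomp

end StripDeriv

/-- A function `u`, with continuous partial derivatives `ut` and `ux`, solving on `[0, T]` the
system with coefficients `G` in characteristic form. Its extension to all times serves to state
continuity without reference to the strip. -/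
structure IsExtendedSolution (G : QuantitativeSystem n a) (T : ℝ) (u ut ux : ℝ → ℝ → V n) :
    Prop where
  cont : Continuous (Function.uncurry u)
  cont_time_deriv : Continuous (Function.uncurry ut)
  cont_space_deriv : Continuous (Function.uncurry ux)
  hasDerivAt : ∀ t x, HasDerivAt (u t) (ux t x) x
  hasDerivWithinAt_curve : ∀ s ⊆ Icc (0 : ℝ) T, ∀ (ξ : ℝ → ℝ) (w t : ℝ), t ∈ s →
    HasDerivWithinAt ξ w s t →
    HasDerivWithinAt (fun r => u r (ξ r)) (ut t (ξ t) + w • ux t (ξ t)) s t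
  bounded : ∀ R : ℝ, ∃ K : ℝ, 0 ≤ K ∧ ∀ t x, |x| ≤ R → ‖u t x‖ ≤ K ∧ ‖ux t x‖ ≤ K
  pde : ∀ t ∈ Icc (0 : ℝ) T, ∀ x, ‖u t x‖ ≤ 2 * G.κ → ∀ k,
    G.l k (u t x) ⬝ᵥ (ut t x + G.lam k (u t x) • ux t x) = G.l k (u t x) ⬝ᵥ G.B (u t x)

lemma IsExtendedSolution.mono {G : QuantitativeSystem n a} {T τ : ℝ} {u ut ux : ℝ → ℝ → V n}
    (h : IsExtendedSolution G T u ut ux) (hτ : τ ≤ T) : IsExtendedSolution G τ u ut ux where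
  __ := h
  hasDerivWithinAt_curve s hs := h.hasDerivWithinAt_curve s (hs.trans (Icc_subset_Icc le_rfl hτ))
  pde t ht := h.pde t ⟨ht.1, ht.2.trans hτ⟩

lemma exists_bound_of_clampTime {E : Type*} [NormedAddCommGroup E] {T : ℝ} (hT : 0 ≤ T)
    {g : ℝ → ℝ → E} (hg : Continuous (Function.uncurry g))
    (hclamp : ∀ t x, g (clampTime T t) x = g t x) (R : ℝ) :
    ∃ K, ∀ t x, |x| ≤ R → ‖g t x‖ ≤ K := by
  obtain ⟨K, hK⟩ := ((isCompact_Icc (a := (0 : ℝ)) (b := T)).prod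
    (isCompact_Icc (a := -R) (b := R))).exists_bound_of_continuousOn hg.continuousOn
  exact ⟨K, fun t x hx => hclamp t x ▸ hK (clampTime T t, x) ⟨clampTime_mem hT t, abs_le.1 hx⟩⟩

lemma leftEigenvector_dotProduct_eq {S : HypSys n} {v : ℝ → ℝ → V n} {f : ℝ → V n} {T : ℝ}
    (hT : 0 < T) (hv : S.IsSolutionOn v f T) {t : ℝ} (ht : t ∈ Icc (0 : ℝ) T) (x : ℝ) (k : Fin n) :
    S.l k (v t x) ⬝ᵥ (stripDeriv T v t x (1, 0) + S.lam k (v t x) • stripDeriv T v t x (0, 1)) =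
      S.l k (v t x) ⬝ᵥ S.B (v t x) := by
  have htime := hasDerivWithinAt_curve_of_stripDeriv hv.smooth Subset.rfl ht
    (hasDerivWithinAt_const t (Icc 0 T) x)
  rw [zero_smul, add_zero] at htime
  have hpde := hv.pde t ht x
  rw [(hasDerivAt_of_stripDeriv hv.smooth ht x).deriv,
    htime.derivWithin (uniqueDiffOn_Icc hT t ht)] at hpde
  rw [← hpde, dotProduct_add, dotProduct_add, dotProduct_mulVec, S.eig_l _ (hv.small t ht x),
    dotProduct_smul, smul_dotProduct]

theorem exists_isExtendedSolution {S : HypSys n} {G : QuantitativeSystem n a}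
    (hG : ∀ u, ‖u‖ ≤ 2 * G.κ →
      (∀ i, G.lam i u = S.lam i u ∧ G.l i u = S.l i u) ∧ G.B u = S.B u)
    {v : ℝ → ℝ → V n} {f : ℝ → V n} {T : ℝ} (hT : 0 < T) (hv : S.IsSolutionOn v f T) :
    ∃ u ut ux, IsExtendedSolution G T u ut ux ∧ ∀ x, u 0 x = f x := by
  have hu : Continuous (Function.uncurry fun t x => v (clampTime T t) x) :=
    continuous_comp_clampTime hT.le hv.smooth.continuousOn
  have hD := continuous_stripDeriv hT hv.smooth
  have hux : Continuous (Function.uncurry fun t x => stripDeriv T v t x (0, 1)) :=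
    hD.clm_apply continuous_const
  refine ⟨fun t x => v (clampTime T t) x, fun t x => stripDeriv T v t x (1, 0),
    fun t x => stripDeriv T v t x (0, 1),
    ⟨hu, hD.clm_apply continuous_const, hux, fun t x => ?_, fun s hs ξ w t ht hξ => ?_,
      fun R => ?_, fun t ht x hx k => ?_⟩, fun x => ?_⟩
  · simpa only [stripDeriv, clampTime_of_mem (clampTime_mem hT.le t)]
      using hasDerivAt_of_stripDeriv hv.smooth (clampTime_mem hT.le t) x
  · exact (hasDerivWithinAt_curve_of_stripDeriv hv.smooth hs ht hξ).congr
      (fun r hr => by rw [clampTime_of_mem (hs hr)]) (by rw [clampTime_of_mem (hs ht)])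
  · obtain ⟨K₁, hK₁⟩ := exists_bound_of_clampTime hT.le hu
      (fun t x => by rw [clampTime_of_mem (clampTime_mem hT.le t)]) R
    obtain ⟨K₂, hK₂⟩ := exists_bound_of_clampTime hT.le hux
      (fun t x => by rw [stripDeriv, stripDeriv, clampTime_of_mem (clampTime_mem hT.le t)]) R
    exact ⟨max 0 (max K₁ K₂), le_max_left _ _, fun t x hx =>
      ⟨(hK₁ t x hx).trans (by simp), (hK₂ t x hx).trans (by simp)⟩⟩
  · simp only [clampTime_of_mem ht] at hx ⊢
    obtain ⟨hlaml, hB⟩ := hG _ hx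
    rw [(hlaml k).1, (hlaml k).2, hB]
    exact leftEigenvector_dotProduct_eq hT hv ht x k
  · simpa only [clampTime_of_mem ⟨le_rfl, hT.le⟩] using hv.init x

end ExtendedSolution

section CharacteristicSpeed

variable {n a : ℕ} {G : QuantitativeSystem n a} {T R : ℝ} {u ut ux : ℝ → ℝ → V n}

/-- A bump function equal to `1` on `[-R - 1, R + 1]`, used to make characteristic speeds
globally Lipschitz. -/
def spaceCutoff (R : ℝ) : ContDiffBump (0 : ℝ) := ⟨|R| + 1, |R| + 2, by positivity, by linarith⟩

/-- The `i`-th characteristic speed `λ_i(u(t, x))`, cut off for large `x`. -/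
def charSpeed (G : QuantitativeSystem n a) (u : ℝ → ℝ → V n) (R : ℝ) (i : Fin n) (t x : ℝ) : ℝ :=
  spaceCutoff R x * G.lam i (u t x)

/-- The `x`-derivative of `charSpeed`. -/
def charSlope (G : QuantitativeSystem n a) (u ux : ℝ → ℝ → V n) (R : ℝ) (i : Fin n)
    (t x : ℝ) : ℝ :=
  deriv (spaceCutoff R) x * G.lam i (u t x) +
    spaceCutoff R x * fderiv ℝ (G.lam i) (u t x) (ux t x)

lemma spaceCutoff_eq_one {x : ℝ} (hx : |x| ≤ |R| + 1) : spaceCutoff R x = 1 :=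
  (spaceCutoff R).one_of_mem_closedBall (by simpa [spaceCutoff] using hx)

lemma deriv_spaceCutoff_eq_zero {x : ℝ} (hx : |x| ≤ |R|) : deriv (spaceCutoff R) x = 0 := by
  have hone : (spaceCutoff R : ℝ → ℝ) =ᶠ[𝓝 x] fun _ => 1 := by
    filter_upwards [(isOpen_lt continuous_abs continuous_const).mem_nhds
      (show |x| < |R| + 1 by linarith)] with y hy
    exact spaceCutoff_eq_one hy.le
  rw [hone.deriv_eq, deriv_const]

lemma abs_spaceCutoff_le_one (x : ℝ) : |spaceCutoff R x| ≤ 1 := by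
  rw [abs_of_nonneg (spaceCutoff R).nonneg]
  exact (spaceCutoff R).le_one

lemma exists_abs_deriv_spaceCutoff_le (R : ℝ) : ∃ M, ∀ x, |deriv (spaceCutoff R) x| ≤ M :=
  (((spaceCutoff R).contDiff (n := 1)).continuous_deriv le_rfl).bounded_above_of_compact_support
    (spaceCutoff R).hasCompactSupport.deriv

lemma charSpeed_eq {i : Fin n} {t x : ℝ} (hx : |x| ≤ |R| + 1) :
    charSpeed G u R i t x = G.lam i (u t x) := by
  rw [charSpeed, spaceCutoff_eq_one hx, one_mul]

lemma charSlope_eq {i : Fin n} {t x : ℝ} (hx : |x| ≤ |R|) :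
    charSlope G u ux R i t x = fderiv ℝ (G.lam i) (u t x) (ux t x) := by
  rw [charSlope, spaceCutoff_eq_one (by linarith), deriv_spaceCutoff_eq_zero hx, zero_mul, zero_add,
    one_mul]

lemma IsExtendedSolution.exists_abs_charSlope_le (h : IsExtendedSolution G T u ut ux) (i : Fin n) :
    ∃ K, ∀ t x, |charSlope G u ux R i t x| ≤ K := by
  obtain ⟨K₀, -, hK₀⟩ := h.bounded (|R| + 2)
  obtain ⟨K₁, hK₁0, hK₁⟩ := exists_norm_le_of_continuous
    ((G.contDiff_lam i).continuous_fderiv one_ne_zero) K₀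
  obtain ⟨M, hM⟩ := exists_abs_deriv_spaceCutoff_le R
  refine ⟨M * G.L + K₁ * K₀, fun t x => (abs_add_le _ _).trans (add_le_add ?_ ?_)⟩
  · rw [abs_mul]
    exact mul_le_mul (hM x) (G.abs_lam_le i _) (abs_nonneg _) ((abs_nonneg _).trans (hM x))
  rw [abs_mul]
  rcases le_or_gt |x| (|R| + 2) with hx | hx
  · obtain ⟨hu, hux⟩ := hK₀ t x hx
    calc |spaceCutoff R x| * |fderiv ℝ (G.lam i) (u t x) (ux t x)|
        ≤ 1 * (K₁ * K₀) := by
          refine mul_le_mul (abs_spaceCutoff_le_one x) ?_ (abs_nonneg _) zero_le_one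
          exact ((fderiv ℝ (G.lam i) (u t x)).le_opNorm _).trans
            (mul_le_mul (hK₁ _ hu) hux (norm_nonneg _) hK₁0)
      _ = K₁ * K₀ := one_mul _
  · have hK₀0 : 0 ≤ K₀ := (norm_nonneg _).trans
      (hK₀ 0 0 (by rw [abs_zero]; positivity)).1
    rw [(spaceCutoff R).zero_of_le_dist (by simpa [spaceCutoff] using hx.le), abs_zero, zero_mul]
    positivity

lemma IsExtendedSolution.exists_isBoundedField_charSpeed (h : IsExtendedSolution G T u ut ux)
    (R : ℝ) (i : Fin n) :
    ∃ K, IsBoundedField (charSpeed G u R i) (charSlope G u ux R i) G.L K := by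
  have hsmooth : ContDiff ℝ 1 (spaceCutoff R) := (spaceCutoff R).contDiff
  have hlam : Continuous fun p : ℝ × ℝ => G.lam i (u p.1 p.2) :=
    (G.contDiff_lam i).continuous.comp h.cont
  have hDlam : Continuous fun p : ℝ × ℝ => fderiv ℝ (G.lam i) (u p.1 p.2) (ux p.1 p.2) :=
    (((G.contDiff_lam i).continuous_fderiv one_ne_zero).comp h.cont).clm_apply h.cont_space_deriv
  obtain ⟨K, hK⟩ := h.exists_abs_charSlope_le (R := R) i
  refine ⟨K, (hsmooth.continuous.comp continuous_snd).mul hlam,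
    (((hsmooth.continuous_deriv le_rfl).comp continuous_snd).mul hlam).add
      ((hsmooth.continuous.comp continuous_snd).mul hDlam), fun t x => ?_, fun t x => ?_, hK⟩
  · exact (hsmooth.differentiable one_ne_zero x).hasDerivAt.mul
      (((G.contDiff_lam i).differentiable one_ne_zero _).hasFDerivAt.comp_hasDerivAt x
        (h.hasDerivAt t x))
  · rw [charSpeed, abs_mul]
    exact (mul_le_mul (abs_spaceCutoff_le_one x) (G.abs_lam_le i _) (abs_nonneg _)
      zero_le_one).trans_eq (one_mul _)

end CharacteristicSpeed

/-! ### Transport of the components of `u` and `u_x` -/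

section Transport

variable {T R L K : ℝ} {a ax X J z g : ℝ → ℝ → ℝ}

lemma ofReal_abs_sub_le_lintegral {φ φ' g : ℝ → ℝ} {t : ℝ} (ht : 0 ≤ t)
    (hd : ∀ s ∈ Icc (0 : ℝ) t, HasDerivWithinAt φ (φ' s) (Icc 0 t) s)
    (hg : ∀ s ∈ Icc (0 : ℝ) t, |φ' s| ≤ g s) (hgc : ContinuousOn g (Icc 0 t)) :
    ENNReal.ofReal |φ t - φ 0| ≤ ∫⁻ s in Icc 0 t, ENNReal.ofReal (g s) := by
  have hgi : IntegrableOn g (Icc 0 t) := hgc.integrableOn_Icc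
  have hsub (ψ ψ' : ℝ → ℝ) (hψ : ∀ s ∈ Icc (0 : ℝ) t, HasDerivWithinAt ψ (ψ' s) (Icc 0 t) s)
      (hle : ∀ s ∈ Icc (0 : ℝ) t, ψ' s ≤ g s) : ψ t - ψ 0 ≤ ∫ s in Icc 0 t, g s := by
    rw [integral_Icc_eq_integral_Ioc, ← intervalIntegral.integral_of_le ht]
    exact intervalIntegral.sub_le_integral_of_hasDeriv_right_of_le ht
      (fun s hs => (hψ s hs).continuousWithinAt)
      (fun s hs => ((hψ s (Ioo_subset_Icc_self hs)).hasDerivAt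
        (Icc_mem_nhds hs.1 hs.2)).hasDerivWithinAt)
      hgi (fun s hs => hle s (Ioo_subset_Icc_self hs))
  have hupper := hsub φ φ' hd fun s hs => (le_abs_self _).trans (hg s hs)
  have hlower := hsub (fun s => -φ s) (fun s => -φ' s) (fun s hs => (hd s hs).neg)
    fun s hs => (neg_le_abs _).trans (hg s hs)
  rw [← ofReal_integral_eq_lintegral_ofReal hgi ((ae_restrict_iff' measurableSet_Icc).2
    (ae_of_all _ fun s hs => (abs_nonneg _).trans (hg s hs)))]
  exact ENNReal.ofReal_le_ofReal (abs_le.2 ⟨by linarith, hupper⟩)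

lemma isTransported_of_hasDerivWithinAt (hX : IsFlow T L K a ax X J)
    (hz : Continuous (Function.uncurry z)) (hg : Continuous (Function.uncurry g))
    (hd : ∀ t ∈ Icc (0 : ℝ) T, ∀ y, (t, X t y) ∈ trapezoid T R L → ∃ φ' : ℝ → ℝ,
      ∀ s ∈ Icc (0 : ℝ) t, HasDerivWithinAt (fun s => z s (X s y) * J s y) (φ' s) (Icc 0 t) s ∧
        |φ' s| ≤ g s (X s y) * J s y) : IsTransported T R L X J z g := by
  refine ⟨hz, hg, fun t ht y hmem => ?_⟩
  obtain ⟨φ', hφ'⟩ := hd t ht y hmem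
  have hgX : Continuous fun s => g s (X s y) * J s y :=
    (hg.comp (hX.continuous_curve y)).mul
      (hX.cont_jacobian.comp (by fun_prop : Continuous fun s : ℝ => (s, y)))
  have hint :=
    ofReal_abs_sub_le_lintegral ht.1 (fun s hs => (hφ' s hs).1) (fun s hs => (hφ' s hs).2)
    hgX.continuousOn
  rw [hX.zero, hX.jacobian_zero, mul_one] at hint
  refine le_trans ?_ (add_le_add le_rfl hint)
  rw [← ENNReal.ofReal_add (abs_nonneg _) (abs_nonneg _)]
  refine ENNReal.ofReal_le_ofReal ?_
  have htri := abs_add_le (z 0 y) (z t (X t y) * J t y - z 0 y)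
  rwa [add_sub_cancel, abs_mul, abs_of_pos (hX.jacobian_pos t y)] at htri

end Transport

section MixedDerivative

lemma hasDerivWithinAt_of_eventually_hasDerivWithinAt {F g : ℝ → ℝ → ℝ}
    (hF : Continuous (Function.uncurry F)) (hg : Continuous (Function.uncurry g)) {t : ℝ}
    (hd : ∀ᶠ η in 𝓝[≠] (0 : ℝ), ∀ s ∈ Icc (0 : ℝ) t,
      HasDerivWithinAt (fun s => F s η) (g s η) (Icc 0 t) s) {s : ℝ} (hs : s ∈ Icc (0 : ℝ) t) :
    HasDerivWithinAt (fun s => F s 0) (g s 0) (Icc 0 t) s := by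
  have hslice (η : ℝ) : Continuous fun s => g s η :=
    hg.comp (by fun_prop : Continuous fun s : ℝ => (s, η))
  have hftc : ∀ r ∈ Icc (0 : ℝ) t, F r 0 - F 0 0 = ∫ q in (0 : ℝ)..r, g q 0 := by
    intro r hr
    have hleft : Continuous fun η => F r η - F 0 η :=
      (hF.comp (by fun_prop : Continuous fun η : ℝ => (r, η))).sub
        (hF.comp (by fun_prop : Continuous fun η : ℝ => ((0 : ℝ), η)))
    have hright : Continuous fun η => ∫ q in (0 : ℝ)..r, g q η :=
      intervalIntegral.continuous_parametric_intervalIntegral_of_continuous'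
        (f := fun η q => g q η) (hg.comp (by fun_prop : Continuous fun p : ℝ × ℝ => (p.2, p.1))) 0 r
    have heq : (fun η => F r η - F 0 η) =ᶠ[𝓝[≠] 0] fun η => ∫ q in (0 : ℝ)..r, g q η := by
      filter_upwards [hd] with η hη
      have hη' : ∀ q ∈ Icc (0 : ℝ) r, HasDerivWithinAt (fun s => F s η) (g q η) (Icc 0 r) q :=
        fun q hq => (hη q ⟨hq.1, hq.2.trans hr.2⟩).mono (Icc_subset_Icc le_rfl hr.2)
      exact (intervalIntegral.integral_eq_sub_of_hasDerivAt_of_le hr.1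
        (fun q hq => (hη' q hq).continuousWithinAt)
        (fun q hq => (hη' q (Ioo_subset_Icc_self hq)).hasDerivAt (Icc_mem_nhds hq.1 hq.2))
        ((hslice η).intervalIntegrable 0 r)).symm
    exact tendsto_nhds_unique
      (((hleft.tendsto 0).mono_left nhdsWithin_le_nhds).congr' heq)
      ((hright.tendsto 0).mono_left nhdsWithin_le_nhds)
  refine (((hslice 0).integral_hasStrictDerivAt 0 s).hasDerivAt.hasDerivWithinAt.const_add
    (F 0 0)).congr (fun r hr => ?_) ?_
  · linarith [hftc r hr]
  · linarith [hftc s hs]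

variable {n : ℕ}

lemma hasDerivWithinAt_dotProduct {f g : ℝ → V n} {f' g' : V n} {s : Set ℝ} {t : ℝ}
    (hf : HasDerivWithinAt f f' s t) (hg : HasDerivWithinAt g g' s t) :
    HasDerivWithinAt (fun r => f r ⬝ᵥ g r) (f' ⬝ᵥ g t + f t ⬝ᵥ g') s t := by
  simp only [dotProduct, ← Finset.sum_add_distrib]
  exact HasDerivWithinAt.fun_sum fun j _ =>
    (hasDerivWithinAt_pi.1 hf j).mul (hasDerivWithinAt_pi.1 hg j)

variable {l : V n → V n} {b : V n → ℝ} {U Ux Q : ℝ → ℝ → V n} {t y : ℝ}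

lemma hasDerivWithinAt_dotProduct_meanSlope (hl : ContDiff ℝ 1 l) (hb : ContDiff ℝ 1 b)
    (hUx : Continuous (Function.uncurry Ux)) (hU : Continuous (Function.uncurry U))
    (hUd : ∀ s η, HasDerivAt (U s) (Ux s η) η) {s η : ℝ} (hη : η ≠ 0)
    (h₀ : HasDerivWithinAt (fun s => U s y) (Q s y) (Icc 0 t) s)
    (h₁ : HasDerivWithinAt (fun s => U s (y + η)) (Q s (y + η)) (Icc 0 t) s)
    (hl₀ : l (U s y) ⬝ᵥ Q s y = b (U s y))
    (hl₁ : l (U s (y + η)) ⬝ᵥ Q s (y + η) = b (U s (y + η))) :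
    HasDerivWithinAt (fun s => l (U s y) ⬝ᵥ meanSlope Ux s y (y + η))
      (fderiv ℝ l (U s y) (Q s y) ⬝ᵥ meanSlope Ux s y (y + η) +
        (meanSlope (fun s η => fderiv ℝ b (U s η) (Ux s η)) s y (y + η) -
          meanSlope (fun s η => fderiv ℝ l (U s η) (Ux s η)) s y (y + η) ⬝ᵥ Q s (y + η)))
      (Icc 0 t) s := by
  have hslope (s : ℝ) : meanSlope Ux s y (y + η) = η⁻¹ • (U s (y + η) - U s y) := by
    rw [sub_eq_smul_meanSlope hUd hUx s y (y + η), add_sub_cancel_left, inv_smul_smul₀ hη]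
  have hcomp {E : Type} [NormedAddCommGroup E] [NormedSpace ℝ E] [CompleteSpace E] {f : V n → E}
      (hf : ContDiff ℝ 1 f) : f (U s (y + η)) - f (U s y) =
        η • meanSlope (fun s η => fderiv ℝ f (U s η) (Ux s η)) s y (y + η) := by
    have hfU := sub_eq_smul_meanSlope (g := fun s η => f (U s η))
      (fun s η => ((hf.differentiable one_ne_zero _).hasFDerivAt.comp_hasDerivAt η (hUd s η)))
      (((hf.continuous_fderiv one_ne_zero).comp hU).clm_apply hUx) s y (y + η)
    rwa [add_sub_cancel_left] at hfU
  have hlU : HasDerivWithinAt (fun s => l (U s y)) (fderiv ℝ l (U s y) (Q s y)) (Icc 0 t) s :=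
    (hl.differentiable one_ne_zero _).hasFDerivAt.comp_hasDerivWithinAt s h₀
  have hUη : HasDerivWithinAt (fun s => meanSlope Ux s y (y + η)) (η⁻¹ • (Q s (y + η) - Q s y))
      (Icc 0 t) s := by
    simp only [hslope]
    exact (h₁.fun_sub h₀).fun_const_smul _
  refine (hasDerivWithinAt_dotProduct hlU hUη).congr_deriv (congrArg₂ _ rfl ?_)
  have hcommute : η * (meanSlope (fun s η => fderiv ℝ l (U s η) (Ux s η)) s y (y + η) ⬝ᵥ
      Q s (y + η)) = b (U s (y + η)) - l (U s y) ⬝ᵥ Q s (y + η) := by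
    rw [← smul_eq_mul, ← smul_dotProduct, ← hcomp hl, sub_dotProduct, hl₁]
  have hbU := hcomp hb
  rw [smul_eq_mul] at hbU
  rw [dotProduct_smul, dotProduct_sub, hl₀, smul_eq_mul, inv_mul_eq_iff_eq_mul₀ hη, mul_sub,
    hcommute, ← hbU]
  ring

/- `U` need not have a mixed second derivative: the equation `l(U) · ∂_s U = b(U)` is used to
differentiate in `η` instead, through difference quotients. -/
theorem hasDerivWithinAt_dotProduct_of_dotProduct_eq (hl : ContDiff ℝ 1 l) (hb : ContDiff ℝ 1 b)
    (hU : Continuous (Function.uncurry U)) (hUx : Continuous (Function.uncurry Ux))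
    (hQ : Continuous (Function.uncurry Q)) (hUd : ∀ s η, HasDerivAt (U s) (Ux s η) η)
    (hev : ∀ᶠ η in 𝓝 y, ∀ s ∈ Icc (0 : ℝ) t,
      HasDerivWithinAt (fun s => U s η) (Q s η) (Icc 0 t) s ∧ l (U s η) ⬝ᵥ Q s η = b (U s η))
    {s : ℝ} (hs : s ∈ Icc (0 : ℝ) t) :
    HasDerivWithinAt (fun s => l (U s y) ⬝ᵥ Ux s y)
      (fderiv ℝ l (U s y) (Q s y) ⬝ᵥ Ux s y - fderiv ℝ l (U s y) (Ux s y) ⬝ᵥ Q s y +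
        fderiv ℝ b (U s y) (Ux s y)) (Icc 0 t) s := by
  have hpoint : Continuous fun p : ℝ × ℝ => (p.1, y) := by fun_prop
  have hshift : Continuous fun p : ℝ × ℝ => (p.1, y + p.2) := by fun_prop
  have hsegment : Continuous fun p : ℝ × ℝ => (p.1, y, y + p.2) := by fun_prop
  have hDl : Continuous fun p : ℝ × ℝ => fderiv ℝ l (U p.1 p.2) :=
    (hl.continuous_fderiv one_ne_zero).comp hU
  have hDb : Continuous fun p : ℝ × ℝ => fderiv ℝ b (U p.1 p.2) :=
    (hb.continuous_fderiv one_ne_zero).comp hU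
  have hmUx := (continuous_meanSlope hUx).comp hsegment
  have hmDl := (continuous_meanSlope (gx := fun s η => fderiv ℝ l (U s η) (Ux s η))
    (hDl.clm_apply hUx)).comp hsegment
  have hmDb := (continuous_meanSlope (gx := fun s η => fderiv ℝ b (U s η) (Ux s η))
    (hDb.clm_apply hUx)).comp hsegment
  have hlimit := hasDerivWithinAt_of_eventually_hasDerivWithinAt (t := t)
    (F := fun s η => l (U s y) ⬝ᵥ meanSlope Ux s y (y + η))
    (g := fun s η => fderiv ℝ l (U s y) (Q s y) ⬝ᵥ meanSlope Ux s y (y + η) +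
      (meanSlope (fun s η => fderiv ℝ b (U s η) (Ux s η)) s y (y + η) -
        meanSlope (fun s η => fderiv ℝ l (U s η) (Ux s η)) s y (y + η) ⬝ᵥ Q s (y + η)))
    (((hl.continuous.comp hU).comp hpoint).dotProduct hmUx)
    ((((hDl.comp hpoint).clm_apply (hQ.comp hpoint)).dotProduct hmUx).add
      (hmDb.sub (hmDl.dotProduct (hQ.comp hshift)))) ?_ hs
  · simp only [add_zero, meanSlope_self] at hlimit
    exact hlimit.congr_deriv (by ring)
  · have hev' : ∀ᶠ η in 𝓝 (0 : ℝ), ∀ s ∈ Icc (0 : ℝ) t,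
        HasDerivWithinAt (fun s => U s (y + η)) (Q s (y + η)) (Icc 0 t) s ∧
          l (U s (y + η)) ⬝ᵥ Q s (y + η) = b (U s (y + η)) :=
      ((by fun_prop : Continuous fun η : ℝ => y + η).tendsto' 0 y (add_zero y)).eventually hev
    filter_upwards [nhdsWithin_le_nhds hev', self_mem_nhdsWithin] with η hη hη0 s hs
    exact hasDerivWithinAt_dotProduct_meanSlope hl hb hUx hU hUd hη0 (hev.self_of_nhds s hs).1
      (hη s hs).1 (hev.self_of_nhds s hs).2 (hη s hs).2

end MixedDerivative

section Components

variable {n a : ℕ} {G : QuantitativeSystem n a} {T R : ℝ} {u ut ux : ℝ → ℝ → V n}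

/-- The components `w_i = l_i(u) · u_x`. -/
def wave (G : QuantitativeSystem n a) (u ux : ℝ → ℝ → V n) (t x : ℝ) : V n :=
  leftComponents G.l (u t x) (ux t x)

/-- The bound for the production of the components of `u_x`. -/
def waveSource (G : QuantitativeSystem n a) (u ux : ℝ → ℝ → V n) (t x : ℝ) : ℝ :=
  G.C * transversalProduct (u t x) (wave G u ux t x)

/-- The sum of all interaction terms. -/
def totalInteraction (G : QuantitativeSystem n a) (u ux : ℝ → ℝ → V n) (t x : ℝ) : ℝ :=
  transversalProduct (u t x) (wave G u ux t x) + transversalSquare (u t x) +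
    resonantProduct a (u t x) (wave G u ux t x)

/-- The bound for the production of the components of `u`. -/
def stateSource (G : QuantitativeSystem n a) (u ux : ℝ → ℝ → V n) (t x : ℝ) : ℝ :=
  G.C * totalInteraction G u ux t x

lemma QuantitativeSystem.L_nonneg (G : QuantitativeSystem n a) (i : Fin n) : 0 ≤ G.L :=
  (abs_nonneg _).trans (G.abs_lam_le i 0)

lemma abs_le_of_mem_trapezoid {L t x : ℝ} (hL : 0 ≤ L) (h : (t, x) ∈ trapezoid T R L) :
    |x| ≤ R := by
  obtain ⟨ht, -, hx⟩ := h
  exact hx.trans (sub_le_self R (mul_nonneg hL ht))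

namespace IsExtendedSolution

lemma continuous_wave (h : IsExtendedSolution G T u ut ux) :
    Continuous (Function.uncurry (wave G u ux)) :=
  continuous_pi fun k => ((G.contDiff_l k).continuous.comp h.cont).dotProduct h.cont_space_deriv

lemma continuous_wave_apply (h : IsExtendedSolution G T u ut ux) (i : Fin n) :
    Continuous (Function.uncurry fun t x => wave G u ux t x i) :=
  (continuous_apply i).comp h.continuous_wave

lemma continuous_state_apply (h : IsExtendedSolution G T u ut ux) (i : Fin n) :
    Continuous (Function.uncurry fun t x => u t x i) :=
  (continuous_apply i).comp h.cont

lemma continuous_uncurry_transversalProduct (h : IsExtendedSolution G T u ut ux) :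
    Continuous (Function.uncurry fun t x => transversalProduct (u t x) (wave G u ux t x)) := by
  have hpair : Continuous fun p : ℝ × ℝ => (u p.1 p.2, wave G u ux p.1 p.2) :=
    h.cont.prodMk h.continuous_wave
  simpa only [Function.uncurry_def, Function.comp_def] using
    continuous_transversalProduct.comp hpair

lemma continuous_uncurry_transversalSquare (h : IsExtendedSolution G T u ut ux) :
    Continuous (Function.uncurry fun t x => transversalSquare (u t x)) :=
  continuous_transversalSquare.comp h.cont

lemma continuous_uncurry_resonantProduct (h : IsExtendedSolution G T u ut ux) :
    Continuous (Function.uncurry fun t x => resonantProduct a (u t x) (wave G u ux t x)) :=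
  (continuous_resonantProduct a).comp (h.cont.prodMk h.continuous_wave)

lemma continuous_waveSource (h : IsExtendedSolution G T u ut ux) :
    Continuous (Function.uncurry (waveSource G u ux)) :=
  continuous_const.mul h.continuous_uncurry_transversalProduct

lemma continuous_totalInteraction (h : IsExtendedSolution G T u ut ux) :
    Continuous (Function.uncurry (totalInteraction G u ux)) :=
  (h.continuous_uncurry_transversalProduct.add h.continuous_uncurry_transversalSquare).add
    h.continuous_uncurry_resonantProduct

lemma continuous_stateSource (h : IsExtendedSolution G T u ut ux) :
    Continuous (Function.uncurry (stateSource G u ux)) :=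
  continuous_const.mul h.continuous_totalInteraction

lemma charRelation (h : IsExtendedSolution G T u ut ux) {t x : ℝ} (ht : t ∈ Icc (0 : ℝ) T)
    (hu : ‖u t x‖ ≤ 2 * G.κ) (i : Fin n) : CharRelation G.lam G.l G.B i (u t x) (ux t x)
      (ut t x + G.lam i (u t x) • ux t x) := by
  intro k
  rw [← h.pde t ht x hu k]
  simp only [dotProduct_add, dotProduct_smul, smul_eq_mul]
  ring

variable {K : ℝ} {X J : ℝ → ℝ → ℝ} {i : Fin n}

lemma hasDerivWithinAt_along_flow (h : IsExtendedSolution G T u ut ux)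
    (hX : IsFlow T G.L K (charSpeed G u R i) (charSlope G u ux R i) X J) {t y : ℝ}
    (ht : t ∈ Icc (0 : ℝ) T) (hx : |X t y| ≤ |R| + 1) :
    HasDerivWithinAt (fun s => u s (X s y))
      (ut t (X t y) + G.lam i (u t (X t y)) • ux t (X t y)) (Icc 0 T) t := by
  rw [← charSpeed_eq hx]
  exact h.hasDerivWithinAt_curve (Icc 0 T) Subset.rfl (fun s => X s y) _ t ht
    (hX.hasDerivWithinAt y t ht)

theorem isTransported_state (h : IsExtendedSolution G T u ut ux)
    (hX : IsFlow T G.L K (charSpeed G u R i) (charSlope G u ux R i) X J)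
    (hsmall : ∀ t x, (t, x) ∈ trapezoid T R G.L → ‖u t x‖ ≤ G.κ) :
    IsTransported T R G.L X J (fun t x => u t x i) (stateSource G u ux) := by
  refine isTransported_of_hasDerivWithinAt hX (h.continuous_state_apply i) h.continuous_stateSource
    fun t ht y hmem => ⟨fun s => ((ut s (X s y) + G.lam i (u s (X s y)) • ux s (X s y)) i +
      fderiv ℝ (G.lam i) (u s (X s y)) (ux s (X s y)) * u s (X s y) i) * J s y, fun s hs => ?_⟩
  have hsub : Icc (0 : ℝ) t ⊆ Icc 0 T := Icc_subset_Icc le_rfl ht.2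
  have hmem' := hX.mem_trapezoid_of_le hs.1 hs.2 hmem
  have hx := (abs_le_of_mem_trapezoid (G.L_nonneg i) hmem').trans (le_abs_self R)
  have hu := hsmall _ _ hmem'
  constructor
  · have hderiv := hasDerivWithinAt_pi.1
      (h.hasDerivWithinAt_along_flow hX (hsub hs) (by linarith : |X s y| ≤ |R| + 1)) i
    have hJ := hX.jacobian_hasDerivWithinAt y s (hsub hs)
    rw [charSlope_eq hx] at hJ
    exact ((hderiv.mul hJ).mono hsub).congr_deriv (by ring)
  · rw [abs_mul, abs_of_pos (hX.jacobian_pos s y)]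
    exact mul_le_mul_of_nonneg_right
      (G.state_source_le i _ _ _ hu (h.charRelation (hsub hs) (by linarith [G.κ_pos]) i))
      (hX.jacobian_pos s y).le

lemma eventually_forall_characteristic (h : IsExtendedSolution G T u ut ux)
    (hX : IsFlow T G.L K (charSpeed G u R i) (charSlope G u ux R i) X J)
    (hsmall : ∀ t x, (t, x) ∈ trapezoid T R G.L → ‖u t x‖ ≤ G.κ) {t y : ℝ}
    (ht : t ∈ Icc (0 : ℝ) T) (hmem : (t, X t y) ∈ trapezoid T R G.L) :
    ∀ᶠ η in 𝓝 y, ∀ s ∈ Icc (0 : ℝ) t,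
      HasDerivWithinAt (fun s => u s (X s η))
        (ut s (X s η) + G.lam i (u s (X s η)) • ux s (X s η)) (Icc 0 t) s ∧
      G.l i (u s (X s η)) ⬝ᵥ (ut s (X s η) + G.lam i (u s (X s η)) • ux s (X s η)) =
        G.l i (u s (X s η)) ⬝ᵥ G.B (u s (X s η)) := by
  have hsub : Icc (0 : ℝ) t ⊆ Icc 0 T := Icc_subset_Icc le_rfl ht.2
  have hXc : Continuous fun p : ℝ × ℝ => X p.2 p.1 := hX.cont.comp continuous_swap
  have huc : Continuous fun p : ℝ × ℝ => ‖u p.2 (X p.2 p.1)‖ :=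
    (h.cont.comp (continuous_snd.prodMk hXc)).norm
  have hnear : ∀ᶠ η in 𝓝 y, ∀ s ∈ Icc (0 : ℝ) t,
      |X s η| < |R| + 1 ∧ ‖u s (X s η)‖ < 2 * G.κ := by
    refine isCompact_Icc.eventually_forall_of_forall_eventually fun s hs => ?_
    have hmem' := hX.mem_trapezoid_of_le hs.1 hs.2 hmem
    have hx := (abs_le_of_mem_trapezoid (G.L_nonneg i) hmem').trans (le_abs_self R)
    exact Filter.inter_mem ((isOpen_lt hXc.abs continuous_const).mem_nhds (x := (y, s))
      (lt_of_le_of_lt hx (lt_add_one _))) ((isOpen_lt huc continuous_const).mem_nhds (x := (y, s))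
        ((hsmall _ _ hmem').trans_lt (by linarith [G.κ_pos])))
  filter_upwards [hnear] with η hη s hs
  exact ⟨(h.hasDerivWithinAt_along_flow hX (hsub hs) (hη s hs).1.le).mono hsub,
    h.pde s (hsub hs) _ (hη s hs).2.le i⟩

theorem isTransported_wave (h : IsExtendedSolution G T u ut ux)
    (hX : IsFlow T G.L K (charSpeed G u R i) (charSlope G u ux R i) X J)
    (hsmall : ∀ t x, (t, x) ∈ trapezoid T R G.L → ‖u t x‖ ≤ G.κ) :
    IsTransported T R G.L X J (fun t x => wave G u ux t x i) (waveSource G u ux) := by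
  refine isTransported_of_hasDerivWithinAt hX (h.continuous_wave_apply i) h.continuous_waveSource
    fun t ht y hmem => ⟨fun s => (fderiv ℝ (G.l i) (u s (X s y))
      (ut s (X s y) + G.lam i (u s (X s y)) • ux s (X s y)) ⬝ᵥ ux s (X s y) -
      fderiv ℝ (G.l i) (u s (X s y)) (ux s (X s y)) ⬝ᵥ
        (ut s (X s y) + G.lam i (u s (X s y)) • ux s (X s y)) +
      fderiv ℝ (fun v => G.l i v ⬝ᵥ G.B v) (u s (X s y)) (ux s (X s y))) * J s y,
      fun s hs => ⟨?_, ?_⟩⟩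
  · have hgraph : Continuous fun p : ℝ × ℝ => (p.1, X p.1 p.2) := continuous_fst.prodMk hX.cont
    have huX := h.cont.comp hgraph
    have huxX := h.cont_space_deriv.comp hgraph
    have hderiv := hasDerivWithinAt_dotProduct_of_dotProduct_eq (t := t) (y := y)
      (U := fun s η => u s (X s η)) (Ux := fun s η => J s η • ux s (X s η))
      (Q := fun s η => ut s (X s η) + G.lam i (u s (X s η)) • ux s (X s η))
      (G.contDiff_l i) (contDiff_dotProduct (G.contDiff_l i) G.contDiff_B) huX
      (hX.cont_jacobian.smul huxX)
      ((h.cont_time_deriv.comp hgraph).add (((G.contDiff_lam i).continuous.comp huX).smul huxX))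
      (fun s η => (h.hasDerivAt s (X s η)).scomp η (hX.hasDerivAt s η))
      (h.eventually_forall_characteristic hX hsmall ht hmem) hs
    simp only [dotProduct_smul, smul_dotProduct, map_smul, smul_eq_mul] at hderiv
    refine (hderiv.congr_deriv (by ring)).congr (fun r _ => ?_) ?_ <;> exact mul_comm _ _
  · have hmem' := hX.mem_trapezoid_of_le hs.1 hs.2 hmem
    have hu := hsmall _ _ hmem'
    rw [abs_mul, abs_of_pos (hX.jacobian_pos s y)]
    exact mul_le_mul_of_nonneg_right (G.wave_source_le i _ _ _ hu
      (h.charRelation ⟨hs.1, hs.2.trans ht.2⟩ (by linarith [G.κ_pos]) i)) (hX.jacobian_pos s y).le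

end IsExtendedSolution

end Components

/-! ### Space-time integrals over the trapezoid -/

section TrapezoidIntegral

/-- The integral of the positive part of `φ` over the trapezoid, with values in `ℝ≥0∞` so that it is
defined before any bound is known. -/
def trapezoidIntegral (T R L : ℝ) (φ : ℝ → ℝ → ℝ) : ℝ≥0∞ :=
  ∫⁻ s in Icc 0 T, ∫⁻ x, cutoff T R L s x * ENNReal.ofReal (φ s x)

variable {T R L : ℝ} {φ ψ : ℝ → ℝ → ℝ}

lemma trapezoidIntegral_mono (h : ∀ t x, (t, x) ∈ trapezoid T R L → φ t x ≤ ψ t x) :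
    trapezoidIntegral T R L φ ≤ trapezoidIntegral T R L ψ := by
  refine lintegral_mono fun s => lintegral_mono fun x => ?_
  by_cases hmem : (s, x) ∈ trapezoid T R L
  · exact mul_le_mul_right (ENNReal.ofReal_le_ofReal (h s x hmem)) _
  · simp [cutoff_of_notMem hmem]

lemma trapezoidIntegral_add_le (hφ : Continuous (Function.uncurry φ)) :
    trapezoidIntegral T R L (fun t x => φ t x + ψ t x) ≤
      trapezoidIntegral T R L φ + trapezoidIntegral T R L ψ := by
  have hmeas : Measurable fun p : ℝ × ℝ => cutoff T R L p.1 p.2 * ENNReal.ofReal (φ p.1 p.2) :=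
    (measurable_cutoff T R L).mul hφ.measurable.ennreal_ofReal
  unfold trapezoidIntegral
  rw [← lintegral_add_left hmeas.lintegral_prod_right']
  refine lintegral_mono fun s => ?_
  have hslice : Measurable fun x => cutoff T R L s x * ENNReal.ofReal (φ s x) :=
    hmeas.comp measurable_prodMk_left
  simp only
  rw [← lintegral_add_left hslice]
  refine lintegral_mono fun x => ?_
  simp only
  rw [← mul_add]
  exact mul_le_mul_right ENNReal.ofReal_add_le _

lemma trapezoidIntegral_sum_le {ι : Type*} (s : Finset ι) {φ : ι → ℝ → ℝ → ℝ} {M : ℝ}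
    (hφ : ∀ i, Continuous (Function.uncurry (φ i)))
    (hM : ∀ i ∈ s, trapezoidIntegral T R L (φ i) ≤ ENNReal.ofReal M) :
    trapezoidIntegral T R L (fun t x => ∑ i ∈ s, φ i t x) ≤ ENNReal.ofReal (s.card * M) := by
  have hsum : trapezoidIntegral T R L (fun t x => ∑ i ∈ s, φ i t x) ≤
      ∑ i ∈ s, trapezoidIntegral T R L (φ i) := by
    clear hM
    classical
    induction s using Finset.induction_on with
    | empty => simp [trapezoidIntegral]
    | insert i s hi ih =>
      simp only [Finset.sum_insert hi]
      exact (trapezoidIntegral_add_le (hφ i)).trans (add_le_add le_rfl ih)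
  refine hsum.trans ((Finset.sum_le_card_nsmul _ _ _ hM).trans_eq ?_)
  rw [nsmul_eq_mul, ENNReal.ofReal_mul (by positivity), ENNReal.ofReal_natCast]

lemma trapezoidIntegral_const_mul {k : ℝ} (hk : 0 ≤ k) :
    trapezoidIntegral T R L (fun t x => k * φ t x) =
      ENNReal.ofReal k * trapezoidIntegral T R L φ := by
  simp only [trapezoidIntegral, ENNReal.ofReal_mul hk, mul_left_comm _ (ENNReal.ofReal k)]
  simp only [lintegral_const_mul' _ _ ENNReal.ofReal_ne_top]

lemma trapezoidIntegral_le_of_slice_le {z : ℝ → ℝ → ℝ} {M : ℝ≥0∞} {k : ℝ} (hk : 0 ≤ k)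
    (hM : ∀ t ∈ Icc (0 : ℝ) T, ∫⁻ x, cutoff T R L t x * ENNReal.ofReal |z t x| ≤ M)
    (h : ∀ t x, (t, x) ∈ trapezoid T R L → φ t x ≤ k * |z t x|) :
    trapezoidIntegral T R L φ ≤ ENNReal.ofReal k * (M * ENNReal.ofReal T) := by
  refine (trapezoidIntegral_mono h).trans ?_
  rw [trapezoidIntegral_const_mul hk]
  refine mul_le_mul_right ((setLIntegral_mono measurable_const hM).trans_eq ?_) _
  rw [setLIntegral_const, Real.volume_Icc, sub_zero]

lemma isCompact_trapezoid (T R : ℝ) (hL : 0 ≤ L) : IsCompact (trapezoid T R L) :=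
  (isCompact_Icc.prod isCompact_Icc : IsCompact (Icc (0 : ℝ) T ×ˢ Icc (-R) R)).of_isClosed_subset
    (isClosed_trapezoid T R L) fun _ h => ⟨⟨h.1, h.2.1⟩, abs_le.1 (abs_le_of_mem_trapezoid hL h)⟩

end TrapezoidIntegral

/-! ### Interaction of the families -/

section Families

variable {n a : ℕ} {G : QuantitativeSystem n a} {T R : ℝ} {u ut ux z z₂ : ℝ → ℝ → V n}
  {g g₂ : ℝ → ℝ → ℝ} {K : Fin n → ℝ} {X J : Fin n → ℝ → ℝ → ℝ} {M M₂ : ℝ}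

lemma speedGap_charSpeed (hsmall : ∀ t x, (t, x) ∈ trapezoid T R G.L → ‖u t x‖ ≤ G.κ)
    {i j : Fin n} (hij : i ≠ j) :
    SpeedGap T R G.L G.c (charSpeed G u R i) (charSpeed G u R j) := by
  have hspeed (k : Fin n) (t x : ℝ) (h : (t, x) ∈ trapezoid T R G.L) :
      charSpeed G u R k t x = G.lam k (u t x) :=
    charSpeed_eq (by linarith [abs_le_of_mem_trapezoid (G.L_nonneg i) h, le_abs_self R])
  rcases lt_or_gt_of_ne hij with h | h
  · left; intro t x hmem
    rw [hspeed _ _ _ hmem, hspeed _ _ _ hmem]; exact G.gap i j h _ (hsmall _ _ hmem)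
  · right; intro t x hmem
    rw [hspeed _ _ _ hmem, hspeed _ _ _ hmem]; exact G.gap j i h _ (hsmall _ _ hmem)

theorem lintegral_offAxis_along_characteristic_le
    (hX : ∀ i, IsFlow T G.L (K i) (charSpeed G u R i) (charSlope G u ux R i) (X i) (J i))
    (hsmall : ∀ t x, (t, x) ∈ trapezoid T R G.L → ‖u t x‖ ≤ G.κ)
    (hz : ∀ j, IsTransported T R G.L (X j) (J j) (fun t x => z t x j) g)
    (hM : ∀ j, totalMass T R G.L (fun t x => z t x j) g ≤ ENNReal.ofReal M)
    (i : Fin n) {t y : ℝ} (ht : t ∈ Icc (0 : ℝ) T) (hmem : (t, X i t y) ∈ trapezoid T R G.L) :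
    ∫⁻ s in Icc 0 t, ENNReal.ofReal (offAxis (z s (X i s y)) i) ≤
      ENNReal.ofReal (n * (1 / G.c * M)) := by
  have hcX := (hX i).continuous_curve y
  have hsub : Icc (0 : ℝ) t ⊆ Icc 0 T := Icc_subset_Icc le_rfl ht.2
  have hcross : ∀ j ∈ ({i}ᶜ : Finset (Fin n)),
      ∫⁻ s in Icc 0 t, ENNReal.ofReal |z s (X i s y) j| ≤ ENNReal.ofReal (1 / G.c * M) := by
    intro j hj
    have hji : j ≠ i := by simpa using hj
    rw [ENNReal.ofReal_mul (one_div_nonneg.2 G.c_pos.le)]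
    exact ((hz j).lintegral_along_transversal_le (hX j) G.c_pos (speedGap_charSpeed hsmall hji) ht.2
      (fun s hs => ((hX i).hasDerivWithinAt y s (hsub hs)).mono hsub)
      (fun s hs => (hX i).mem_trapezoid_of_le hs.1 hs.2 hmem)).trans (mul_le_mul_right (hM j) _)
  have hmeas (j : Fin n) : Measurable fun s => ENNReal.ofReal |z s (X i s y) j| :=
    ((hz j).cont.comp hcX).abs.measurable.ennreal_ofReal
  simp only [offAxis, ENNReal.ofReal_sum_of_nonneg fun _ _ => abs_nonneg _]
  rw [lintegral_finsetSum _ fun j _ => hmeas j,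
    ENNReal.ofReal_mul (Nat.cast_nonneg n), ENNReal.ofReal_natCast]
  refine (Finset.sum_le_card_nsmul _ _ _ hcross).trans ?_
  rw [nsmul_eq_mul]
  gcongr
  simpa using Finset.card_le_univ ({i}ᶜ : Finset (Fin n))

theorem trapezoidIntegral_offAxis_mul_le
    (hX : ∀ i, IsFlow T G.L (K i) (charSpeed G u R i) (charSlope G u ux R i) (X i) (J i))
    (hsmall : ∀ t x, (t, x) ∈ trapezoid T R G.L → ‖u t x‖ ≤ G.κ)
    (hz : ∀ j, IsTransported T R G.L (X j) (J j) (fun t x => z t x j) g)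
    (hz₂ : ∀ j, IsTransported T R G.L (X j) (J j) (fun t x => z₂ t x j) g₂)
    (hM₀ : 0 ≤ M) (hM : ∀ j, totalMass T R G.L (fun t x => z t x j) g ≤ ENNReal.ofReal M)
    (hM₂₀ : 0 ≤ M₂) (hM₂ : ∀ j, totalMass T R G.L (fun t x => z₂ t x j) g₂ ≤ ENNReal.ofReal M₂) :
    trapezoidIntegral T R G.L (fun t x => ∑ k, offAxis (z t x) k * |z₂ t x k|) ≤
      ENNReal.ofReal (n * (n * (1 / G.c * M * M₂))) := by
  have hc := G.c_pos
  have hcont (j k : Fin n) : Continuous (Function.uncurry fun t x => |z t x j| * |z₂ t x k|) :=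
    (hz j).cont.abs.mul (hz₂ k).cont.abs
  have hpair (k : Fin n) : ∀ j ∈ ({k}ᶜ : Finset (Fin n)),
      trapezoidIntegral T R G.L (fun t x => |z t x j| * |z₂ t x k|) ≤
        ENNReal.ofReal (1 / G.c * M * M₂) := by
    intro j hj
    have hjk : j ≠ k := by simpa using hj
    refine ((hz j).lintegral_mul_le (hX j) (hX k) (hz₂ k) hc
      (speedGap_charSpeed hsmall hjk)).trans ?_
    rw [ENNReal.ofReal_mul (p := 1 / G.c * M) (by positivity), ENNReal.ofReal_mul (by positivity)]
    gcongr
    exacts [hM j, hM₂ k]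
  have hcard (k : Fin n) : ((({k}ᶜ : Finset (Fin n)).card : ℕ) : ℝ) ≤ n := by
    exact_mod_cast (Finset.card_le_univ _).trans_eq (Fintype.card_fin n)
  simp only [offAxis, Finset.sum_mul]
  have houter := trapezoidIntegral_sum_le Finset.univ
    (φ := fun k t x => ∑ j ∈ ({k}ᶜ : Finset (Fin n)), |z t x j| * |z₂ t x k|)
    (fun k => continuous_finsetSum _ fun j _ => hcont j k)
    fun k _ => (trapezoidIntegral_sum_le _ (fun j => hcont j k) (hpair k)).trans
      (ENNReal.ofReal_le_ofReal (mul_le_mul_of_nonneg_right (hcard k) (by positivity)))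
  rwa [Finset.card_univ, Fintype.card_fin] at houter

end Families

/-! ### A priori bounds -/

section Apriori

variable {n a : ℕ} {G : QuantitativeSystem n a} {T R A B : ℝ} {u ut ux : ℝ → ℝ → V n}

/-- The initial state has size at most `A` in all the norms that the a priori bounds propagate. -/
structure HasInitialSize (G : QuantitativeSystem n a) (u ux : ℝ → ℝ → V n) (A : ℝ) : Prop where
  nonneg : 0 ≤ A
  norm_le : ∀ y, ‖u 0 y‖ ≤ A
  lintegral_state_le : ∀ i, ∫⁻ y, ENNReal.ofReal |u 0 y i| ≤ ENNReal.ofReal A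
  lintegral_wave_le : ∀ i, ∫⁻ y, ENNReal.ofReal |wave G u ux 0 y i| ≤ ENNReal.ofReal A

/-- In the trapezoid the solution has size at most `B` in the norms controlled by the a priori
bounds. -/
structure HasSize (G : QuantitativeSystem n a) (T R : ℝ) (u ux : ℝ → ℝ → V n) (B : ℝ) : Prop where
  norm_le : ∀ t x, (t, x) ∈ trapezoid T R G.L → ‖u t x‖ ≤ B
  state_mass_le : ∀ i,
    totalMass T R G.L (fun t x => u t x i) (stateSource G u ux) ≤ ENNReal.ofReal B
  wave_mass_le : ∀ i,
    totalMass T R G.L (fun t x => wave G u ux t x i) (waveSource G u ux) ≤ ENNReal.ofReal B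
  interaction_le : trapezoidIntegral T R G.L (totalInteraction G u ux) ≤ ENNReal.ofReal B

/-- The hypothesis of the bootstrap: the solution stays in the ball where the system is controlled,
and the total amount of interaction up to time `T` is at most `ν`. -/
structure IsControlled (G : QuantitativeSystem n a) (T R : ℝ) (u ux : ℝ → ℝ → V n) (ν : ℝ) :
    Prop where
  norm_le : ∀ t x, (t, x) ∈ trapezoid T R G.L → ‖u t x‖ ≤ G.κ
  interaction_le : trapezoidIntegral T R G.L (totalInteraction G u ux) ≤ ENNReal.ofReal ν

lemma QuantitativeSystem.C_pos (G : QuantitativeSystem n a) : 0 < G.C :=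
  zero_lt_one.trans_le G.one_le_C

lemma totalMass_le {z φ : ℝ → ℝ → ℝ} {L C q : ℝ} (hA : 0 ≤ A) (hC : 0 ≤ C) (hq : 0 ≤ q)
    (hz : ∫⁻ y, ENNReal.ofReal |z 0 y| ≤ ENNReal.ofReal A)
    (hφ : trapezoidIntegral T R L φ ≤ ENNReal.ofReal q) :
    totalMass T R L z (fun t x => C * φ t x) ≤ ENNReal.ofReal (A + C * q) := by
  rw [ENNReal.ofReal_add hA (by positivity), ENNReal.ofReal_mul hC]
  refine add_le_add ((lintegral_mono fun y => mul_le_of_le_one_left' ?_).trans hz)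
    ((trapezoidIntegral_const_mul hC).trans_le (mul_le_mul_right hφ _))
  exact indicator_le' (fun _ _ => le_rfl) (fun _ _ => zero_le_one) _

section Closure

variable {k Nu Nw q q₁ E C ν : ℝ}

/- Both masses exceed the initial size only by a multiple of the interaction, and the interaction is
quadratic in the masses with the small factor `k (Nw + Nu) ≤ 1 / 2`, which absorbs it. -/
lemma wave_mass_le_two_mul (hNw : Nw = A + C * q₁) (hNw₀ : 0 ≤ Nw)
    (hhalf : k * (Nw + Nu) ≤ 1 / 2) (hq₁ : C * q₁ ≤ k * (Nw * Nw + Nu * Nw)) : Nw ≤ 2 * A := by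
  have habsorb : k * (Nw + Nu) * Nw ≤ 1 / 2 * Nw := mul_le_mul_of_nonneg_right hhalf hNw₀
  linarith

lemma state_mass_le_of_absorb (hNu : Nu = A + C * q) (hk : 0 ≤ k) (hNw₀ : 0 ≤ Nw) (hNu₀ : 0 ≤ Nu)
    (hhalf : k * (Nw + Nu) ≤ 1 / 2) (hNw : Nw ≤ 2 * A)
    (hq : C * q ≤ k * (Nw * Nw + Nu * Nw + Nu * Nu) + C * E) : Nu ≤ 4 * A + 2 * (C * E) := by
  have habsorb : k * (Nw + Nu) * (Nw + Nu) ≤ 1 / 2 * (Nw + Nu) :=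
    mul_le_mul_of_nonneg_right hhalf (by linarith)
  have hcross : k * (Nw * Nw + Nu * Nw + Nu * Nu) ≤ k * (Nw + Nu) * (Nw + Nu) := by
    nlinarith [mul_nonneg hk (mul_nonneg hNu₀ hNw₀)]
  linarith

end Closure

section Masses

variable {K : Fin n → ℝ} {X J : Fin n → ℝ → ℝ → ℝ} {U Nu Nw : ℝ}

namespace IsExtendedSolution

theorem abs_sub_initial_le (h : IsExtendedSolution G T u ut ux)
    (hX : ∀ i, IsFlow T G.L (K i) (charSpeed G u R i) (charSlope G u ux R i) (X i) (J i))
    (hsmall : ∀ t x, (t, x) ∈ trapezoid T R G.L → ‖u t x‖ ≤ G.κ)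
    (hU₀ : 0 ≤ U) (hU : ∀ t x, (t, x) ∈ trapezoid T R G.L → ‖u t x‖ ≤ U)
    (hNu₀ : 0 ≤ Nu) (hNw₀ : 0 ≤ Nw)
    (hNu : ∀ j, totalMass T R G.L (fun t x => u t x j) (stateSource G u ux) ≤ ENNReal.ofReal Nu)
    (hNw : ∀ j, totalMass T R G.L (fun t x => wave G u ux t x j) (waveSource G u ux) ≤
      ENNReal.ofReal Nw)
    (i : Fin n) {t y : ℝ} (ht : t ∈ Icc (0 : ℝ) T) (hmem : (t, X i t y) ∈ trapezoid T R G.L) :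
    |u t (X i t y) i - u 0 y i| ≤ G.C * U * (n * (1 / G.c * Nu) + n * (1 / G.c * Nw)) := by
  have hc := G.c_pos
  have hC := G.C_pos
  have hsub : Icc (0 : ℝ) t ⊆ Icc 0 T := Icc_subset_Icc le_rfl ht.2
  have hback (s : ℝ) (hs : s ∈ Icc (0 : ℝ) t) : (s, X i s y) ∈ trapezoid T R G.L :=
    (hX i).mem_trapezoid_of_le hs.1 hs.2 hmem
  have hcX := (hX i).continuous_curve y
  have hcu : Continuous fun s => offAxis (u s (X i s y)) i :=
    (continuous_offAxis i).comp (h.cont.comp hcX)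
  have hcw : Continuous fun s => offAxis (wave G u ux s (X i s y)) i :=
    (continuous_offAxis i).comp (h.continuous_wave.comp hcX)
  have hvar := ofReal_abs_sub_le_lintegral (φ := fun s => u s (X i s y) i)
    (g := fun s => G.C * U * (offAxis (u s (X i s y)) i + offAxis (wave G u ux s (X i s y)) i)) ht.1
    (fun s hs => (hasDerivWithinAt_pi.1 (h.hasDerivWithinAt_along_flow (hX i) (hsub hs) (y := y)
      (by linarith [abs_le_of_mem_trapezoid (G.L_nonneg i) (hback s hs), le_abs_self R])) i).mono
        hsub)
    (fun s hs => by
      have hu := hsmall _ _ (hback s hs)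
      refine (G.variation_le i _ _ _ hu
        (h.charRelation (hsub hs) (by linarith [G.κ_pos]) i)).trans ?_
      exact mul_le_mul_of_nonneg_right (mul_le_mul_of_nonneg_left (hU _ _ (hback s hs)) hC.le)
        (add_nonneg (offAxis_nonneg _ _) (offAxis_nonneg _ _)))
    (continuous_const.mul (hcu.add hcw)).continuousOn
  simp only [(hX i).zero, ENNReal.ofReal_mul (mul_nonneg hC.le hU₀),
    ENNReal.ofReal_add (offAxis_nonneg _ _) (offAxis_nonneg _ _)] at hvar
  rw [lintegral_const_mul' _ _ ENNReal.ofReal_ne_top,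
    lintegral_add_left hcu.measurable.ennreal_ofReal] at hvar
  rw [← ENNReal.ofReal_le_ofReal_iff (by positivity), ENNReal.ofReal_mul (p := G.C * U)
    (by positivity), ENNReal.ofReal_add (by positivity) (by positivity)]
  exact hvar.trans (mul_le_mul_right (add_le_add
    (lintegral_offAxis_along_characteristic_le hX hsmall
      (fun j => h.isTransported_state (hX j) hsmall) hNu i ht hmem)
    (lintegral_offAxis_along_characteristic_le hX hsmall
      (fun j => h.isTransported_wave (hX j) hsmall) hNw i ht hmem)) _)

theorem trapezoidIntegral_transversalProduct_le (h : IsExtendedSolution G T u ut ux)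
    (hX : ∀ i, IsFlow T G.L (K i) (charSpeed G u R i) (charSlope G u ux R i) (X i) (J i))
    (hsmall : ∀ t x, (t, x) ∈ trapezoid T R G.L → ‖u t x‖ ≤ G.κ) (hNu₀ : 0 ≤ Nu) (hNw₀ : 0 ≤ Nw)
    (hNu : ∀ j, totalMass T R G.L (fun t x => u t x j) (stateSource G u ux) ≤ ENNReal.ofReal Nu)
    (hNw : ∀ j, totalMass T R G.L (fun t x => wave G u ux t x j) (waveSource G u ux) ≤
      ENNReal.ofReal Nw) :
    trapezoidIntegral T R G.L (fun t x => transversalProduct (u t x) (wave G u ux t x)) ≤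
      ENNReal.ofReal (n * (n * (1 / G.c * Nw * Nw)) + n * (n * (1 / G.c * Nu * Nw))) := by
  have hc := G.c_pos
  have hw (j : Fin n) := h.isTransported_wave (hX j) hsmall
  have hcont : Continuous (Function.uncurry fun t x =>
      ∑ k, offAxis (wave G u ux t x) k * |wave G u ux t x k|) :=
    continuous_finsetSum _ fun k _ =>
      ((continuous_offAxis k).comp h.continuous_wave).mul (h.continuous_wave_apply k).abs
  simp only [transversalProduct, add_mul, Finset.sum_add_distrib]
  rw [ENNReal.ofReal_add (by positivity) (by positivity)]
  exact (trapezoidIntegral_add_le hcont).trans (add_le_add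
    (trapezoidIntegral_offAxis_mul_le hX hsmall hw hw hNw₀ hNw hNw₀ hNw)
    (trapezoidIntegral_offAxis_mul_le hX hsmall (fun j => h.isTransported_state (hX j) hsmall) hw
      hNu₀ hNu hNw₀ hNw))

theorem trapezoidIntegral_resonantProduct_le (h : IsExtendedSolution G T u ut ux)
    (hX : ∀ i, IsFlow T G.L (K i) (charSpeed G u R i) (charSlope G u ux R i) (X i) (J i))
    (hsmall : ∀ t x, (t, x) ∈ trapezoid T R G.L → ‖u t x‖ ≤ G.κ)
    (hU₀ : 0 ≤ U) (hU : ∀ t x, (t, x) ∈ trapezoid T R G.L → ‖u t x‖ ≤ U) (hNw₀ : 0 ≤ Nw)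
    (hNw : ∀ j, totalMass T R G.L (fun t x => wave G u ux t x j) (waveSource G u ux) ≤
      ENNReal.ofReal Nw) :
    trapezoidIntegral T R G.L (fun t x => resonantProduct a (u t x) (wave G u ux t x)) ≤
      ENNReal.ofReal (n * (U ^ (a + 1) * (Nw * T))) := by
  have hterm (j : Fin n) : trapezoidIntegral T R G.L
      (fun t x => |u t x j| ^ (a + 1) * |wave G u ux t x j|) ≤
        ENNReal.ofReal (U ^ (a + 1) * (Nw * T)) := by
    rw [ENNReal.ofReal_mul (by positivity), ENNReal.ofReal_mul hNw₀]
    refine trapezoidIntegral_le_of_slice_le (by positivity) (fun t ht =>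
      ((h.isTransported_wave (hX j) hsmall).lintegral_slice_le (hX j) ht).trans (hNw j))
      fun t x hmem => ?_
    gcongr
    exact (norm_le_pi_norm (u t x) j).trans (hU t x hmem)
  have hcont (j : Fin n) : Continuous (Function.uncurry fun t x =>
      |u t x j| ^ (a + 1) * |wave G u ux t x j|) :=
    ((h.continuous_state_apply j).abs.pow (a + 1)).mul (h.continuous_wave_apply j).abs
  have hsum := trapezoidIntegral_sum_le Finset.univ hcont fun j _ => hterm j
  rwa [Finset.card_univ, Fintype.card_fin] at hsum

theorem trapezoidIntegral_totalInteraction_le (h : IsExtendedSolution G T u ut ux)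
    (hX : ∀ i, IsFlow T G.L (K i) (charSpeed G u R i) (charSlope G u ux R i) (X i) (J i))
    (hsmall : ∀ t x, (t, x) ∈ trapezoid T R G.L → ‖u t x‖ ≤ G.κ) (hT : 0 ≤ T)
    (hU₀ : 0 ≤ U) (hU : ∀ t x, (t, x) ∈ trapezoid T R G.L → ‖u t x‖ ≤ U)
    (hNu₀ : 0 ≤ Nu) (hNw₀ : 0 ≤ Nw)
    (hNu : ∀ j, totalMass T R G.L (fun t x => u t x j) (stateSource G u ux) ≤ ENNReal.ofReal Nu)
    (hNw : ∀ j, totalMass T R G.L (fun t x => wave G u ux t x j) (waveSource G u ux) ≤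
      ENNReal.ofReal Nw) :
    trapezoidIntegral T R G.L (totalInteraction G u ux) ≤
      ENNReal.ofReal (n * (n * (1 / G.c * Nw * Nw)) + n * (n * (1 / G.c * Nu * Nw)) +
        n * (n * (1 / G.c * Nu * Nu)) + n * (U ^ (a + 1) * (Nw * T))) := by
  have hc := G.c_pos
  have hstate (j : Fin n) := h.isTransported_state (hX j) hsmall
  have hcont : Continuous (Function.uncurry fun t x =>
      transversalProduct (u t x) (wave G u ux t x) + transversalSquare (u t x)) :=
    h.continuous_uncurry_transversalProduct.add h.continuous_uncurry_transversalSquare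
  rw [ENNReal.ofReal_add (by positivity) (by positivity),
    ENNReal.ofReal_add (by positivity) (by positivity)]
  refine (trapezoidIntegral_add_le hcont).trans (add_le_add
    ((trapezoidIntegral_add_le h.continuous_uncurry_transversalProduct).trans
      (add_le_add ?_ ?_)) ?_)
  · exact h.trapezoidIntegral_transversalProduct_le hX hsmall hNu₀ hNw₀ hNu hNw
  · exact trapezoidIntegral_offAxis_mul_le hX hsmall hstate hstate hNu₀ hNu hNu₀ hNu
  · exact h.trapezoidIntegral_resonantProduct_le hX hsmall hU₀ hU hNw₀ hNw

theorem norm_le_two_mul (h : IsExtendedSolution G T u ut ux)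
    (hX : ∀ i, IsFlow T G.L (K i) (charSpeed G u R i) (charSlope G u ux R i) (X i) (J i))
    (hsmall : ∀ t x, (t, x) ∈ trapezoid T R G.L → ‖u t x‖ ≤ G.κ) (hA : 0 ≤ A)
    (h₀ : ∀ y, ‖u 0 y‖ ≤ A) (hNu₀ : 0 ≤ Nu) (hNw₀ : 0 ≤ Nw)
    (hNu : ∀ j, totalMass T R G.L (fun t x => u t x j) (stateSource G u ux) ≤ ENNReal.ofReal Nu)
    (hNw : ∀ j, totalMass T R G.L (fun t x => wave G u ux t x j) (waveSource G u ux) ≤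
      ENNReal.ofReal Nw)
    (hhalf : G.C * (n * (1 / G.c * Nu) + n * (1 / G.c * Nw)) ≤ 1 / 2) {t x : ℝ}
    (hmem : (t, x) ∈ trapezoid T R G.L) : ‖u t x‖ ≤ 2 * A := by
  rcases isEmpty_or_nonempty (Fin n) with hn | ⟨⟨i₀⟩⟩
  · rw [Subsingleton.elim (u t x) 0, norm_zero]; positivity
  obtain ⟨⟨τ, ξ⟩, hτξ, hmax⟩ := (isCompact_trapezoid T R (G.L_nonneg i₀)).exists_isMaxOn ⟨_, hmem⟩
    h.cont.norm.continuousOn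
  have hU : ∀ t x, (t, x) ∈ trapezoid T R G.L → ‖u t x‖ ≤ ‖u τ ξ‖ := fun t x hm => hmax hm
  have habsorb : ‖u τ ξ‖ ≤ A + 1 / 2 * ‖u τ ξ‖ := by
    refine (pi_norm_le_iff_of_nonneg (by positivity)).2 fun i => ?_
    have hτ : τ ∈ Icc (0 : ℝ) T := ⟨hτξ.1, hτξ.2.1⟩
    obtain ⟨y, hy⟩ := (hX i).surjective hτ ξ
    have hvar := h.abs_sub_initial_le hX hsmall (norm_nonneg _) hU hNu₀ hNw₀ hNu hNw i hτ
      (by rwa [hy])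
    rw [hy] at hvar
    have hinit : |u 0 y i| ≤ A := (norm_le_pi_norm (u 0 y) i).trans (h₀ y)
    have hfactor := mul_le_mul_of_nonneg_right hhalf (norm_nonneg (u τ ξ))
    have htri := abs_add_le (u 0 y i) (u τ ξ i - u 0 y i)
    rw [add_sub_cancel] at htri
    rw [Real.norm_eq_abs]
    linarith
  linarith [hU t x hmem]

theorem size_bounds (h : IsExtendedSolution G T u ut ux)
    (hX : ∀ i, IsFlow T G.L (K i) (charSpeed G u R i) (charSlope G u ux R i) (X i) (J i))
    (hsmall : ∀ t x, (t, x) ∈ trapezoid T R G.L → ‖u t x‖ ≤ G.κ) (hT : 0 ≤ T)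
    (h₀ : HasInitialSize G u ux A) {q₁ q E : ℝ} (hq₁ : 0 ≤ q₁) (hq : 0 ≤ q)
    (hNw_eq : Nw = A + G.C * q₁) (hNu_eq : Nu = A + G.C * q)
    (hNu : ∀ j, totalMass T R G.L (fun t x => u t x j) (stateSource G u ux) ≤ ENNReal.ofReal Nu)
    (hNw : ∀ j, totalMass T R G.L (fun t x => wave G u ux t x j) (waveSource G u ux) ≤
      ENNReal.ofReal Nw)
    (hprod : trapezoidIntegral T R G.L
      (fun t x => transversalProduct (u t x) (wave G u ux t x)) = ENNReal.ofReal q₁)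
    (htotal : trapezoidIntegral T R G.L (totalInteraction G u ux) = ENNReal.ofReal q)
    (hhalf : G.C * (n * (n * (1 / G.c))) * (Nw + Nu) ≤ 1 / 2)
    (hE : n * ((2 * A) ^ (a + 1) * (2 * A * T)) ≤ E) :
    (∀ t x, (t, x) ∈ trapezoid T R G.L → ‖u t x‖ ≤ 2 * A) ∧ Nw ≤ 2 * A ∧
      Nu ≤ 4 * A + 2 * (G.C * E) := by
  have hc := G.c_pos
  have hC := G.C_pos
  have hA := h₀.nonneg
  have hNw₀ : 0 ≤ Nw := hNw_eq ▸ by positivity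
  have hNu₀ : 0 ≤ Nu := hNu_eq ▸ by positivity
  have hwave : Nw ≤ 2 * A := by
    have hle := h.trapezoidIntegral_transversalProduct_le hX hsmall hNu₀ hNw₀ hNu hNw
    rw [hprod, ENNReal.ofReal_le_ofReal_iff (by positivity)] at hle
    exact wave_mass_le_two_mul hNw_eq hNw₀ hhalf
      ((mul_le_mul_of_nonneg_left hle hC.le).trans_eq (by ring))
  have hnn : (n : ℝ) ≤ n * n := by exact_mod_cast Nat.le_mul_self n
  have hU (t x : ℝ) (hmem : (t, x) ∈ trapezoid T R G.L) : ‖u t x‖ ≤ 2 * A := by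
    refine h.norm_le_two_mul hX hsmall hA h₀.norm_le hNu₀ hNw₀ hNu hNw ?_ hmem
    calc G.C * (n * (1 / G.c * Nu) + n * (1 / G.c * Nw))
        = G.C * (n * (1 / G.c * (Nw + Nu))) := by ring
      _ ≤ G.C * (n * n * (1 / G.c * (Nw + Nu))) := by gcongr
      _ ≤ 1 / 2 := hhalf.trans_eq' (by ring)
  refine ⟨hU, hwave, state_mass_le_of_absorb hNu_eq (by positivity) hNw₀ hNu₀ hhalf hwave ?_⟩
  have hle := h.trapezoidIntegral_totalInteraction_le hX hsmall hT (by positivity) hU hNu₀ hNw₀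
    hNu hNw
  rw [htotal, ENNReal.ofReal_le_ofReal_iff (by positivity)] at hle
  have hresonant : n * ((2 * A) ^ (a + 1) * (Nw * T)) ≤ E := le_trans (by gcongr) hE
  calc G.C * q ≤ G.C * _ := mul_le_mul_of_nonneg_left hle hC.le
    _ ≤ G.C * (n * (n * (1 / G.c * Nw * Nw)) + n * (n * (1 / G.c * Nu * Nw)) +
        n * (n * (1 / G.c * Nu * Nu)) + E) := by gcongr
    _ = _ := by ring

end IsExtendedSolution

end Masses

lemma IsControlled.exists_interaction_eq {ν : ℝ} (hν : 0 ≤ ν) (h : IsControlled G T R u ux ν) :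
    ∃ q₁ q : ℝ, 0 ≤ q₁ ∧ q₁ ≤ q ∧ q ≤ ν ∧
      trapezoidIntegral T R G.L (fun t x => transversalProduct (u t x) (wave G u ux t x)) =
        ENNReal.ofReal q₁ ∧
      trapezoidIntegral T R G.L (totalInteraction G u ux) = ENNReal.ofReal q := by
  have hmono : trapezoidIntegral T R G.L
      (fun t x => transversalProduct (u t x) (wave G u ux t x)) ≤
        trapezoidIntegral T R G.L (totalInteraction G u ux) :=
    trapezoidIntegral_mono fun t x _ => by
      have hsquare := transversalSquare_nonneg (u t x)
      have hresonant := resonantProduct_nonneg a (u t x) (wave G u ux t x)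
      simp only [totalInteraction]
      linarith
  have hfin := ne_top_of_le_ne_top ENNReal.ofReal_ne_top h.interaction_le
  refine ⟨_, _, ENNReal.toReal_nonneg, ENNReal.toReal_mono hfin hmono,
    ENNReal.toReal_le_of_le_ofReal hν h.interaction_le,
    (ENNReal.ofReal_toReal (ne_top_of_le_ne_top hfin hmono)).symm,
    (ENNReal.ofReal_toReal hfin).symm⟩

lemma QuantitativeSystem.half_of_small (G : QuantitativeSystem n a) {S σ : ℝ} (hS : S ≤ 2 * σ)
    (hσ : 4 * G.C * (n * (n * σ)) ≤ G.c) : G.C * (n * (n * (1 / G.c))) * S ≤ 1 / 2 := by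
  have hc := G.c_pos
  have hC := G.C_pos
  calc G.C * (n * (n * (1 / G.c))) * S ≤ G.C * (n * (n * (1 / G.c))) * (2 * σ) := by gcongr
    _ = 4 * G.C * (n * (n * σ)) / G.c * (1 / 2) := by ring
    _ ≤ 1 * (1 / 2) := by gcongr; exact (div_le_one hc).2 hσ
    _ = 1 / 2 := one_mul _

theorem IsControlled.hasSize {ν E : ℝ} (hν : 0 ≤ ν) (hctrl : IsControlled G T R u ux ν)
    (h : IsExtendedSolution G T u ut ux) (hT : 0 ≤ T) (h₀ : HasInitialSize G u ux A)
    (hsmall : 4 * G.C * (n * (n * (A + G.C * ν))) ≤ G.c)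
    (hE : n * ((2 * A) ^ (a + 1) * (2 * A * T)) ≤ E) :
    HasSize G T R u ux (4 * A + 2 * (G.C * E)) := by
  have hC := G.C_pos
  have hA := h₀.nonneg
  have hE₀ : 0 ≤ G.C * E := mul_nonneg hC.le (le_trans (by positivity) hE)
  choose K hK using fun i => h.exists_isBoundedField_charSpeed R i
  choose X J hX using fun i => (hK i).exists_isFlow hT
  obtain ⟨q₁, q, hq₁, hq₁q, hqν, hprod, htotal⟩ := hctrl.exists_interaction_eq hν
  have hq := hq₁.trans hq₁q
  have hNw (i : Fin n) : totalMass T R G.L (fun t x => wave G u ux t x i) (waveSource G u ux) ≤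
      ENNReal.ofReal (A + G.C * q₁) :=
    totalMass_le hA hC.le hq₁ (h₀.lintegral_wave_le i) hprod.le
  have hNu (i : Fin n) : totalMass T R G.L (fun t x => u t x i) (stateSource G u ux) ≤
      ENNReal.ofReal (A + G.C * q) :=
    totalMass_le hA hC.le hq (h₀.lintegral_state_le i) htotal.le
  have hS : (A + G.C * q₁) + (A + G.C * q) ≤ 2 * (A + G.C * ν) := by
    linarith [mul_le_mul_of_nonneg_left hqν hC.le, mul_le_mul_of_nonneg_left hq₁q hC.le]
  obtain ⟨hU, hwave, hstate⟩ := h.size_bounds hX hctrl.norm_le hT h₀ hq₁ hq rfl rfl hNu hNw hprod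
    htotal (G.half_of_small hS hsmall) hE
  refine ⟨fun t x hmem => (hU t x hmem).trans (by linarith),
    fun i => (hNu i).trans (ENNReal.ofReal_le_ofReal hstate),
    fun i => (hNw i).trans (ENNReal.ofReal_le_ofReal (by linarith)),
    htotal.trans_le (ENNReal.ofReal_le_ofReal ?_)⟩
  linarith [mul_le_mul_of_nonneg_right G.one_le_C hq]

end Apriori

/-! ### Continuity argument -/

section Continuity

lemma forall_mem_Icc_of_step {P : ℝ → Prop} {T η : ℝ} (hη : 0 < η) (h₀ : P 0)
    (hstep : ∀ τ ∈ Icc (0 : ℝ) T, P τ → ∀ τ' ∈ Icc τ T, τ' - τ ≤ η → P τ') :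
    ∀ τ ∈ Icc (0 : ℝ) T, P τ := by
  have hind (k : ℕ) : ∀ τ ∈ Icc (0 : ℝ) T, τ ≤ k * η → P τ := by
    induction k with
    | zero =>
      intro τ hτ hk
      rwa [le_antisymm (by simpa using hk) hτ.1]
    | succ k ih =>
      intro τ hτ hk
      push_cast at hk
      have hprev : max 0 (τ - η) ≤ τ := max_le hτ.1 (by linarith)
      have hmem : max 0 (τ - η) ∈ Icc (0 : ℝ) T := ⟨le_max_left _ _, hprev.trans hτ.2⟩
      exact hstep _ hmem (ih _ hmem (max_le (by positivity) (by linarith))) τ ⟨hprev, hτ.2⟩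
        (by linarith [le_max_right 0 (τ - η)])
  intro τ hτ
  obtain ⟨k, hk⟩ := exists_nat_ge (τ / η)
  exact hind k τ hτ ((div_le_iff₀ hη).1 hk)

variable {T R L : ℝ}

lemma lintegral_cutoff_le (hL : 0 ≤ L) {f : ℝ → ℝ} {H τ s : ℝ} (hH : 0 ≤ H)
    (hf : ∀ x ∈ Icc (-R) R, f x ≤ H) :
    ∫⁻ x, cutoff τ R L s x * ENNReal.ofReal (f x) ≤ ENNReal.ofReal (H * (2 * R)) := by
  calc ∫⁻ x, cutoff τ R L s x * ENNReal.ofReal (f x)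
      ≤ ∫⁻ x, (Icc (-R) R).indicator (fun _ => ENNReal.ofReal H) x := by
        refine lintegral_mono fun x => ?_
        by_cases hmem : (s, x) ∈ trapezoid τ R L
        · have hx : x ∈ Icc (-R) R := abs_le.1 (abs_le_of_mem_trapezoid hL hmem)
          simp only [cutoff_of_mem hmem, one_mul, indicator_of_mem hx]
          exact ENNReal.ofReal_le_ofReal (hf x hx)
        · simp [cutoff_of_notMem hmem]
    _ = ENNReal.ofReal (H * (2 * R)) := by
        rw [lintegral_indicator measurableSet_Icc, setLIntegral_const, Real.volume_Icc,
          ← ENNReal.ofReal_mul hH]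
        congr 2; ring

lemma trapezoidIntegral_le_add (hL : 0 ≤ L) (hR : 0 ≤ R) {φ : ℝ → ℝ → ℝ} {H τ τ' : ℝ} (hH : 0 ≤ H)
    (hφ : ∀ t ∈ Icc (0 : ℝ) T, ∀ x ∈ Icc (-R) R, φ t x ≤ H) (hτ : 0 ≤ τ) (hττ' : τ ≤ τ')
    (hτ' : τ' ≤ T) :
    trapezoidIntegral τ' R L φ ≤
      trapezoidIntegral τ R L φ + ENNReal.ofReal (H * (2 * R) * (τ' - τ)) := by
  unfold trapezoidIntegral
  rw [← Icc_union_Ioc_eq_Icc hτ hττ', lintegral_union measurableSet_Ioc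
    (Set.disjoint_left.2 fun s hs hs' => absurd hs.2 (not_le.2 hs'.1))]
  refine add_le_add ?_ ?_
  · refine setLIntegral_mono' measurableSet_Icc fun s hs => lintegral_mono fun x => ?_
    by_cases hmem : (s, x) ∈ trapezoid τ' R L
    · simp only
      rw [cutoff_of_mem hmem, cutoff_of_mem (T := τ) ⟨hmem.1, hs.2, hmem.2.2⟩]
    · simp [cutoff_of_notMem hmem]
  · refine (setLIntegral_mono measurable_const fun s hs => lintegral_cutoff_le hL hH
      (hφ s ⟨hτ.trans hs.1.le, hs.2.trans hτ'⟩)).trans ?_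
    rw [setLIntegral_const, Real.volume_Ioc, ← ENNReal.ofReal_mul (by positivity)]

lemma exists_step_trapezoidIntegral_le (T : ℝ) (hL : 0 ≤ L) (hR : 0 ≤ R) {φ : ℝ → ℝ → ℝ}
    (hφ : Continuous (Function.uncurry φ)) {ν : ℝ} (hν : 0 < ν) :
    ∃ η > 0, ∀ τ ∈ Icc (0 : ℝ) T, trapezoidIntegral τ R L φ ≤ ENNReal.ofReal (ν / 2) →
      ∀ τ' ∈ Icc τ T, τ' - τ ≤ η → trapezoidIntegral τ' R L φ ≤ ENNReal.ofReal ν := by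
  obtain ⟨H, hH⟩ := (isCompact_Icc.prod isCompact_Icc :
    IsCompact (Icc (0 : ℝ) T ×ˢ Icc (-R) R)).exists_bound_of_continuousOn hφ.continuousOn
  refine ⟨ν / (2 * (|H| * (2 * R) + 1)), by positivity, fun τ hτ hle τ' hτ' hη => ?_⟩
  refine (trapezoidIntegral_le_add hL hR (abs_nonneg H) (fun t ht x hx =>
    (le_abs_self _).trans ((hH (t, x) ⟨ht, hx⟩).trans (le_abs_self _))) hτ.1 hτ'.1 hτ'.2).trans ?_
  rw [← add_halves ν, ENNReal.ofReal_add (by positivity) (by positivity)]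
  refine add_le_add hle (ENNReal.ofReal_le_ofReal ?_)
  rw [le_div_iff₀ (by positivity)] at hη
  linarith [hτ'.1]

lemma exists_step_norm_le {E : Type*} [NormedAddCommGroup E] (T R : ℝ) (hL : 0 ≤ L)
    {f : ℝ → ℝ → E} (hf : Continuous (Function.uncurry f)) {κ : ℝ} (hκ : 0 < κ) :
    ∃ η > 0, ∀ τ ∈ Icc (0 : ℝ) T, (∀ t x, (t, x) ∈ trapezoid τ R L → ‖f t x‖ ≤ κ / 2) →
      ∀ τ' ∈ Icc τ T, τ' - τ ≤ η → ∀ t x, (t, x) ∈ trapezoid τ' R L → ‖f t x‖ ≤ κ := by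
  have hunif := (isCompact_Icc.prod isCompact_Icc :
    IsCompact (Icc (0 : ℝ) T ×ˢ Icc (-R) R)).uniformContinuousOn_of_continuous hf.continuousOn
  obtain ⟨η, hη, hclose⟩ := Metric.uniformContinuousOn_iff_le.1 hunif (κ / 2) (by positivity)
  refine ⟨η, hη, fun τ hτ hle τ' hτ' hτη t x ⟨ht₀, ht, hx⟩ => ?_⟩
  simp only at ht₀ ht hx
  rcases le_or_gt t τ with htτ | htτ
  · linarith [hle t x ⟨ht₀, htτ, hx⟩]
  · have hxR : x ∈ Icc (-R) R := abs_le.1 (hx.trans (sub_le_self R (mul_nonneg hL ht₀)))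
    have hmem : (τ, x) ∈ trapezoid τ R L :=
      ⟨hτ.1, le_rfl, hx.trans (sub_le_sub_left (mul_le_mul_of_nonneg_left htτ.le hL) R)⟩
    have hdist := hclose (t, x) ⟨⟨ht₀, ht.trans hτ'.2⟩, hxR⟩ (τ, x) ⟨hτ, hxR⟩ (by
      rw [dist_prod_same_right, Real.dist_eq, abs_of_pos (by linarith)]
      linarith)
    rw [dist_eq_norm] at hdist
    have htri := norm_le_norm_add_norm_sub' (f t x) (f τ x)
    simp only [Function.uncurry] at hdist
    linarith [hle τ x hmem]

variable {n a : ℕ} {G : QuantitativeSystem n a} {u ut ux : ℝ → ℝ → V n}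

theorem isControlled_of_step {ν B : ℝ} (hL : 0 ≤ G.L) (hR : 0 ≤ R) (hν : 0 < ν)
    (hBκ : B ≤ G.κ / 2) (hBν : B ≤ ν / 2) (h : IsExtendedSolution G T u ut ux)
    (h₀ : ∀ x, ‖u 0 x‖ ≤ G.κ)
    (hsize : ∀ τ ∈ Icc (0 : ℝ) T, IsControlled G τ R u ux ν → HasSize G τ R u ux B) :
    ∀ τ ∈ Icc (0 : ℝ) T, IsControlled G τ R u ux ν := by
  obtain ⟨η₁, hη₁, hnorm⟩ := exists_step_norm_le T R hL h.cont G.κ_pos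
  obtain ⟨η₂, hη₂, hinteraction⟩ :=
    exists_step_trapezoidIntegral_le T hL hR h.continuous_totalInteraction hν
  refine forall_mem_Icc_of_step (lt_min hη₁ hη₂) ⟨fun t x hmem => ?_, ?_⟩
    fun τ hτ hctrl τ' hτ' hη => ?_
  · have ht : t = 0 := le_antisymm hmem.2.1 hmem.1
    rw [ht]
    exact h₀ x
  · simp [trapezoidIntegral]
  · have hBτ := hsize τ hτ hctrl
    exact ⟨hnorm τ hτ (fun t x hmem => (hBτ.norm_le t x hmem).trans hBκ) τ' hτ'
        (hη.trans (min_le_left _ _)),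
      hinteraction τ hτ (hBτ.interaction_le.trans (ENNReal.ofReal_le_ofReal hBν)) τ' hτ'
        (hη.trans (min_le_right _ _))⟩

theorem exists_hasSize (G : QuantitativeSystem n a) (hL : 0 ≤ G.L) {A T₀ : ℝ} (hA : 0 < A)
    (hT₀ : 0 < T₀) :
    ∃ ε₀ B : ℝ, 0 < ε₀ ∧ 0 < B ∧ ∀ (ε T R : ℝ) (u ut ux : ℝ → ℝ → V n), 0 < ε → ε ≤ ε₀ → 0 ≤ T →
      T * ε ^ (a + 1) ≤ T₀ → 0 ≤ R → IsExtendedSolution G T u ut ux →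
      HasInitialSize G u ux (A * ε) →
      HasSize G T R u ux (B * ε) ∧ ∀ t x, (t, x) ∈ trapezoid T R G.L → ‖u t x‖ ≤ G.κ := by
  have hc := G.c_pos
  have hC := G.C_pos
  have hκ := G.κ_pos
  set E : ℝ := n * ((2 * A) ^ (a + 1) * (2 * A * T₀)) with hE
  set B : ℝ := 4 * A + 2 * (G.C * E) with hB
  set ν : ℝ := G.c / (8 * G.C ^ 2 * (n ^ 2 + 1))
  have hE₀ : 0 ≤ E := by positivity
  have hν : 0 < ν := by positivity
  have hBpos : 0 < B := by positivity
  refine ⟨min G.κ ν / (2 * B), B, by positivity, hBpos, ?_⟩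
  intro ε T R u ut ux hε hεle hT hTε hR h h₀
  rw [le_div_iff₀ (by positivity), le_min_iff] at hεle
  have hAB : A * ε ≤ B * ε := by gcongr; linarith [mul_nonneg hC.le hE₀]
  have hBε : 4 * (A * ε) + 2 * (G.C * (E * ε)) = B * ε := by rw [hB]; ring
  have hsmall : 4 * G.C * (n * (n * (A * ε + G.C * ν))) ≤ G.c := by
    have hAν : A * ε ≤ G.C * ν := by nlinarith [G.one_le_C]
    calc 4 * G.C * (n * (n * (A * ε + G.C * ν)))
        ≤ 4 * G.C * (n * (n * (G.C * ν + G.C * ν))) := by gcongr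
      _ = 8 * G.C ^ 2 * n ^ 2 * ν := by ring
      _ ≤ 8 * G.C ^ 2 * (n ^ 2 + 1) * ν := by gcongr; linarith
      _ = G.c := mul_div_cancel₀ _ (by positivity)
  have hsize (τ : ℝ) (hτ : τ ∈ Icc (0 : ℝ) T) (hctrl : IsControlled G τ R u ux ν) :
      HasSize G τ R u ux (B * ε) := by
    refine hBε ▸ hctrl.hasSize hν.le (h.mono hτ.2) hτ.1 h₀ hsmall ?_
    calc n * ((2 * (A * ε)) ^ (a + 1) * (2 * (A * ε) * τ))
        = n * ((2 * A) ^ (a + 1) * (2 * A * (τ * ε ^ (a + 1)))) * ε := by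
          rw [show 2 * (A * ε) = 2 * A * ε by ring, mul_pow]; ring
      _ ≤ E * ε := by
          rw [hE]
          have hτε : τ * ε ^ (a + 1) ≤ T₀ := le_trans (by gcongr; exact hτ.2) hTε
          gcongr
  have hctrl := isControlled_of_step hL hR hν (by linarith) (by linarith) h
    (fun x => (h₀.norm_le x).trans (by linarith)) hsize T ⟨hT, le_rfl⟩
  exact ⟨hsize T ⟨hT, le_rfl⟩ hctrl, hctrl.norm_le⟩

end Continuity

/-! ### Displacement of the characteristics -/

section Displacement

variable {n a : ℕ} {G : QuantitativeSystem n a} {T R B ε : ℝ} {K : Fin n → ℝ}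
  {u ut ux : ℝ → ℝ → V n} {X J : Fin n → ℝ → ℝ → ℝ}

lemma abs_pow_succ_sub_pow_succ_le {x y r : ℝ} (hx : |x| ≤ r) (hy : |y| ≤ r) (m : ℕ) :
    |x ^ (m + 1) - y ^ (m + 1)| ≤ (m + 1) * r ^ m * |x - y| :=
  calc |x ^ (m + 1) - y ^ (m + 1)|
      ≤ |x - y| * (m + 1 : ℕ) * max |x| |y| ^ m := abs_pow_sub_pow_le x y (m + 1)
    _ ≤ |x - y| * (m + 1 : ℕ) * r ^ m := by gcongr; exact max_le hx hy
    _ = (m + 1) * r ^ m * |x - y| := by push_cast; ring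

/-- The bound, in units of `ε ^ (a + 2)`, for the part of the variation of the characteristic speeds
which is not caused by waves of the other families, when the solution has size `B * ε`. -/
def speedError (G : QuantitativeSystem n a) (i : Fin n) (B : ℝ) : ℝ :=
  G.C * B ^ (a + 2) + |G.d i| * ((a + 1) * B ^ a * (G.C * B * (n / G.c * B + n / G.c * B)))

lemma speedError_nonneg (hB : 0 ≤ B) (i : Fin n) : 0 ≤ speedError G i B := by
  have hc := G.c_pos
  have hC := G.C_pos
  unfold speedError
  positivity

lemma abs_lam_sub_initial_le (h : IsExtendedSolution G T u ut ux)
    (hX : ∀ i, IsFlow T G.L (K i) (charSpeed G u R i) (charSlope G u ux R i) (X i) (J i))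
    (hsmall : ∀ t x, (t, x) ∈ trapezoid T R G.L → ‖u t x‖ ≤ G.κ) (hBε : 0 ≤ B * ε)
    (hsize : HasSize G T R u ux (B * ε)) (i : Fin n) {t y : ℝ} (ht : t ∈ Icc (0 : ℝ) T)
    (hmem : (t, X i t y) ∈ trapezoid T R G.L) :
    |G.lam i (u t (X i t y)) - (G.lam i 0 + G.d i * u 0 y i ^ (a + 1))| ≤
      speedError G i B * ε ^ (a + 2) + G.C * offAxis (u t (X i t y)) i := by
  have hC := G.C_pos
  have hmem₀ := (hX i).mem_trapezoid_of_le le_rfl ht.1 hmem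
  rw [(hX i).zero] at hmem₀
  set v := u t (X i t y)
  have htaylor := G.lam_taylor i v (hsmall _ _ hmem)
  have hvariation : |v i - u 0 y i| ≤
      G.C * (B * ε) * (n * (1 / G.c * (B * ε)) + n * (1 / G.c * (B * ε))) :=
    h.abs_sub_initial_le hX hsmall hBε hsize.norm_le hBε hBε hsize.state_mass_le
      hsize.wave_mass_le i ht hmem
  have hv : |v i| ≤ B * ε := (norm_le_pi_norm v i).trans (hsize.norm_le _ _ hmem)
  have hv₀ : |u 0 y i| ≤ B * ε := (norm_le_pi_norm (u 0 y) i).trans (hsize.norm_le _ _ hmem₀)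
  have hpow : |G.d i * (v i ^ (a + 1) - u 0 y i ^ (a + 1))| ≤
      |G.d i| * ((a + 1) * B ^ a * (G.C * B * (n / G.c * B + n / G.c * B))) * ε ^ (a + 2) :=
    calc |G.d i * (v i ^ (a + 1) - u 0 y i ^ (a + 1))|
        = |G.d i| * |v i ^ (a + 1) - u 0 y i ^ (a + 1)| := abs_mul _ _
      _ ≤ |G.d i| * ((a + 1) * (B * ε) ^ a * |v i - u 0 y i|) := by
          gcongr; exact abs_pow_succ_sub_pow_succ_le hv hv₀ a
      _ ≤ |G.d i| * ((a + 1) * (B * ε) ^ a *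
            (G.C * (B * ε) * (n * (1 / G.c * (B * ε)) + n * (1 / G.c * (B * ε))))) := by gcongr
      _ = _ := by rw [mul_pow]; ring
  have hpow' : |v i| ^ (a + 2) ≤ B ^ (a + 2) * ε ^ (a + 2) := by
    rw [← mul_pow]; gcongr
  calc |G.lam i v - (G.lam i 0 + G.d i * u 0 y i ^ (a + 1))|
      = |(G.lam i v - G.lam i 0 - G.d i * v i ^ (a + 1)) +
          G.d i * (v i ^ (a + 1) - u 0 y i ^ (a + 1))| := by congr 1; ring
    _ ≤ G.C * (|v i| ^ (a + 2) + offAxis v i) +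
          |G.d i| * ((a + 1) * B ^ a * (G.C * B * (n / G.c * B + n / G.c * B))) * ε ^ (a + 2) :=
        (abs_add_le _ _).trans (add_le_add htaylor hpow)
    _ ≤ G.C * (B ^ (a + 2) * ε ^ (a + 2) + offAxis v i) +
          |G.d i| * ((a + 1) * B ^ a * (G.C * B * (n / G.c * B + n / G.c * B))) * ε ^ (a + 2) := by
        gcongr
    _ = speedError G i B * ε ^ (a + 2) + G.C * offAxis v i := by rw [speedError]; ring

lemma lintegral_const_add_const_mul {φ : ℝ → ℝ} {E C : ℝ} (hE : 0 ≤ E) (hC : 0 ≤ C)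
    (hφ : ∀ s, 0 ≤ φ s) :
    ∫⁻ s in Icc 0 T, ENNReal.ofReal (E + C * φ s) =
      ENNReal.ofReal E * ENNReal.ofReal T +
        ENNReal.ofReal C * ∫⁻ s in Icc 0 T, ENNReal.ofReal (φ s) := by
  simp only [ENNReal.ofReal_add hE (mul_nonneg hC (hφ _)), ENNReal.ofReal_mul hC]
  rw [lintegral_add_left measurable_const, lintegral_const_mul' _ _ ENNReal.ofReal_ne_top,
    setLIntegral_const, Real.volume_Icc, sub_zero]

lemma abs_displacement_le (h : IsExtendedSolution G T u ut ux)
    (hX : ∀ i, IsFlow T G.L (K i) (charSpeed G u R i) (charSlope G u ux R i) (X i) (J i))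
    (hsmall : ∀ t x, (t, x) ∈ trapezoid T R G.L → ‖u t x‖ ≤ G.κ) (hB : 0 ≤ B) (hε : 0 ≤ ε)
    (hsize : HasSize G T R u ux (B * ε)) (i : Fin n) {y : ℝ}
    (hmem : (T, X i T y) ∈ trapezoid T R G.L) :
    |X i T y - (y + T * (G.lam i 0 + G.d i * u 0 y i ^ (a + 1)))| ≤
      (speedError G i B * (T * ε ^ (a + 1)) + G.C * (n / G.c * B)) * ε := by
  have hC := G.C_pos
  have hc := G.c_pos
  have hT : 0 ≤ T := hmem.1
  have hE := speedError_nonneg (G := G) hB i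
  set k := G.lam i 0 + G.d i * u 0 y i ^ (a + 1)
  set E := speedError G i B * ε ^ (a + 2)
  have hoff : Continuous fun s => offAxis (u s (X i s y)) i :=
    (continuous_offAxis i).comp (h.cont.comp ((hX i).continuous_curve y))
  have hint := ofReal_abs_sub_le_lintegral (φ := fun s => X i s y - s * k)
    (φ' := fun s => G.lam i (u s (X i s y)) - k)
    (g := fun s => E + G.C * offAxis (u s (X i s y)) i) hT
    (fun s hs => by
      have hmem' := (hX i).mem_trapezoid_of_le hs.1 hs.2 hmem
      have hx := (abs_le_of_mem_trapezoid (G.L_nonneg i) hmem').trans (le_abs_self R)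
      have hderiv := (hX i).hasDerivWithinAt y s hs
      rw [charSpeed_eq (by linarith)] at hderiv
      exact hderiv.sub (by simpa using (hasDerivWithinAt_id s (Icc 0 T)).mul_const k))
    (fun s hs => abs_lam_sub_initial_le h hX hsmall (by positivity) hsize i hs
      ((hX i).mem_trapezoid_of_le hs.1 hs.2 hmem))
    (continuous_const.add (continuous_const.mul hoff)).continuousOn
  have hcross := lintegral_offAxis_along_characteristic_le hX hsmall
    (fun j => h.isTransported_state (hX j) hsmall) hsize.state_mass_le i ⟨hT, le_rfl⟩ hmem
  have hbound : ENNReal.ofReal |X i T y - T * k - (X i 0 y - 0 * k)| ≤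
      ENNReal.ofReal (E * T + G.C * (n * (1 / G.c * (B * ε)))) :=
    calc ENNReal.ofReal |X i T y - T * k - (X i 0 y - 0 * k)|
        ≤ ∫⁻ s in Icc 0 T, ENNReal.ofReal (E + G.C * offAxis (u s (X i s y)) i) := hint
      _ = ENNReal.ofReal E * ENNReal.ofReal T + ENNReal.ofReal G.C *
            ∫⁻ s in Icc 0 T, ENNReal.ofReal (offAxis (u s (X i s y)) i) :=
          lintegral_const_add_const_mul (by positivity) hC.le fun s => offAxis_nonneg _ _
      _ ≤ ENNReal.ofReal E * ENNReal.ofReal T + ENNReal.ofReal G.C *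
            ENNReal.ofReal (n * (1 / G.c * (B * ε))) := by gcongr
      _ = ENNReal.ofReal (E * T + G.C * (n * (1 / G.c * (B * ε)))) := by
          rw [← ENNReal.ofReal_mul (by positivity), ← ENNReal.ofReal_mul hC.le,
            ← ENNReal.ofReal_add (by positivity) (by positivity)]
  rw [ENNReal.ofReal_le_ofReal_iff (by positivity), (hX i).zero] at hbound
  calc |X i T y - (y + T * k)| = |X i T y - T * k - (y - 0 * k)| := by congr 1; ring
    _ ≤ E * T + G.C * (n * (1 / G.c * (B * ε))) := hbound
    _ = (speedError G i B * (T * ε ^ (a + 1)) + G.C * (n / G.c * B)) * ε := by ring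

theorem exists_initial_position_le (G : QuantitativeSystem n a) (i : Fin n) {A T₀ : ℝ} (hA : 0 < A)
    (hT₀ : 0 < T₀) :
    ∃ ε₀ M : ℝ, 0 < ε₀ ∧ ∀ (ε T : ℝ) (u ut ux : ℝ → ℝ → V n), 0 < ε → ε ≤ ε₀ → 0 ≤ T →
      T * ε ^ (a + 1) ≤ T₀ → IsExtendedSolution G T u ut ux → HasInitialSize G u ux (A * ε) →
      ∀ y₁ y₂, y₁ < y₂ →
        y₁ + T * G.d i * u 0 y₁ i ^ (a + 1) ≤ y₂ + T * G.d i * u 0 y₂ i ^ (a + 1) + M * ε := by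
  have hL := G.L_nonneg i
  obtain ⟨ε₀, B, hε₀, hB, hsize⟩ := exists_hasSize G hL hA hT₀
  set M := speedError G i B * T₀ + G.C * (n / G.c * B) with hM
  refine ⟨ε₀, 2 * M, hε₀, fun ε T u ut ux hε hε_le hT hTε h h₀ y₁ y₂ hy => ?_⟩
  set R := |y₁| + |y₂| + 2 * (G.L * T)
  obtain ⟨hB_size, hsmall⟩ := hsize ε T R u ut ux hε hε_le hT hTε (by positivity) h h₀
  choose K hK using fun j => h.exists_isBoundedField_charSpeed R j
  choose X J hX using fun j => (hK j).exists_isFlow hT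
  have hdisplacement (y : ℝ) (hyR : |y| ≤ |y₁| + |y₂|) :
      |X i T y - (y + T * (G.lam i 0 + G.d i * u 0 y i ^ (a + 1)))| ≤ M * ε := by
    have hspeed := (hX i).speed_le y 0 T le_rfl hT le_rfl
    rw [(hX i).zero, sub_zero] at hspeed
    have hmem : |X i T y| ≤ R - G.L * T := by linarith [abs_sub_abs_le_abs_sub (X i T y) y]
    refine (abs_displacement_le h hX hsmall hB.le hε.le hB_size i ⟨hT, le_rfl, hmem⟩).trans ?_
    have hE := speedError_nonneg (G := G) hB.le i
    rw [hM]
    gcongr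
  have h₁ := abs_le.1 (hdisplacement y₁ (le_add_of_nonneg_right (abs_nonneg _)))
  have h₂ := abs_le.1 (hdisplacement y₂ (le_add_of_nonneg_left (abs_nonneg _)))
  linarith [(hX i).strictMono T hy, h₁.1, h₂.2]

end Displacement

/-! ### Initial data and lifespan -/

section InitialData

lemma norm_le_integral_norm_deriv {E : Type*} [NormedAddCommGroup E] [NormedSpace ℝ E]
    [CompleteSpace E] {f : ℝ → E} (hf : Differentiable ℝ f) (hfi : Integrable f)
    (hfi' : Integrable (deriv f)) (y : ℝ) : ‖f y‖ ≤ ∫ x, ‖deriv f x‖ := by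
  have hderiv (x : ℝ) (_ : x ∈ Iic y) : HasDerivAt f (deriv f x) x := (hf x).hasDerivAt
  have htendsto := tendsto_zero_of_hasDerivAt_of_integrableOn_Iic hderiv hfi'.integrableOn
    hfi.integrableOn
  have hftc := integral_Iic_of_hasDerivAt_of_tendsto' hderiv hfi'.integrableOn htendsto
  rw [sub_zero] at hftc
  calc ‖f y‖ = ‖∫ x in Iic y, deriv f x‖ := by rw [hftc]
    _ ≤ ∫ x in Iic y, ‖deriv f x‖ := norm_integral_le_integral_norm _
    _ ≤ ∫ x, ‖deriv f x‖ :=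
        setIntegral_le_integral hfi'.norm (Eventually.of_forall fun _ => norm_nonneg _)

lemma lintegral_ofReal_le_of_integral_le {α : Type*} [MeasurableSpace α] {μ : Measure α}
    {g h : α → ℝ} (hh : Integrable h μ) (h₀ : ∀ x, 0 ≤ h x) (hgh : ∀ x, g x ≤ h x) {c : ℝ}
    (hc : ∫ x, h x ∂μ ≤ c) : ∫⁻ x, ENNReal.ofReal (g x) ∂μ ≤ ENNReal.ofReal c :=
  calc ∫⁻ x, ENNReal.ofReal (g x) ∂μ ≤ ∫⁻ x, ENNReal.ofReal (h x) ∂μ :=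
        lintegral_mono fun x => ENNReal.ofReal_le_ofReal (hgh x)
    _ = ENNReal.ofReal (∫ x, h x ∂μ) :=
        (ofReal_integral_eq_lintegral_ofReal hh (Eventually.of_forall h₀)).symm
    _ ≤ ENNReal.ofReal c := ENNReal.ofReal_le_ofReal hc

lemma exists_gt_lt_of_hasDerivAt_neg {g : ℝ → ℝ} {g' x : ℝ} (h : HasDerivAt g g' x)
    (hg' : g' < 0) : ∃ y, x < y ∧ g y < g x := by
  have hslope := (hasDerivAt_iff_tendsto_slope.1 h).mono_left (nhdsGT_le_nhdsNE x)
  obtain ⟨y, hy, hxy⟩ := ((hslope.eventually (gt_mem_nhds hg')).and self_mem_nhdsWithin).exists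
  rw [slope_def_field, div_lt_iff₀ (sub_pos.2 hxy), zero_mul, sub_neg] at hy
  exact ⟨y, hxy, hy⟩

variable {n a : ℕ} {S : HypSys n} {G : QuantitativeSystem n a} (D : InitData n) {K₁ K₂ ε : ℝ}

lemma contDiff_initialData (ε : ℝ) : ContDiff ℝ 1 (D.f ε) :=
  D.smooth.comp (contDiff_const.prodMk contDiff_id)

lemma tendsto_inv_smul_initialData (x : ℝ) :
    Tendsto (fun ε => ε⁻¹ • D.f ε x) (𝓝[>] 0) (𝓝 (D.psi x)) := by
  have hsmooth : ContDiff ℝ 1 fun ε : ℝ => D.f ε x :=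
    D.smooth.comp (contDiff_id.prodMk contDiff_const)
  simpa [D.zero, InitData.psi] using
    (hsmooth.differentiable one_ne_zero 0).hasDerivAt.tendsto_slope_zero_right

lemma hasDerivAt_psi (x : ℝ) (i : Fin n) :
    HasDerivAt (fun y => D.psi y i) (deriv D.psi x i) x := by
  have hsmooth : ContDiff ℝ 1 D.psi := D.psi_smooth
  exact hasDerivAt_pi.1 (hsmooth.differentiable one_ne_zero x).hasDerivAt i

variable {D}

lemma norm_initialData_le (h : D.Small K₁ K₂ ε) (y : ℝ) : ‖D.f ε y‖ ≤ K₁ * ε := by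
  obtain ⟨hi', hi, hle, -⟩ := h
  have hf := contDiff_initialData D ε
  have hderiv : Integrable (deriv (D.f ε)) :=
    hi'.mono' (hf.continuous_deriv le_rfl).aestronglyMeasurable
      (Eventually.of_forall fun _ => norm_le_eunorm _)
  have hdata : Integrable (D.f ε) :=
    hi.mono' hf.continuous.aestronglyMeasurable (Eventually.of_forall fun _ => norm_le_eunorm _)
  calc ‖D.f ε y‖ ≤ ∫ x, ‖deriv (D.f ε) x‖ :=
        norm_le_integral_norm_deriv (hf.differentiable one_ne_zero) hdata hderiv y
    _ ≤ ∫ x, eunorm (deriv (D.f ε) x) :=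
        integral_mono hderiv.norm hi' fun _ => norm_le_eunorm _
    _ ≤ K₁ * ε := hle

lemma norm_psi_le (hsmall : ∀ ε ∈ Ioc (0 : ℝ) D.ε₁, D.Small K₁ K₂ ε) (x : ℝ) : ‖D.psi x‖ ≤ K₁ := by
  refine le_of_tendsto (tendsto_inv_smul_initialData D x).norm ?_
  filter_upwards [Ioc_mem_nhdsGT D.ε₁_pos] with ε hε
  rw [norm_smul, norm_inv, Real.norm_of_nonneg hε.1.le, inv_mul_le_iff₀ hε.1, mul_comm]
  exact norm_initialData_le (hsmall ε hε) x

lemma hasInitialSize_of_small {T A : ℝ} {u ut ux : ℝ → ℝ → V n}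
    (h : IsExtendedSolution G T u ut ux) (hu₀ : u 0 = D.f ε) (hsmall : D.Small K₁ K₂ ε)
    (hε : 0 ≤ ε) (hA : 0 ≤ A) (hA₁ : G.C * K₁ ≤ A) (hA₂ : K₂ / (D.M + 1) ≤ A)
    (hAκ : A * ε ≤ G.κ) : HasInitialSize G u ux (A * ε) := by
  have hC := G.C_pos
  have hnorm (y : ℝ) : ‖D.f ε y‖ ≤ A * ε := by
    have hK₁ : 0 ≤ K₁ * ε := (norm_nonneg _).trans (norm_initialData_le hsmall y)
    calc ‖D.f ε y‖ ≤ K₁ * ε := norm_initialData_le hsmall y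
      _ ≤ G.C * (K₁ * ε) := le_mul_of_one_le_left hK₁ G.one_le_C
      _ = G.C * K₁ * ε := by ring
      _ ≤ A * ε := by gcongr
  have hux (y : ℝ) : ux 0 y = deriv (D.f ε) y := by rw [← hu₀, (h.hasDerivAt 0 y).deriv]
  obtain ⟨hi', hi, hle', hle⟩ := hsmall
  refine ⟨by positivity, fun y => hu₀ ▸ hnorm y, fun i => ?_, fun i => ?_⟩
  · refine lintegral_ofReal_le_of_integral_le hi (fun _ => eunorm_nonneg _) (fun y => ?_)
      (hle.trans (by gcongr))
    rw [hu₀]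
    exact (norm_le_pi_norm (D.f ε y) i).trans (norm_le_eunorm _)
  · refine lintegral_ofReal_le_of_integral_le (hi'.const_mul G.C)
      (fun _ => mul_nonneg hC.le (eunorm_nonneg _)) (fun y => ?_) ?_
    · have hwave := G.abs_leftComponents_le (u 0 y) (hu₀ ▸ (hnorm y).trans hAκ) i (ux 0 y)
      rw [← hux y]
      exact hwave.trans (by gcongr; exact norm_le_eunorm _)
    · rw [integral_const_mul]
      calc G.C * ∫ y, eunorm (deriv (D.f ε) y) ≤ G.C * (K₁ * ε) := by gcongr
        _ = G.C * K₁ * ε := by ring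
        _ ≤ A * ε := by gcongr

/-- The quantity whose supremum over `J₁` and over `x` is `blowRate S D a`. -/
def blowTerm (S : HypSys n) (D : InitData n) (a : ℕ) (i : Fin n) (x : ℝ) : ℝ :=
  -(1 / (a.factorial : ℝ)) * S.axisDeriv i (a + 1) * D.psi x i ^ a *
    deriv (fun x' => D.psi x' i) x

lemma bddAbove_range_blowTerm (S : HypSys n) (a : ℕ)
    (hsmall : ∀ ε ∈ Ioc (0 : ℝ) D.ε₁, D.Small K₁ K₂ ε) (i : Fin n) :
    BddAbove (range (blowTerm S D a i)) := by
  obtain ⟨M, hM⟩ := D.M_bdd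
  refine ⟨|-(1 / (a.factorial : ℝ)) * S.axisDeriv i (a + 1)| * K₁ ^ a * M, ?_⟩
  rintro _ ⟨x, rfl⟩
  have hpsi : |D.psi x i| ≤ K₁ := (norm_le_pi_norm (D.psi x) i).trans (norm_psi_le hsmall x)
  have hderiv : |deriv D.psi x i| ≤ M :=
    ((norm_le_pi_norm (deriv D.psi x) i).trans (norm_le_eunorm _)).trans (hM ⟨x, rfl⟩)
  have hK₁ : 0 ≤ K₁ := (abs_nonneg _).trans hpsi
  refine (le_abs_self _).trans ?_
  rw [blowTerm, (hasDerivAt_psi D x i).deriv, abs_mul, abs_mul, abs_pow]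
  gcongr

lemma blowRate_pos (hsmall : ∀ ε ∈ Ioc (0 : ℝ) D.ε₁, D.Small K₁ K₂ ε) {i : Fin n}
    (hi : ¬ S.WLD i ∧ S.IsAlphaOf i a) {x : ℝ}
    (hneg : S.axisDeriv i (a + 1) * D.psi x i ^ a * deriv (fun x' => D.psi x' i) x < 0) :
    0 < blowRate S D a :=
  calc (0 : ℝ) < 1 / (a.factorial : ℝ) *
          -(S.axisDeriv i (a + 1) * D.psi x i ^ a * deriv (fun x' => D.psi x' i) x) :=
        mul_pos (by positivity) (neg_pos.2 hneg)
    _ = blowTerm S D a i x := by rw [blowTerm]; ring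
    _ ≤ ⨆ x, blowTerm S D a i x := le_ciSup (bddAbove_range_blowTerm S a hsmall i) x
    _ ≤ blowRate S D a :=
        le_ciSup (f := fun i : {i : Fin n // ¬ S.WLD i ∧ S.IsAlphaOf i a} =>
          ⨆ x, blowTerm S D a i x) (finite_range _).bddAbove ⟨i, hi⟩

lemma exists_lt_blowTerm_of_lt_blowRate (hJ : ∃ i : Fin n, ¬ S.WLD i ∧ S.IsAlphaOf i a) {r : ℝ}
    (hr : r < blowRate S D a) : ∃ i x, r < blowTerm S D a i x := by
  have : Nonempty {i : Fin n // ¬ S.WLD i ∧ S.IsAlphaOf i a} := nonempty_subtype.2 hJ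
  obtain ⟨i, hi⟩ := exists_lt_of_lt_ciSup hr
  obtain ⟨x, hx⟩ := exists_lt_of_lt_ciSup hi
  exact ⟨i, x, hx⟩

/-- The position at the rescaled time `T₀` of the characteristic starting at `y`, in the frame
moving with the unperturbed speed, when the rescaled `i`-th component of the data is `φ`. -/
def rescaledPosition (G : QuantitativeSystem n a) (i : Fin n) (T₀ : ℝ) (φ : ℝ → ℝ) (y : ℝ) : ℝ :=
  y + T₀ * G.d i * φ y ^ (a + 1)

lemma exists_rescaledPosition_psi_lt
    (hGd : ∀ i, G.d i = S.axisDeriv i (a + 1) / ((a + 1).factorial : ℝ)) {T₀ : ℝ} (hT₀ : 0 < T₀)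
    {i : Fin n} {x : ℝ} (hx : T₀⁻¹ < blowTerm S D a i x) :
    ∃ y, x < y ∧ rescaledPosition G i T₀ (fun z => D.psi z i) y <
      rescaledPosition G i T₀ (fun z => D.psi z i) x := by
  have hderiv : HasDerivAt (rescaledPosition G i T₀ fun z => D.psi z i)
      (1 + T₀ * G.d i * ((a + 1 : ℕ) * D.psi x i ^ a * deriv D.psi x i)) x :=
    (hasDerivAt_id x).add (((hasDerivAt_psi D x i).pow (a + 1)).const_mul (T₀ * G.d i))
  refine exists_gt_lt_of_hasDerivAt_neg hderiv ?_
  calc 1 + T₀ * G.d i * ((a + 1 : ℕ) * D.psi x i ^ a * deriv D.psi x i)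
      = 1 - T₀ * blowTerm S D a i x := by
        rw [blowTerm, hGd, (hasDerivAt_psi D x i).deriv, Nat.factorial_succ]
        push_cast
        field_simp
        ring
    _ < 0 := sub_neg.2 ((inv_lt_iff_one_lt_mul₀' hT₀).1 hx)

theorem exists_rescaledPosition_le
    (hG : ∀ u, ‖u‖ ≤ 2 * G.κ → (∀ i, G.lam i u = S.lam i u ∧ G.l i u = S.l i u) ∧ G.B u = S.B u)
    (hsmall : ∀ ε ∈ Ioc (0 : ℝ) D.ε₁, D.Small K₁ K₂ ε) (i : Fin n) {T₀ : ℝ} (hT₀ : 0 < T₀) :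
    ∃ ε₀ M : ℝ, 0 < ε₀ ∧ ∀ ε ∈ Ioc 0 ε₀,
      ENNReal.ofReal (T₀ / ε ^ (a + 1)) < S.lifespan (D.f ε) → ∀ y₁ y₂, y₁ < y₂ →
        rescaledPosition G i T₀ (fun z => (ε⁻¹ • D.f ε z) i) y₁ ≤
          rescaledPosition G i T₀ (fun z => (ε⁻¹ • D.f ε z) i) y₂ + M * ε := by
  have hC := G.C_pos
  have hκ := G.κ_pos
  set A := G.C * |K₁| + |K₂ / (D.M + 1)| + 1 with hA_def
  have hA : 0 < A := by positivity
  have hA₁ : G.C * K₁ ≤ A :=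
    calc G.C * K₁ ≤ G.C * |K₁| := by gcongr; exact le_abs_self _
      _ ≤ A := by linarith [abs_nonneg (K₂ / (D.M + 1))]
  have hA₂ : K₂ / (D.M + 1) ≤ A :=
    (le_abs_self _).trans (by rw [hA_def]; linarith [mul_nonneg hC.le (abs_nonneg K₁)])
  obtain ⟨ε₀, M, hε₀, hordered⟩ := exists_initial_position_le G i hA hT₀
  refine ⟨min (min ε₀ D.ε₁) (G.κ / A), M,
    lt_min (lt_min hε₀ D.ε₁_pos) (by positivity), fun ε ⟨hε, hε_le⟩ hlife y₁ y₂ hy => ?_⟩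
  obtain ⟨⟨hε_le₀, hε_le₁⟩, hε_leκ⟩ := by simpa only [le_min_iff] using hε_le
  obtain ⟨T, hT⟩ := lt_iSup_iff.1 hlife
  obtain ⟨⟨v, hv⟩, hT⟩ := lt_iSup_iff.1 hT
  have hT_gt : T₀ / ε ^ (a + 1) < T := (ENNReal.ofReal_lt_ofReal_iff'.1 hT).1
  have hT_pos : 0 < T₀ / ε ^ (a + 1) := by positivity
  obtain ⟨u, ut, ux, hu, hu₀⟩ := exists_isExtendedSolution hG (hT_pos.trans hT_gt) hv
  have hinit := hasInitialSize_of_small hu (funext hu₀) (hsmall ε ⟨hε, hε_le₁⟩) hε.le hA.le hA₁ hA₂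
    (by rwa [le_div_iff₀ hA, mul_comm] at hε_leκ)
  have hrescale (y : ℝ) : T₀ / ε ^ (a + 1) * G.d i * u 0 y i ^ (a + 1) =
      T₀ * G.d i * (ε⁻¹ • D.f ε y) i ^ (a + 1) := by
    rw [hu₀, Pi.smul_apply, smul_eq_mul, mul_pow, inv_pow]; ring
  simpa only [rescaledPosition, hrescale] using hordered ε (T₀ / ε ^ (a + 1)) u ut ux hε hε_le₀
    hT_pos.le (div_mul_cancel₀ _ (by positivity)).le (hu.mono hT_gt.le) hinit y₁ y₂ hy

theorem eventually_mul_lifespan_le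
    (hG : ∀ u, ‖u‖ ≤ 2 * G.κ → (∀ i, G.lam i u = S.lam i u ∧ G.l i u = S.l i u) ∧ G.B u = S.B u)
    (hGd : ∀ i, G.d i = S.axisDeriv i (a + 1) / ((a + 1).factorial : ℝ))
    (hsmall : ∀ ε ∈ Ioc (0 : ℝ) D.ε₁, D.Small K₁ K₂ ε) {T₀ : ℝ} (hT₀ : 0 < T₀) {i : Fin n} {x : ℝ}
    (hx : T₀⁻¹ < blowTerm S D a i x) :
    ∀ᶠ ε in 𝓝[>] (0 : ℝ),
      ENNReal.ofReal (ε ^ (a + 1)) * S.lifespan (D.f ε) ≤ ENNReal.ofReal T₀ := by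
  obtain ⟨y, hxy, hfold⟩ := exists_rescaledPosition_psi_lt hGd hT₀ hx
  obtain ⟨ε₀, M, hε₀, hordered⟩ := exists_rescaledPosition_le hG hsmall i hT₀
  have hlim (z : ℝ) : Tendsto (fun ε => rescaledPosition G i T₀ (fun z => (ε⁻¹ • D.f ε z) i) z)
      (𝓝[>] 0) (𝓝 (rescaledPosition G i T₀ (fun z => D.psi z i) z)) :=
    (((tendsto_pi_nhds.1 (tendsto_inv_smul_initialData D z) i).pow (a + 1)).const_mul _).const_add _
  have herror : Tendsto (fun ε => M * ε) (𝓝[>] 0) (𝓝 0) := by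
    simpa using (tendsto_nhdsWithin_of_tendsto_nhds (tendsto_id (x := 𝓝 (0 : ℝ)))).const_mul M
  filter_upwards [((hlim y).add herror).eventually_lt (hlim x) (by simpa using hfold),
    Ioc_mem_nhdsGT hε₀] with ε hcross hε
  have hlife : S.lifespan (D.f ε) ≤ ENNReal.ofReal (T₀ / ε ^ (a + 1)) :=
    le_of_not_gt fun hlt => (hordered ε hε hlt x y hxy).not_gt hcross
  have hεpow : 0 < ε ^ (a + 1) := pow_pos hε.1 _
  calc ENNReal.ofReal (ε ^ (a + 1)) * S.lifespan (D.f ε)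
      ≤ ENNReal.ofReal (ε ^ (a + 1)) * ENNReal.ofReal (T₀ / ε ^ (a + 1)) := by gcongr
    _ = ENNReal.ofReal T₀ := by rw [← ENNReal.ofReal_mul hεpow.le, mul_div_cancel₀ _ hεpow.ne']

end InitialData

end HyperbolicLifespan

/-- **Upper bound of the lifespan** (Section 5, part (I)).  Under the
hypotheses of Theorem 1.2,
`limsup_{ε→0⁺} ε^{α+1} T̃(ε) ≤ M₀`, where
`M₀ = [max_{i∈J₁} sup_{x∈ℝ} (−(1/α!) ∂^{α+1}λ_i/∂u_i^{α+1}(0) ψ_i(x)^α ψ_i'(x))]⁻¹`. -/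
theorem stmt5 {n : ℕ} (S : HypSys n) (hNorm : S.Normalized) (hMatch : S.Matching)
    (a : ℕ) (hMin : S.IsMinAlpha a)
    (D : InitData n) (K1 K2 : ℝ) (hK1 : 0 < K1) (hK2 : 0 < K2)
    (hSmall : ∀ ε ∈ Set.Ioc (0 : ℝ) D.ε₁, D.Small K1 K2 ε)
    (i0 : Fin n) (hi0 : ¬ S.WLD i0 ∧ S.IsAlphaOf i0 a) (x0 : ℝ)
    (hneg : S.axisDeriv i0 (a + 1) * (D.psi x0) i0 ^ a *
      deriv (fun x' => (D.psi x') i0) x0 < 0) :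
    Filter.limsup (fun ε : ℝ => ENNReal.ofReal (ε ^ (a + 1)) * S.lifespan (D.f ε))
      (𝓝[>] 0) ≤ ENNReal.ofReal (blowRate S D a)⁻¹ := by
  obtain ⟨G, hG, hGd⟩ := HyperbolicLifespan.exists_quantitativeSystem hNorm hMatch hMin
  have hrate : 0 < blowRate S D a := HyperbolicLifespan.blowRate_pos hSmall hi0 hneg
  refine ENNReal.le_of_forall_pos_le_add fun δ hδ _ => ?_
  have hδ' : (0 : ℝ) < δ := hδ
  rw [← ENNReal.ofReal_coe_nnreal, ← ENNReal.ofReal_add (by positivity) hδ'.le]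
  have hT₀ : (0 : ℝ) < (blowRate S D a)⁻¹ + δ := by positivity
  have hlt : ((blowRate S D a)⁻¹ + δ)⁻¹ < blowRate S D a :=
    (inv_lt_comm₀ hT₀ hrate).2 (lt_add_of_pos_right _ hδ')
  obtain ⟨i, x, hx⟩ := HyperbolicLifespan.exists_lt_blowTerm_of_lt_blowRate hMin.1 hlt
  exact limsup_le_of_le (by isBoundedDefault)
    (HyperbolicLifespan.eventually_mul_lifespan_le hG hGd hSmall hT₀ hx)
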